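/- Let d ≥ 3 and let Ω be a bounded open convex set in ℝ^d containing the origin in its interior, whose boundary ∂Ω is C^∞ with nowhere vanishing Gaussian curvature. Let ρ be the Minkowski functional of Ω, let 𝔼_R = {k ∈ ℤ^d : R/2 ≤ |k| ≤ R}, and let ρ(𝔼_R) = {ρ(k) : k ∈ 𝔼_R}. Then there exist constants c > 0 and C₀ such that for all R ≥ C₀: card(ρ(𝔼_R)) ≥ c R² if d ≥ 4, and card(ρ(𝔼_R)) ≥ c R²/log R if d = 3. -/

import Mathlib

/-!
The bound `card ρ(𝔼_R) ≥ c R²` holds for every `d ≥ 3`, including `d = 3`, where it is stronger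
than what is asked. Only lattice points of the coordinate subspace `ℝ³ ⊂ ℝ^d` are used, lying in a
box `R • K0` inside the shell `R/2 ≤ |k| ≤ R`.

*Analytic input.* By the implicit function theorem for `f (u • x) = 0`, the function `u = 1/ρ` is
smooth away from `0`. Differentiating the equation twice along lines shows that the Hessian of
`q = ρ²` is positive definite. Consequently (`exists_data`) the gradient `g` of `q` is a
nondegenerate map, and if `q (p + η) = q p` then `g` at the midpoint is orthogonal to `η` up to a
cubic error.

*Reduction to close pairs.* Split the lattice points of `R • K0` according to their direction into
`O(R)` cells of angular size `R^(-1/2)`. Two points in one cell with the same value of `ρ` are at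
distance at most `√R`. If there are `O(R³)` pairs `(k, h)` with `q (k + h) = q k` and
`0 < |h| ≤ √R` (`card_level_pairs_le`), then Cauchy-Schwarz for the map
`k ↦ (cell of k, ρ(k))` gives `R⁶ ≪ R · card ρ(𝔼_R) · R³` (`card_values_ge`).

*Counting close pairs.* Fix a dyadic size `H` of `h` and put `r = √(R / H)`. For a pair `(k, h)`
consider the points `(y, w)` with `y` near the midpoint of `k/R` and `(k + h)/R` and `w` in a thin
tube around the segment from `A y h` to `2 A y h`, where `A` is the Hessian of `q`. If two pairs
with the same `h` contain `(y, w)`, the difference `u` of their points `k` has size `O(r)` and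
satisfies `|w · u| = O(1)`. So the number of pairs containing `(y, w)` is at most the number of
`h` whose tube over `y` contains `w`, times the number of integer vectors `u` in a slab orthogonal
to `w`. After integrating over `(y, w)` and applying Cauchy-Schwarz (`measure_incidence_le`) two
second moments remain. The first is controlled by the number of pairs `h, h'` of size `H` with
`|h × h'| ≪ √H` (`card_close_pairs_le`), the second by volumes of intersections of two slabs
(`sum_volume_slabs_le`). Both come from elementary lattice point counts and give
`O(R^(5/2) H)` pairs at scale `H` (`card_pairs_dyadic_le`), which sums to `O(R³)`.
-/

open MeasureTheory Set

noncomputable section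

namespace LatticeGauge

open scoped Matrix ENNReal Topology ContDiff

/-! ### Orthogonal pairs of integer vectors -/

/-- The integer points of the cube of half-side `n`. -/
def box (n : ℕ) : Finset (Fin 3 → ℤ) := Fintype.piFinset fun _ => Finset.Icc (-(n : ℤ)) n

lemma mem_box {n : ℕ} {u : Fin 3 → ℤ} : u ∈ box n ↔ ∀ i, |u i| ≤ n := by
  simp [box, Fintype.mem_piFinset, abs_le]

/-- Solutions of `x b + y c = 0` modulo `a`: the kernel of a homomorphism to `ZMod a` whose image
contains the gcd of `a`, `b` and `c`. -/
lemma card_ker_le (a : ℕ) [NeZero a] (b c : ℤ) :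
    (Finset.univ.filter fun p : ZMod a × ZMod a => p.1 * (b : ZMod a) + p.2 * (c : ZMod a) = 0).card
      ≤ a * Nat.gcd a (Int.gcd b c) := by
  classical
  have ha : 0 < a := Nat.pos_of_ne_zero (NeZero.ne a)
  set g : ℕ := Nat.gcd a (Int.gcd b c) with hg
  have hgpos : 0 < g := Nat.gcd_pos_of_pos_left _ ha
  let ψ : ZMod a × ZMod a →+ ZMod a :=
    { toFun := fun p => p.1 * (b : ZMod a) + p.2 * (c : ZMod a)
      map_zero' := by simp
      map_add' := by intro x y; simp; ring }
  have h1 : Nat.card ψ.ker * Nat.card ψ.range = a * a := by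
    rw [← AddSubgroup.index_ker, AddSubgroup.card_mul_index]; simp
  have h2 : (Finset.univ.filter fun p : ZMod a × ZMod a =>
      p.1 * (b : ZMod a) + p.2 * (c : ZMod a) = 0).card = Nat.card ψ.ker := by
    rw [Nat.card_eq_fintype_card, Fintype.card_subtype]
    congr 1
    ext p
    simp only [Finset.mem_filter, Finset.mem_univ, true_and]
    rfl
  -- Bezout: the gcd lies in the range
  have h3 : ((g : ℕ) : ZMod a) ∈ ψ.range := by
    refine ⟨(((Int.gcdB (a : ℤ) (Int.gcd b c) * Int.gcdA b c : ℤ) : ZMod a),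
      ((Int.gcdB (a : ℤ) (Int.gcd b c) * Int.gcdB b c : ℤ) : ZMod a)), ?_⟩
    have e1 : ((Int.gcd b c : ℕ) : ℤ) = b * Int.gcdA b c + c * Int.gcdB b c := Int.gcd_eq_gcd_ab b c
    have e2 : ((Int.gcd (a : ℤ) (Int.gcd b c) : ℕ) : ℤ) = (a : ℤ) * Int.gcdA (a : ℤ) (Int.gcd b c)
      + (Int.gcd b c : ℤ) * Int.gcdB (a : ℤ) (Int.gcd b c) := Int.gcd_eq_gcd_ab _ _
    have e3 : Int.gcd (a : ℤ) (Int.gcd b c) = g := by simp [hg, Int.gcd_natCast_natCast]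
    rw [e3] at e2
    have e4 : ((g : ℕ) : ZMod a) = (((g : ℕ) : ℤ) : ZMod a) := by simp
    change _ * (b : ZMod a) + _ * (c : ZMod a) = _
    rw [e4, e2]
    generalize Int.gcdB (a : ℤ) (Int.gcd b c) = u
    generalize Int.gcdA (a : ℤ) (Int.gcd b c) = v
    rw [e1]
    push_cast
    simp
    ring
  have h4 : a / g ≤ Nat.card ψ.range := by
    have : addOrderOf ((g : ℕ) : ZMod a) = a / Nat.gcd a g := ZMod.addOrderOf_coe g (NeZero.ne a)
    have e : Nat.gcd a g = g := Nat.gcd_eq_right (Nat.gcd_dvd_left _ _)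
    rw [e] at this
    rw [← this]
    have := addOrderOf_le_card (x := (⟨_, h3⟩ : ψ.range))
    rwa [AddSubgroup.addOrderOf_mk] at this
  have h5 : a / g * g = a := Nat.div_mul_cancel (Nat.gcd_dvd_left _ _)
  rw [h2]
  have h6 : 0 < a / g := Nat.div_pos (Nat.le_of_dvd ha (Nat.gcd_dvd_left _ _)) hgpos
  have : Nat.card ψ.ker * (a / g) ≤ (a * g) * (a / g) := by
    calc Nat.card ψ.ker * (a / g) ≤ Nat.card ψ.ker * Nat.card ψ.range := by gcongr
      _ = a * a := h1
      _ = a * (a / g * g) := by rw [h5]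
      _ = _ := by ring
  exact Nat.le_of_mul_le_mul_right this h6

lemma card_pairs_le (a : ℕ) (ha : 0 < a) (b c : ℤ) :
    ((Finset.Icc (-(a : ℤ)) a ×ˢ Finset.Icc (-(a : ℤ)) a).filter
      fun p : ℤ × ℤ => (a : ℤ) ∣ p.1 * b + p.2 * c).card ≤ 9 * (a * Nat.gcd a (Int.gcd b c)) := by
  classical
  have : NeZero a := ⟨ha.ne'⟩
  have haz : (0 : ℤ) < a := by exact_mod_cast ha
  refine le_trans (Finset.card_le_mul_card_image_of_maps_to
    (f := fun p : ℤ × ℤ => ((p.1 : ZMod a), (p.2 : ZMod a)))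
    (t := Finset.univ.filter fun p : ZMod a × ZMod a =>
      p.1 * (b : ZMod a) + p.2 * (c : ZMod a) = 0) ?_ 9 ?_) ?_
  · rintro ⟨x, y⟩ h
    simp only [Finset.mem_filter, Finset.mem_univ, true_and] at h ⊢
    have := (ZMod.intCast_zmod_eq_zero_iff_dvd (x * b + y * c) a).2 h.2
    push_cast at this
    exact this
  · rintro ⟨α, β⟩ -
    have : (9 : ℕ) = (Finset.Icc (-1 : ℤ) 1 ×ˢ Finset.Icc (-1 : ℤ) 1).card := by simp
    rw [this]
    refine Finset.card_le_card_of_injOn (fun p => (p.1 / (a : ℤ), p.2 / (a : ℤ))) ?_ ?_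
    · rintro ⟨x, y⟩ h
      simp only [Finset.coe_filter, Finset.mem_filter, Finset.mem_product, Finset.mem_Icc,
        Set.mem_ofPred_eq] at h
      obtain ⟨⟨⟨⟨h1, h2⟩, h3, h4⟩, -⟩, -⟩ := h
      simp only [Finset.coe_product, Finset.coe_Icc, Set.mem_prod, Set.mem_Icc]
      refine ⟨⟨?_, ?_⟩, ?_, ?_⟩
      · exact (Int.le_ediv_iff_mul_le haz).2 (by linarith)
      · exact Int.ediv_le_of_le_mul haz (by linarith)
      · exact (Int.le_ediv_iff_mul_le haz).2 (by linarith)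
      · exact Int.ediv_le_of_le_mul haz (by linarith)
    · rintro ⟨x, y⟩ h ⟨x', y'⟩ h' hh
      simp only [Finset.coe_filter, Finset.mem_filter, Set.mem_ofPred_eq, Prod.mk.injEq] at h h' hh
      have e1 : (x : ZMod a) = x' := h.2.1.trans h'.2.1.symm
      have e2 : (y : ZMod a) = y' := h.2.2.trans h'.2.2.symm
      rw [ZMod.intCast_eq_intCast_iff] at e1 e2
      have f1 : x % (a : ℤ) = x' % (a : ℤ) := e1
      have f2 : y % (a : ℤ) = y' % (a : ℤ) := e2
      have g1 := Int.emod_add_mul_ediv x a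
      have g1' := Int.emod_add_mul_ediv x' a
      have g2 := Int.emod_add_mul_ediv y a
      have g2' := Int.emod_add_mul_ediv y' a
      rw [f1, hh.1, g1'] at g1
      rw [f2, hh.2, g2'] at g2
      rw [g1, g2]
  · gcongr
    exact card_ker_le a b c

lemma card_multiples_le (H g : ℕ) (hg : 0 < g) (hgH : g ≤ H) :
    (((Finset.Icc (-(H : ℤ)) H).filter fun b => (g : ℤ) ∣ b).card : ℝ) ≤ 3 * H / g := by
  have hgz : (0 : ℤ) < g := by exact_mod_cast hg
  have h1 : ((Finset.Icc (-(H : ℤ)) H).filter fun b => (g : ℤ) ∣ b).card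
      ≤ (Finset.Icc (-((H / g : ℕ) : ℤ)) ((H / g : ℕ) : ℤ)).card := by
    refine Finset.card_le_card_of_injOn (fun b => b / (g : ℤ)) ?_ ?_
    · intro b hb
      simp only [Finset.coe_filter, Finset.mem_Icc, Set.mem_ofPred_eq] at hb
      obtain ⟨⟨h1, h2⟩, k, rfl⟩ := hb
      simp only [Finset.coe_Icc, Set.mem_Icc]
      rw [Int.mul_ediv_cancel_left _ hgz.ne']
      push_cast
      constructor
      · have : -k ≤ (H : ℤ) / g := (Int.le_ediv_iff_mul_le hgz).2 (by nlinarith)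
        linarith
      · exact (Int.le_ediv_iff_mul_le hgz).2 (by nlinarith)
    · intro b hb b' hb' hh
      simp only [Finset.coe_filter, Finset.mem_Icc, Set.mem_ofPred_eq] at hb hb'
      obtain ⟨-, k, rfl⟩ := hb
      obtain ⟨-, k', rfl⟩ := hb'
      simp only [Int.mul_ediv_cancel_left _ hgz.ne'] at hh
      rw [hh]
  have h2 : (Finset.Icc (-((H / g : ℕ) : ℤ)) ((H / g : ℕ) : ℤ)).card = 2 * (H / g) + 1 := by
    simp; omega
  rw [h2] at h1
  have hgr : (0 : ℝ) < g := by exact_mod_cast hg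
  have h3 : ((H / g : ℕ) : ℝ) ≤ H / g := Nat.cast_div_le
  have h4 : (1 : ℝ) ≤ H / g := by rw [le_div_iff₀ hgr]; simpa using (by exact_mod_cast hgH : (g : ℝ) ≤ H)
  have h5 : (((Finset.Icc (-(H : ℤ)) H).filter fun b => (g : ℤ) ∣ b).card : ℝ)
    ≤ 2 * ((H / g : ℕ) : ℝ) + 1 := by exact_mod_cast h1
  calc _ ≤ _ := h5
    _ ≤ 2 * (H / g : ℝ) + H / g := by linarith
    _ = _ := by ring

lemma sum_gcd_le (a H : ℕ) (ha : 0 < a) (haH : a ≤ H) :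
    ∑ p ∈ Finset.Icc (-(H : ℤ)) H ×ˢ Finset.Icc (-(H : ℤ)) H,
      (a : ℝ) * (Nat.gcd a (Int.gcd p.1 p.2) : ℝ) ≤ 9 * H ^ 2 * ∑ m ∈ a.divisors, (m : ℝ) := by
  classical
  have h1 : ∀ p : ℤ × ℤ, (Nat.gcd a (Int.gcd p.1 p.2) : ℝ)
      ≤ ∑ g ∈ a.divisors, if ((g : ℤ) ∣ p.1 ∧ (g : ℤ) ∣ p.2) then (g : ℝ) else 0 := by
    intro p
    have hmem : Nat.gcd a (Int.gcd p.1 p.2) ∈ a.divisors :=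
      Nat.mem_divisors.2 ⟨Nat.gcd_dvd_left _ _, ha.ne'⟩
    have hd : ((Nat.gcd a (Int.gcd p.1 p.2) : ℕ) : ℤ) ∣ (Int.gcd p.1 p.2 : ℤ) :=
      Int.natCast_dvd_natCast.2 (Nat.gcd_dvd_right _ _)
    have := Finset.single_le_sum (f := fun g : ℕ => if ((g : ℤ) ∣ p.1 ∧ (g : ℤ) ∣ p.2) then (g : ℝ) else 0)
      (fun i _ => by split_ifs <;> positivity) hmem
    rw [if_pos ⟨hd.trans (Int.gcd_dvd_left ..), hd.trans (Int.gcd_dvd_right ..)⟩] at this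
    exact this
  calc _ ≤ ∑ p ∈ Finset.Icc (-(H : ℤ)) H ×ˢ Finset.Icc (-(H : ℤ)) H,
      (a : ℝ) * ∑ g ∈ a.divisors, if ((g : ℤ) ∣ p.1 ∧ (g : ℤ) ∣ p.2) then (g : ℝ) else 0 := by
        gcongr with p hp; exact h1 p
    _ = ∑ g ∈ a.divisors, (a : ℝ) * ((((Finset.Icc (-(H : ℤ)) H).filter fun b => (g : ℤ) ∣ b).card : ℝ)^2 * g) := by
        rw [← Finset.mul_sum, Finset.sum_comm, Finset.mul_sum]
        refine Finset.sum_congr rfl fun g _ => ?_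
        congr 1
        rw [← Finset.sum_filter, Finset.sum_const, Finset.filter_product, Finset.card_product]
        rw [nsmul_eq_mul]; push_cast; ring
    _ ≤ ∑ g ∈ a.divisors, 9 * (H : ℝ) ^ 2 * ((a / g : ℕ) : ℝ) := by
        refine Finset.sum_le_sum fun g hg => ?_
        have hga := Nat.dvd_of_mem_divisors hg
        have hgpos : 0 < g := Nat.pos_of_dvd_of_pos hga ha
        have hgr : (0 : ℝ) < g := by exact_mod_cast hgpos
        have := card_multiples_le H g hgpos ((Nat.le_of_dvd ha hga).trans haH)
        rw [Nat.cast_div hga hgr.ne']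
        calc _ ≤ (a : ℝ) * ((3 * H / g) ^ 2 * g) := by gcongr
          _ = _ := by field_simp; ring
    _ = _ := by
        rw [← Finset.mul_sum, Nat.sum_div_divisors a (fun m => (m : ℝ))]

lemma sum_sigma_le (E : ℕ) :
    ∑ a ∈ Finset.Icc 1 E, ∑ m ∈ a.divisors, (m : ℝ) ≤ (E : ℝ) ^ 2 := by
  classical
  have h1 : ∀ a ∈ Finset.Icc 1 E, ∑ m ∈ a.divisors, (m : ℝ)
      = ∑ m ∈ Finset.Icc 1 E, if m ∣ a then (m : ℝ) else 0 := by
    intro a ha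
    rw [Finset.mem_Icc] at ha
    rw [← Finset.sum_filter]
    refine Finset.sum_congr ?_ fun _ _ => rfl
    ext m
    simp only [Nat.mem_divisors, Finset.mem_filter, Finset.mem_Icc]
    constructor
    · rintro ⟨h, -⟩
      exact ⟨⟨Nat.pos_of_dvd_of_pos h ha.1, (Nat.le_of_dvd ha.1 h).trans ha.2⟩, h⟩
    · rintro ⟨-, h⟩; exact ⟨h, by omega⟩
  rw [Finset.sum_congr rfl h1, Finset.sum_comm]
  have h2 : ∀ m ∈ Finset.Icc 1 E, (∑ a ∈ Finset.Icc 1 E, if m ∣ a then (m : ℝ) else 0) ≤ E := by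
    intro m hm
    rw [← Finset.sum_filter, Finset.sum_const]
    have : ((Finset.Icc 1 E).filter fun a => m ∣ a).card = E / m := by
      have := Nat.Ioc_filter_dvd_card_eq_div E m
      rw [← this]; congr 1
    rw [this, nsmul_eq_mul]
    exact_mod_cast Nat.div_mul_le_self E m
  calc _ ≤ ∑ m ∈ Finset.Icc 1 E, (E : ℝ) := Finset.sum_le_sum h2
    _ = _ := by simp; ring

/-- Number of orthogonal pairs of integer vectors in two boxes. If the largest coordinate of the
first vector is `± a`, orthogonality is a congruence modulo `a` for its other two coordinates. -/
lemma card_orthogonal_le (E H : ℕ) (hEH : E ≤ H) :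
    (((box E ×ˢ box H).filter fun p : (Fin 3 → ℤ) × (Fin 3 → ℤ) =>
      p.1 ≠ 0 ∧ ∑ i, p.1 i * p.2 i = 0).card : ℝ) ≤ 486 * E ^ 2 * H ^ 2 := by
  classical
  let D : Fin 3 → Finset ((Fin 3 → ℤ) × (Fin 3 → ℤ)) := fun i =>
    (box E ×ˢ box H).filter fun p => (p.1 i ≠ 0 ∧ ∀ j, |p.1 j| ≤ |p.1 i|) ∧ ∑ i, p.1 i * p.2 i = 0
  have hcov : ((box E ×ˢ box H).filter fun p : (Fin 3 → ℤ) × (Fin 3 → ℤ) =>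
      p.1 ≠ 0 ∧ ∑ i, p.1 i * p.2 i = 0) ⊆ Finset.univ.biUnion D := by
    intro p hp
    simp only [Finset.mem_filter] at hp
    obtain ⟨i, -, hi⟩ := Finset.exists_max_image Finset.univ (fun j => |p.1 j|) Finset.univ_nonempty
    simp only [Finset.mem_biUnion, Finset.mem_univ, true_and, D, Finset.mem_filter]
    refine ⟨i, hp.1, ⟨?_, fun j => hi j (Finset.mem_univ j)⟩, hp.2.2⟩
    intro h0
    apply hp.2.1
    ext j
    have := hi j (Finset.mem_univ j)
    rw [h0] at this
    simpa using this
  let I := Finset.Icc (-(H : ℤ)) H ×ˢ Finset.Icc (-(H : ℤ)) H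
  let T : Finset (Bool × (Σ _ : ℕ, Σ _ : ℤ × ℤ, ℤ × ℤ)) := Finset.univ ×ˢ
    (Finset.Icc 1 E).sigma fun a => I.sigma fun q =>
      (Finset.Icc (-(a : ℤ)) a ×ˢ Finset.Icc (-(a : ℤ)) a).filter
      fun p : ℤ × ℤ => (a : ℤ) ∣ p.1 * q.1 + p.2 * q.2
  have hT : (T.card : ℝ) ≤ 162 * E ^ 2 * H ^ 2 := by
    simp only [T, Finset.card_product, Finset.card_sigma, Finset.card_univ, Fintype.card_bool]
    push_cast
    have : ∀ a ∈ Finset.Icc 1 E, ∑ q ∈ I, ((((Finset.Icc (-(a : ℤ)) a ×ˢ Finset.Icc (-(a : ℤ)) a).filter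
      fun p : ℤ × ℤ => (a : ℤ) ∣ p.1 * q.1 + p.2 * q.2).card : ℕ) : ℝ)
        ≤ 81 * H ^ 2 * ∑ m ∈ a.divisors, (m : ℝ) := by
      intro a ha
      rw [Finset.mem_Icc] at ha
      calc _ ≤ ∑ q ∈ I, 9 * ((a : ℝ) * (Nat.gcd a (Int.gcd q.1 q.2) : ℝ)) := by
            refine Finset.sum_le_sum fun q _ => ?_
            exact_mod_cast card_pairs_le a ha.1 q.1 q.2
        _ ≤ 9 * (9 * H ^ 2 * ∑ m ∈ a.divisors, (m : ℝ)) := by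
            rw [← Finset.mul_sum]
            gcongr
            exact sum_gcd_le a H ha.1 (ha.2.trans hEH)
        _ = _ := by ring
    calc _ ≤ 2 * ∑ a ∈ Finset.Icc 1 E, 81 * (H : ℝ) ^ 2 * ∑ m ∈ a.divisors, (m : ℝ) := by
            gcongr with a ha; exact this a ha
      _ ≤ 2 * (81 * (H : ℝ) ^ 2 * E ^ 2) := by
            rw [← Finset.mul_sum]; gcongr; exact sum_sigma_le E
      _ = _ := by ring
  have hD : ∀ i, (D i).card ≤ T.card := by
    intro i
    refine Finset.card_le_card_of_injOn (fun p => (decide (0 < p.1 i),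
      ⟨(p.1 i).natAbs, ⟨(p.2 (i + 1), p.2 (i + 2)), (p.1 (i + 1), p.1 (i + 2))⟩⟩)) ?_ ?_
    · rintro ⟨n, h⟩ hp
      simp only [D, Finset.coe_filter, Finset.mem_product, mem_box, Set.mem_ofPred_eq] at hp
      obtain ⟨⟨hn, hh⟩, ⟨h0, hmax⟩, hs⟩ := hp
      simp only [T, I, Finset.coe_product, Set.mem_prod, Finset.mem_coe, Finset.mem_sigma,
        Finset.mem_Icc, Finset.mem_product, Finset.mem_filter, Finset.mem_univ, true_and]
      have e : ((n i).natAbs : ℤ) = |n i| := Int.natCast_natAbs _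
      refine ⟨⟨Int.natAbs_pos.2 h0, by have := hn i; omega⟩,
        ⟨abs_le.1 (hh _), abs_le.1 (hh _)⟩, ⟨?_, ?_⟩, ?_⟩
      · rw [e]; exact abs_le.1 (hmax _)
      · rw [e]; exact abs_le.1 (hmax _)
      · rw [e, abs_dvd]
        refine ⟨- h i, ?_⟩
        rw [Fin.sum_univ_three] at hs
        fin_cases i <;> simp at hs ⊢ <;> linarith
    · rintro ⟨n, h⟩ hp ⟨n', h'⟩ hp' hh
      simp only [D, Finset.coe_filter, Finset.mem_product, mem_box, Set.mem_ofPred_eq] at hp hp'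
      obtain ⟨-, ⟨h0, -⟩, hs⟩ := hp
      obtain ⟨-, ⟨h0', -⟩, hs'⟩ := hp'
      simp only [Prod.mk.injEq, Sigma.mk.injEq, heq_eq_eq, decide_eq_decide] at hh
      obtain ⟨hsg, habs, ⟨a1, a2⟩, b1, b2⟩ := hh
      have hni : n i = n' i := by omega
      have key : ∀ {f f' : Fin 3 → ℤ}, f i = f' i → f (i+1) = f' (i+1) → f (i+2) = f' (i+2) → f = f' := by
        intro f f' p1 p2 p3
        ext j
        fin_cases i <;> fin_cases j <;> simp at p1 p2 p3 ⊢ <;> assumption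
      obtain rfl := key hni b1 b2
      have hhi : h i = h' i := by
        rw [Fin.sum_univ_three] at hs hs'
        have : n i * h i = n i * h' i := by
          fin_cases i <;> simp at hs hs' a1 a2 <;> rw [a1, a2] at hs <;>
            simp only [Fin.zero_eta, Fin.mk_one, Fin.reduceFinMk] <;> linarith
        exact mul_left_cancel₀ h0 this
      rw [key hhi a1 a2]
  have h1 : (((box E ×ˢ box H).filter fun p : (Fin 3 → ℤ) × (Fin 3 → ℤ) =>
      p.1 ≠ 0 ∧ ∑ i, p.1 i * p.2 i = 0).card) ≤ 3 * T.card := by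
    refine (Finset.card_le_card hcov).trans (Finset.card_biUnion_le.trans ?_)
    refine (Finset.sum_le_sum fun i _ => hD i).trans ?_
    simp
  calc _ ≤ (3 : ℝ) * T.card := by exact_mod_cast h1
    _ ≤ 3 * (162 * E ^ 2 * H ^ 2) := by gcongr
    _ = _ := by ring

/-! ### Sums over primitive and parallel integer vectors -/

lemma card_box (n : ℕ) : (box n).card = (2 * n + 1) ^ 3 := by
  rw [box, Fintype.card_piFinset]
  simp
  omega

lemma mem_box_iff_norm {n : ℕ} {u : Fin 3 → ℤ} : u ∈ box n ↔ ‖u‖ ≤ n := by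
  rw [mem_box, pi_norm_le_iff_of_nonneg (by positivity)]
  refine forall_congr' fun i => ?_
  rw [Int.norm_eq_abs]
  exact_mod_cast Iff.rfl

lemma exists_norm_eq_abs (u : Fin 3 → ℤ) : ∃ i, ‖u‖ = |(u i : ℝ)| := by
  obtain ⟨i, -, hi⟩ := Finset.exists_max_image Finset.univ (fun j => |(u j : ℝ)|)
    Finset.univ_nonempty
  refine ⟨i, le_antisymm ?_ ?_⟩
  · rw [pi_norm_le_iff_of_nonneg (abs_nonneg _)]
    intro j
    rw [Int.norm_eq_abs]; exact hi j (Finset.mem_univ j)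
  · rw [← Int.norm_eq_abs]; exact norm_le_pi_norm u i

lemma one_le_norm {u : Fin 3 → ℤ} (hu : u ≠ 0) : 1 ≤ ‖u‖ := by
  obtain ⟨i, hi⟩ := Function.ne_iff.1 hu
  refine le_trans ?_ (norm_le_pi_norm u i)
  rw [Int.norm_eq_abs]
  exact_mod_cast Int.one_le_abs hi

lemma sum_inv_norm_le (n : ℕ) :
    ∑ u ∈ (box n).filter (fun u => u ≠ 0), 1 / ‖u‖ ≤ 26 * (n : ℝ) ^ 2 := by
  classical
  induction n with
  | zero =>
    rw [Finset.sum_eq_zero]; · simp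
    intro u hu
    rw [Finset.mem_filter, mem_box_iff_norm] at hu
    exact absurd (norm_le_zero_iff.1 (by simpa using hu.1)) hu.2
  | succ n ih =>
    have hsub : box n ⊆ box (n + 1) := fun u hu => by
      rw [mem_box_iff_norm] at *; push_cast; linarith
    have h1 : (box (n + 1)).filter (fun u => u ≠ 0) ⊆
        (box n).filter (fun u => u ≠ 0) ∪ (box (n + 1) \ box n) := by
      intro u hu
      simp only [Finset.mem_filter, Finset.mem_union, Finset.mem_sdiff] at *
      tauto
    have hc : ((box (n + 1) \ box n).card : ℝ) ≤ 26 * (n + 1) ^ 2 := by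
      rw [Finset.card_sdiff_of_subset hsub, Nat.cast_sub (Finset.card_le_card hsub), card_box,
        card_box]
      push_cast
      nlinarith [(Nat.cast_nonneg n : (0 : ℝ) ≤ n)]
    have h2 : ∑ u ∈ box (n + 1) \ box n, 1 / ‖u‖ ≤ 26 * (n + 1) := by
      calc _ ≤ ∑ u ∈ box (n + 1) \ box n, 1 / ((n : ℝ) + 1) := by
            refine Finset.sum_le_sum fun u hu => ?_
            rw [Finset.mem_sdiff, mem_box_iff_norm, mem_box_iff_norm] at hu
            apply one_div_le_one_div_of_le (by positivity)
            obtain ⟨i, hi⟩ := exists_norm_eq_abs u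
            rw [hi] at hu ⊢
            have := hu.2
            have h3 : ¬ (|u i| ≤ (n : ℤ)) := by intro h; apply this; exact_mod_cast h
            have h4 : (n : ℤ) + 1 ≤ |u i| := by omega
            exact_mod_cast h4
        _ = ((box (n + 1) \ box n).card : ℝ) * (1 / ((n : ℝ) + 1)) := by
            rw [Finset.sum_const, nsmul_eq_mul]
        _ ≤ 26 * (n + 1) ^ 2 * (1 / ((n : ℝ) + 1)) := by gcongr
        _ = _ := by field_simp
    calc _ ≤ ∑ u ∈ (box n).filter (fun u => u ≠ 0) ∪ (box (n + 1) \ box n), 1 / ‖u‖ :=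
          Finset.sum_le_sum_of_subset_of_nonneg h1 fun _ _ _ => by positivity
      _ ≤ ∑ u ∈ (box n).filter (fun u => u ≠ 0), 1 / ‖u‖ + ∑ u ∈ (box (n + 1) \ box n), 1 / ‖u‖ := by
          rw [← Finset.sum_union_inter]
          exact le_add_of_nonneg_right (Finset.sum_nonneg fun _ _ => by positivity)
      _ ≤ 26 * (n : ℝ) ^ 2 + 26 * (n + 1) := add_le_add ih h2
      _ ≤ _ := by push_cast; nlinarith [(Nat.cast_nonneg n : (0 : ℝ) ≤ n)]

/-- Every nonzero integer vector is a positive multiple of a primitive one, primitivity being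
recorded by a Bezout certificate `c`. -/
lemma exists_primitive (h : Fin 3 → ℤ) (hh : h ≠ 0) :
    ∃ (γ : ℕ) (p c : Fin 3 → ℤ), 0 < γ ∧ h = (γ : ℤ) • p ∧ c ⬝ᵥ p = 1 := by
  set g : ℕ := Int.gcd (h 0) (Int.gcd (h 1) (h 2)) with hg
  have e1 : ((Int.gcd (h 1) (h 2) : ℕ) : ℤ) = h 1 * Int.gcdA (h 1) (h 2) + h 2 * Int.gcdB (h 1) (h 2) :=
    Int.gcd_eq_gcd_ab _ _
  have e2 : (g : ℤ) = h 0 * Int.gcdA (h 0) (Int.gcd (h 1) (h 2))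
      + (Int.gcd (h 1) (h 2) : ℤ) * Int.gcdB (h 0) (Int.gcd (h 1) (h 2)) := Int.gcd_eq_gcd_ab _ _
  generalize Int.gcdA (h 0) (Int.gcd (h 1) (h 2)) = a at e2
  generalize Int.gcdB (h 0) (Int.gcd (h 1) (h 2)) = b at e2
  have d0 : (g : ℤ) ∣ h 0 := Int.gcd_dvd_left ..
  have d' : (g : ℤ) ∣ (Int.gcd (h 1) (h 2) : ℤ) := Int.gcd_dvd_right ..
  have d1 : (g : ℤ) ∣ h 1 := d'.trans (Int.gcd_dvd_left ..)
  have d2 : (g : ℤ) ∣ h 2 := d'.trans (Int.gcd_dvd_right ..)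
  clear_value g
  obtain ⟨p0, hp0⟩ := d0
  obtain ⟨p1, hp1⟩ := d1
  obtain ⟨p2, hp2⟩ := d2
  have hgpos : 0 < g := by
    rcases Nat.eq_zero_or_pos g with h | h
    · exfalso; apply hh; subst h; ext i; fin_cases i <;> simp [hp0, hp1, hp2]
    · exact h
  refine ⟨g, ![p0, p1, p2], ![a, Int.gcdA (h 1) (h 2) * b, Int.gcdB (h 1) (h 2) * b], hgpos, ?_, ?_⟩
  · ext i; fin_cases i <;> simp [hp0, hp1, hp2]
  · simp only [Matrix.vec3_dotProduct, Matrix.cons_val_zero, Matrix.cons_val_one, Matrix.cons_val]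
    rw [e1] at e2
    generalize Int.gcdA (h 1) (h 2) = A at *
    generalize Int.gcdB (h 1) (h 2) = B at *
    rw [hp0, hp1, hp2] at e2
    have hz : (g : ℤ) ≠ 0 := by exact_mod_cast hgpos.ne'
    apply mul_left_cancel₀ hz
    linarith

lemma eq_smul_of_cross_eq_zero {p c v : Fin 3 → ℤ} (hc : c ⬝ᵥ p = 1) (hv : p ⨯₃ v = 0) :
    v = (c ⬝ᵥ v) • p := by
  have h0 := congrFun hv 0
  have h1 := congrFun hv 1
  have h2 := congrFun hv 2
  simp [cross_apply] at h0 h1 h2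
  rw [Matrix.vec3_dotProduct] at *
  ext i
  fin_cases i <;> simp
  · linear_combination (- v 0) * hc - c 1 * h2 + c 2 * h1
  · linear_combination (- v 1) * hc + c 0 * h2 - c 2 * h0
  · linear_combination (- v 2) * hc - c 0 * h1 + c 1 * h0

lemma sum_inv_sq_le (n : ℕ) : ∑ m ∈ Finset.Icc 1 n, 1 / (m : ℝ) ^ 2 ≤ 2 := by
  have key : ∀ n : ℕ, ∑ m ∈ Finset.Icc 1 (n + 1), 1 / (m : ℝ) ^ 2 ≤ 2 - 1 / ((n : ℝ) + 1) := by
    intro n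
    induction n with
    | zero => norm_num
    | succ n ih =>
      rw [Finset.sum_Icc_succ_top (by omega)]
      push_cast
      have : 1 / ((n : ℝ) + 1 + 1) ^ 2 ≤ 1 / (n + 1) - 1 / (n + 1 + 1) := by
        rw [div_sub_div _ _ (by positivity) (by positivity),
          div_le_div_iff₀ (by positivity) (by positivity)]
        nlinarith [(Nat.cast_nonneg n : (0 : ℝ) ≤ n)]
      linarith
  cases n with
  | zero => simp
  | succ n =>
    have : (0 : ℝ) ≤ 1 / ((n : ℝ) + 1) := by positivity
    linarith [key n]

lemma sum_inv_sqrt_le (n : ℕ) : ∑ m ∈ Finset.Icc 1 n, 1 / √(m : ℝ) ≤ 2 * √(n : ℝ) := by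
  induction n with
  | zero => simp
  | succ n ih =>
    rw [Finset.sum_Icc_succ_top (by omega)]
    push_cast
    have h1 : 0 < √((n : ℝ) + 1) := Real.sqrt_pos.2 (by positivity)
    have h2 := Real.sq_sqrt (by positivity : (0 : ℝ) ≤ n)
    have h3 := Real.sq_sqrt (by positivity : (0 : ℝ) ≤ (n : ℝ) + 1)
    have : 1 / √((n : ℝ) + 1) ≤ 2 * √((n : ℝ) + 1) - 2 * √(n : ℝ) := by
      rw [div_le_iff₀ h1]
      nlinarith [sq_nonneg (√((n : ℝ) + 1) - √(n : ℝ))]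
    linarith

/-- One-dimensional sum for the progression `m x - c`, evaluated around the term closest to `0`. -/
lemma sum_inv_sqrt_progression_le (m ρ : ℕ) (hm : 1 ≤ m) (hmρ : m ≤ ρ) (c : ℤ) :
    ∑ x ∈ Finset.Icc (-(ρ : ℤ)) ρ, 1 / √(max 1 |((m * x - c : ℤ) : ℝ)|) ≤ 9 * √(ρ / m : ℝ) := by
  classical
  have hne : (Finset.Icc (-(ρ : ℤ)) ρ).Nonempty := ⟨0, by simp⟩
  obtain ⟨x0, hx0, hmin⟩ := Finset.exists_min_image (Finset.Icc (-(ρ : ℤ)) ρ)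
    (fun x => |(m * x - c : ℤ)|) hne
  have hm0 : (0 : ℝ) < m := by exact_mod_cast hm
  have hpt : ∀ x ∈ Finset.Icc (-(ρ : ℤ)) ρ, 1 / √(max 1 |((m * x - c : ℤ) : ℝ)|)
      ≤ if x = x0 then 1 else √2 / √m * (1 / √(((x - x0).natAbs : ℕ) : ℝ)) := by
    intro x hx
    split_ifs with h
    · rw [div_le_one (by positivity)]
      exact Real.one_le_sqrt.2 (le_max_left _ _)
    · have h1 := hmin x hx
      have h2 : (m : ℤ) * |x - x0| ≤ 2 * |(m * x - c : ℤ)| := by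
        have e : (m : ℤ) * |x - x0| = |(m * x - c) - (m * x0 - c)| := by
          rw [← Int.natCast_natAbs (m * x - c - (m * x0 - c)),
            show (m * x - c - (m * x0 - c) : ℤ) = m * (x - x0) by ring, Int.natAbs_mul]
          push_cast; simp
        rw [e]
        calc _ ≤ |(m * x - c : ℤ)| + |(m * x0 - c : ℤ)| := abs_sub _ _
          _ ≤ _ := by linarith
      have h3 : (m : ℝ) * ((x - x0).natAbs : ℕ) ≤ 2 * |((m * x - c : ℤ) : ℝ)| := by
        rw [Nat.cast_natAbs]; exact_mod_cast h2
      have hpos : (0 : ℝ) < ((x - x0).natAbs : ℕ) := by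
        have : 0 < (x - x0).natAbs := Int.natAbs_pos.2 (sub_ne_zero.2 h)
        exact_mod_cast this
      have h4 : √2 / √m * (1 / √(((x - x0).natAbs : ℕ) : ℝ))
          = 1 / √((m : ℝ) * ((x - x0).natAbs : ℕ) / 2) := by
        rw [Real.sqrt_div (by positivity), Real.sqrt_mul (by positivity)]
        have a1 : 0 < √(m : ℝ) := Real.sqrt_pos.2 hm0
        have a2 : 0 < √(((x - x0).natAbs : ℕ) : ℝ) := Real.sqrt_pos.2 hpos
        field_simp
      rw [h4]
      apply one_div_le_one_div_of_le (Real.sqrt_pos.2 (by positivity))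
      apply Real.sqrt_le_sqrt
      exact le_trans (by linarith) (le_max_right _ _)
  have hρm : (1 : ℝ) ≤ ρ / m := by
    rw [le_div_iff₀ hm0, one_mul]; exact_mod_cast hmρ
  have hmaps : ∑ x ∈ (Finset.Icc (-(ρ : ℤ)) ρ).filter (fun x => ¬ x = x0),
      1 / √(((x - x0).natAbs : ℕ) : ℝ) ≤ ∑ n ∈ Finset.Icc 1 (2 * ρ), 2 * (1 / √(n : ℝ)) := by
    rw [← Finset.sum_fiberwise_of_maps_to (g := fun x => (x - x0).natAbs)
      (t := Finset.Icc 1 (2 * ρ))]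
    · refine Finset.sum_le_sum fun n hn => ?_
      rw [Finset.sum_congr rfl (g := fun _ => 1 / √(n : ℝ))]
      · rw [Finset.sum_const, nsmul_eq_mul]
        gcongr
        have : (Finset.filter (fun i => (i - x0).natAbs = n)
            (Finset.filter (fun x => ¬ x = x0) (Finset.Icc (-(ρ : ℤ)) ρ))) ⊆ {x0 + n, x0 - n} := by
          intro x hx
          simp only [Finset.mem_filter, Finset.mem_insert, Finset.mem_singleton] at *
          omega
        have := (Finset.card_le_card this).trans Finset.card_le_two
        exact_mod_cast this
      · intro x hx
        rw [Finset.mem_filter] at hx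
        rw [hx.2]
    · intro x hx
      simp only [Finset.mem_filter, Finset.mem_Icc] at *
      omega
  calc _ ≤ ∑ x ∈ Finset.Icc (-(ρ : ℤ)) ρ,
        if x = x0 then 1 else √2 / √m * (1 / √(((x - x0).natAbs : ℕ) : ℝ)) := Finset.sum_le_sum hpt
    _ = 1 + √2 / √m * ∑ x ∈ (Finset.Icc (-(ρ : ℤ)) ρ).filter (fun x => ¬ x = x0),
      1 / √(((x - x0).natAbs : ℕ) : ℝ) := by
        rw [Finset.sum_ite, Finset.filter_eq' , if_pos hx0, Finset.mul_sum]
        simp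
    _ ≤ 1 + √2 / √m * (2 * (2 * √((2 * ρ : ℕ) : ℝ))) := by
        gcongr
        refine hmaps.trans ?_
        rw [← Finset.mul_sum]
        gcongr
        exact sum_inv_sqrt_le _
    _ = 1 + 8 * √(ρ / m : ℝ) := by
        rw [Real.sqrt_div (by positivity)]
        push_cast
        rw [Real.sqrt_mul (by positivity)]
        have := Real.mul_self_sqrt (by norm_num : (0 : ℝ) ≤ 2)
        calc _ = 1 + (√2 * √2) * 4 * (√ρ / √m) := by ring
          _ = _ := by rw [this]; ring
    _ ≤ _ := by
        have := Real.one_le_sqrt.2 hρm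
        linarith

lemma norm_smul_int (a : ℤ) (p : Fin 3 → ℤ) : ‖a • p‖ = |(a : ℝ)| * ‖p‖ := by
  rw [norm_smul, Int.norm_eq_abs]

lemma vec3_ext (i : Fin 3) {f f' : Fin 3 → ℤ} (h1 : f i = f' i) (h2 : f (i + 1) = f' (i + 1))
    (h3 : f (i + 2) = f' (i + 2)) : f = f' := by
  ext j
  fin_cases i <;> fin_cases j <;> simp at h1 h2 h3 ⊢ <;> assumption

/-- A primitive vector `p` has at most `2 * N + 1` lattice multiples of norm at most `N * ‖p‖`;
primitivity is recorded by the Bezout certificate `c`. -/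
lemma card_line_le {p c : Fin 3 → ℤ} (hc : c ⬝ᵥ p = 1) (s : Finset (Fin 3 → ℤ)) (N : ℕ)
    (hs : ∀ v ∈ s, p ⨯₃ v = 0 ∧ ‖v‖ ≤ N * ‖p‖) : s.card ≤ 2 * N + 1 := by
  have hp : 0 < ‖p‖ := by
    rw [norm_pos_iff]; rintro rfl; simp at hc
  have : (Finset.Icc (-(N : ℤ)) N).card = 2 * N + 1 := by simp; omega
  rw [← this]
  refine Finset.card_le_card_of_injOn (fun v => c ⬝ᵥ v) ?_ ?_
  · intro v hv
    obtain ⟨h1, h2⟩ := hs v hv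
    rw [eq_smul_of_cross_eq_zero hc h1, norm_smul_int] at h2
    have h3 := le_of_mul_le_mul_right h2 hp
    have h4 : |c ⬝ᵥ v| ≤ (N : ℤ) := by exact_mod_cast h3
    simpa [abs_le] using h4
  · intro v hv v' hv' h
    rw [eq_smul_of_cross_eq_zero hc (hs v hv).1, eq_smul_of_cross_eq_zero hc (hs v' hv').1]
    exact congrArg (· • p) h

lemma sum_parallel_le (ρ : ℕ) :
    ∑ u ∈ box ρ, ∑ v ∈ box ρ, (if u ≠ 0 ∧ v ≠ 0 ∧ u ⨯₃ v = 0 then 1 / max ‖u‖ ‖v‖ else 0)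
      ≤ 312 * (ρ : ℝ) ^ 2 := by
  classical
  choose! γ p c hγ hp hc using exists_primitive
  set W : (Fin 3 → ℤ) → (Fin 3 → ℤ) → ℝ := fun u v =>
    if u ≠ 0 ∧ p u ⨯₃ v = 0 ∧ ‖v‖ ≤ ‖u‖ then 1 / ‖u‖ else 0 with hW
  have hWnn : ∀ u v, 0 ≤ W u v := fun u v => by simp only [hW]; split_ifs <;> positivity
  have hpar : ∀ u v, u ≠ 0 → u ⨯₃ v = 0 → p u ⨯₃ v = 0 := by
    intro u v hu h
    rw [hp u hu, LinearMap.map_smul, LinearMap.smul_apply] at h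
    exact (smul_eq_zero.1 h).resolve_left (by exact_mod_cast (hγ u hu).ne')
  have h1 : ∀ u v, (if u ≠ 0 ∧ v ≠ 0 ∧ u ⨯₃ v = 0 then 1 / max ‖u‖ ‖v‖ else 0) ≤ W u v + W v u := by
    intro u v
    split_ifs with h
    · obtain ⟨hu, hv, hx⟩ := h
      rcases le_total ‖v‖ ‖u‖ with hl | hl
      · rw [max_eq_left hl]
        refine le_add_of_le_of_nonneg ?_ (hWnn _ _)
        simp only [hW]; rw [if_pos ⟨hu, hpar u v hu hx, hl⟩]
      · rw [max_eq_right hl]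
        refine le_add_of_nonneg_of_le (hWnn _ _) ?_
        have hx' : v ⨯₃ u = 0 := by rw [← cross_anticomm, hx, neg_zero]
        simp only [hW]; rw [if_pos ⟨hv, hpar v u hv hx', hl⟩]
    · exact add_nonneg (hWnn _ _) (hWnn _ _)
  have h2 : ∀ u ∈ box ρ, u ≠ 0 → ∑ v ∈ box ρ, W u v ≤ 3 * (1 / ‖p u‖) := by
    intro u hu hu0
    have hpn : 0 < ‖p u‖ := by
      rw [norm_pos_iff]; intro h; apply hu0; rw [hp u hu0, h, smul_zero]
    have hun : ‖u‖ = γ u * ‖p u‖ := by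
      conv_lhs => rw [hp u hu0, norm_smul_int]
      simp
    have hgr : (1 : ℝ) ≤ γ u := by exact_mod_cast hγ u hu0
    simp only [hW]
    rw [← Finset.sum_filter, Finset.sum_const, nsmul_eq_mul]
    have := card_line_le (hc u hu0) ((box ρ).filter fun v => u ≠ 0 ∧ p u ⨯₃ v = 0 ∧ ‖v‖ ≤ ‖u‖) (γ u)
      (fun v hv => by
        rw [Finset.mem_filter] at hv
        exact ⟨hv.2.2.1, hun ▸ hv.2.2.2⟩)
    have h3 : ((((box ρ).filter fun v => u ≠ 0 ∧ p u ⨯₃ v = 0 ∧ ‖v‖ ≤ ‖u‖).card : ℕ) : ℝ) ≤ 3 * γ u := by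
      have : ((((box ρ).filter fun v => u ≠ 0 ∧ p u ⨯₃ v = 0 ∧ ‖v‖ ≤ ‖u‖).card : ℕ) : ℝ)
        ≤ 2 * γ u + 1 := by exact_mod_cast this
      linarith
    calc _ ≤ 3 * (γ u : ℝ) * (1 / ‖u‖) := by gcongr
      _ = _ := by rw [hun]; field_simp
  have h3 : ∑ u ∈ (box ρ).filter (fun u => u ≠ 0), 1 / ‖p u‖ ≤ 52 * (ρ : ℝ) ^ 2 := by
    rw [← Finset.sum_fiberwise_of_maps_to (g := γ) (t := Finset.Icc 1 ρ)]
    · calc _ ≤ ∑ g ∈ Finset.Icc 1 ρ, 26 * ((ρ : ℝ) ^ 2 * (1 / (g : ℝ) ^ 2)) := by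
            refine Finset.sum_le_sum fun g hg => ?_
            have hg1 := (Finset.mem_Icc.1 hg).1
            have hgr : (0 : ℝ) < g := by exact_mod_cast hg1
            calc _ ≤ ∑ w ∈ (box (ρ / g)).filter (fun u => u ≠ 0), 1 / ‖w‖ := by
                  rw [← Finset.sum_image (s := Finset.filter (fun i => γ i = g)
                      (Finset.filter (fun u => u ≠ 0) (box ρ))) (g := p) (f := fun w => 1 / ‖w‖)]
                  · refine Finset.sum_le_sum_of_subset_of_nonneg ?_ fun _ _ _ => by positivity
                    intro w hw
                    simp only [Finset.mem_image, Finset.mem_filter] at hw ⊢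
                    obtain ⟨u, ⟨⟨hu, hu0⟩, rfl⟩, rfl⟩ := hw
                    refine ⟨?_, fun h => hu0 (by rw [hp u hu0, h, smul_zero])⟩
                    rw [mem_box] at hu ⊢
                    intro i
                    have := hu i
                    rw [hp u hu0] at this
                    simp only [Pi.smul_apply, smul_eq_mul, abs_mul, Nat.abs_cast] at this
                    push_cast
                    rw [Int.le_ediv_iff_mul_le (by exact_mod_cast hg1)]
                    linarith
                  · intro u hu v hv h
                    simp only [Finset.coe_filter, Set.mem_ofPred_eq, Finset.mem_filter] at hu hv
                    rw [hp u hu.1.2, hp v hv.1.2, hu.2, hv.2, h]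
              _ ≤ 26 * ((ρ / g : ℕ) : ℝ) ^ 2 := sum_inv_norm_le _
              _ ≤ 26 * ((ρ : ℝ) / g) ^ 2 := by gcongr; exact Nat.cast_div_le
              _ = _ := by field_simp
        _ ≤ _ := by
            rw [← Finset.mul_sum, ← Finset.mul_sum]
            have := sum_inv_sq_le ρ
            nlinarith [sq_nonneg (ρ : ℝ)]
    · intro u hu
      rw [Finset.mem_filter] at hu
      have hpn : 1 ≤ ‖p u‖ := one_le_norm fun h => hu.2 (by rw [hp u hu.2, h, smul_zero])
      rw [Finset.mem_Icc]
      refine ⟨hγ u hu.2, ?_⟩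
      have := mem_box_iff_norm.1 hu.1
      rw [hp u hu.2, norm_smul_int] at this
      have h4 : (γ u : ℝ) ≤ ρ := by
        have e : |((γ u : ℤ) : ℝ)| = γ u := by simp
        rw [e] at this
        nlinarith [(Nat.cast_nonneg (γ u) : (0 : ℝ) ≤ γ u)]
      exact_mod_cast h4
  have h4 : ∑ u ∈ box ρ, ∑ v ∈ box ρ, W u v ≤ 156 * (ρ : ℝ) ^ 2 := by
    calc _ = ∑ u ∈ (box ρ).filter (fun u => u ≠ 0), ∑ v ∈ box ρ, W u v := by
          rw [Finset.sum_filter_of_ne]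
          intro u _ h hu
          apply h
          simp [hW, hu]
      _ ≤ ∑ u ∈ (box ρ).filter (fun u => u ≠ 0), 3 * (1 / ‖p u‖) := by
          refine Finset.sum_le_sum fun u hu => ?_
          rw [Finset.mem_filter] at hu
          exact h2 u hu.1 hu.2
      _ ≤ _ := by rw [← Finset.mul_sum]; linarith
  calc _ ≤ ∑ u ∈ box ρ, ∑ v ∈ box ρ, (W u v + W v u) :=
        Finset.sum_le_sum fun u _ => Finset.sum_le_sum fun v _ => h1 u v
    _ = ∑ u ∈ box ρ, ∑ v ∈ box ρ, W u v + ∑ u ∈ box ρ, ∑ v ∈ box ρ, W u v := by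
        simp only [Finset.sum_add_distrib]
        congr 1
        exact Finset.sum_comm
    _ ≤ _ := by linarith

lemma card_parallel_le (ρ : ℕ) :
    (((box ρ ×ˢ box ρ).filter fun q => q.1 ≠ 0 ∧ q.2 ≠ 0 ∧ q.1 ⨯₃ q.2 = 0).card : ℝ)
      ≤ 312 * (ρ : ℝ) ^ 3 := by
  classical
  have h : (((box ρ ×ˢ box ρ).filter fun q => q.1 ≠ 0 ∧ q.2 ≠ 0 ∧ q.1 ⨯₃ q.2 = 0).card : ℝ)
      = ∑ u ∈ box ρ, ∑ v ∈ box ρ, (if u ≠ 0 ∧ v ≠ 0 ∧ u ⨯₃ v = 0 then (1 : ℝ) else 0) := by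
    rw [← Finset.sum_product', ← Finset.sum_filter]
    simp
  rw [h]
  calc _ ≤ ∑ u ∈ box ρ, ∑ v ∈ box ρ,
        (ρ : ℝ) * (if u ≠ 0 ∧ v ≠ 0 ∧ u ⨯₃ v = 0 then 1 / max ‖u‖ ‖v‖ else 0) := by
        refine Finset.sum_le_sum fun u hu => Finset.sum_le_sum fun v hv => ?_
        split_ifs with h
        · have h1 : max ‖u‖ ‖v‖ ≤ ρ := max_le (mem_box_iff_norm.1 hu) (mem_box_iff_norm.1 hv)
          have h2 : 0 < max ‖u‖ ‖v‖ := lt_max_of_lt_left (norm_pos_iff.2 h.1)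
          rw [mul_one_div, le_div_iff₀ h2]; linarith
        · simp
    _ = ρ * ∑ u ∈ box ρ, ∑ v ∈ box ρ,
        (if u ≠ 0 ∧ v ≠ 0 ∧ u ⨯₃ v = 0 then 1 / max ‖u‖ ‖v‖ else 0) := by
        simp only [Finset.mul_sum]
    _ ≤ ρ * (312 * (ρ : ℝ) ^ 2) := by gcongr; exact sum_parallel_le ρ
    _ = _ := by ring

/-! ### Cross products of integer vectors -/

lemma sum_box_coord_le (i : Fin 3) (n : ℕ) (f : ℤ → ℤ → ℤ → ℝ) (hf : ∀ x y z, 0 ≤ f x y z) :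
    ∑ u ∈ box n, f (u i) (u (i + 1)) (u (i + 2)) ≤ ∑ x ∈ Finset.Icc (-(n : ℤ)) n,
      ∑ y ∈ Finset.Icc (-(n : ℤ)) n, ∑ z ∈ Finset.Icc (-(n : ℤ)) n, f x y z := by
  classical
  have e : ∑ x ∈ Finset.Icc (-(n : ℤ)) n,
      ∑ y ∈ Finset.Icc (-(n : ℤ)) n, ∑ z ∈ Finset.Icc (-(n : ℤ)) n, f x y z
      = ∑ q ∈ Finset.Icc (-(n : ℤ)) n ×ˢ (Finset.Icc (-(n : ℤ)) n ×ˢ Finset.Icc (-(n : ℤ)) n),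
        f q.1 q.2.1 q.2.2 := by
    rw [Finset.sum_product]
    refine Finset.sum_congr rfl fun x _ => ?_
    rw [Finset.sum_product]
  rw [e, ← Finset.sum_image (g := fun u : Fin 3 → ℤ => (u i, u (i + 1), u (i + 2)))
    (f := fun q => f q.1 q.2.1 q.2.2)]
  · refine Finset.sum_le_sum_of_subset_of_nonneg ?_ fun _ _ _ => hf _ _ _
    intro q hq
    obtain ⟨u, hu, rfl⟩ := Finset.mem_image.1 hq
    rw [mem_box] at hu
    simp only [Finset.mem_product, Finset.mem_Icc, ← abs_le]
    exact ⟨hu _, hu _, hu _⟩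
  · intro u _ v _ h
    simp only [Prod.mk.injEq] at h
    exact vec3_ext i h.1 h.2.1 h.2.2

/-- For fixed `u`, the two components of `u × v` involving the largest coordinate `u i` are
values of two progressions with step `u i`; this separates the sum over `v`. -/
lemma sum_inv_cross_fixed_le (ρ : ℕ) (u : Fin 3 → ℤ) (hu : u ∈ box ρ) (hu0 : u ≠ 0) :
    ∑ v ∈ box ρ, (if u ⨯₃ v = 0 then 0 else 1 / ‖u ⨯₃ v‖) ≤ 243 * (ρ : ℝ) ^ 2 * (1 / ‖u‖) := by
  obtain ⟨i, hi⟩ := exists_norm_eq_abs u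
  have hn1 := one_le_norm hu0
  obtain ⟨m, s, hs, hm⟩ : ∃ (m : ℕ) (s : ℤ), |s| = 1 ∧ u i = s * m := by
    refine ⟨(u i).natAbs, (u i).sign, ?_, (Int.sign_mul_natAbs _).symm⟩
    have : u i ≠ 0 := by
      intro h; rw [h] at hi; simp at hi; exact hu0 hi
    rw [Int.abs_sign_of_ne_zero this]
  have hmn : ‖u‖ = m := by
    rw [hi, hm]; push_cast
    rw [abs_mul]
    have : |(s : ℝ)| = 1 := by exact_mod_cast hs
    simp [this]
  have hm1 : 1 ≤ m := by rw [hmn] at hn1; exact_mod_cast hn1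
  have hmρ : m ≤ ρ := by
    have := mem_box_iff_norm.1 hu; rw [hmn] at this; exact_mod_cast this
  have hs2 : s * s = 1 := by
    have := abs_mul_abs_self s; rw [hs] at this; linarith
  let G : ℤ → ℝ := fun x => 1 / √(max 1 |(x : ℝ)|)
  have hGnn : ∀ x, 0 ≤ G x := fun x => by positivity
  have hpt : ∀ v ∈ box ρ, (if u ⨯₃ v = 0 then 0 else 1 / ‖u ⨯₃ v‖)
      ≤ G (m * v (i + 1) - s * u (i + 1) * v i) * G (m * v (i + 2) - s * u (i + 2) * v i) := by
    intro v _
    split_ifs with h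
    · exact mul_nonneg (hGnn _) (hGnn _)
    · have h1 := one_le_norm h
      have hx : ∀ (j k : Fin 3) (x : ℤ), (x = (u ⨯₃ v) j ∨ x = - (u ⨯₃ v) j) →
          |(x : ℝ)| ≤ ‖u ⨯₃ v‖ := by
        intro j k x hx
        have := norm_le_pi_norm (u ⨯₃ v) j
        rw [Int.norm_eq_abs] at this
        rcases hx with rfl | rfl
        · exact this
        · push_cast; rw [abs_neg]; exact this
      have hsx : ∀ x : ℤ, |((s * x : ℤ) : ℝ)| = |(x : ℝ)| := by
        intro x; push_cast; rw [abs_mul]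
        have : |(s : ℝ)| = 1 := by exact_mod_cast hs
        rw [this, one_mul]
      have e1 : |((m * v (i + 1) - s * u (i + 1) * v i : ℤ) : ℝ)| ≤ ‖u ⨯₃ v‖ := by
        have e : (m * v (i + 1) - s * u (i + 1) * v i : ℤ) = s * (u i * v (i + 1) - u (i + 1) * v i) := by
          rw [hm]; linear_combination (- (m : ℤ) * v (i + 1)) * hs2
        rw [e, hsx]
        refine hx (i + 2) 0 _ (Or.inl ?_)
        fin_cases i <;> simp [cross_apply]
      have e2 : |((m * v (i + 2) - s * u (i + 2) * v i : ℤ) : ℝ)| ≤ ‖u ⨯₃ v‖ := by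
        have e : (m * v (i + 2) - s * u (i + 2) * v i : ℤ) = s * (u i * v (i + 2) - u (i + 2) * v i) := by
          rw [hm]; linear_combination (- (m : ℤ) * v (i + 2)) * hs2
        rw [e, hsx]
        refine hx (i + 1) 0 _ (Or.inr ?_)
        fin_cases i <;> simp [cross_apply]
      have hsq := Real.mul_self_sqrt (by positivity : 0 ≤ ‖u ⨯₃ v‖)
      have hpos : 0 < √‖u ⨯₃ v‖ := Real.sqrt_pos.2 (by linarith)
      have hG : ∀ x : ℤ, |(x : ℝ)| ≤ ‖u ⨯₃ v‖ → 1 / √‖u ⨯₃ v‖ ≤ G x := by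
        intro x hx
        apply one_div_le_one_div_of_le (Real.sqrt_pos.2 (by positivity))
        exact Real.sqrt_le_sqrt (max_le h1 hx)
      calc 1 / ‖u ⨯₃ v‖ = 1 / √‖u ⨯₃ v‖ * (1 / √‖u ⨯₃ v‖) := by
            rw [div_mul_div_comm, hsq, one_mul]
        _ ≤ _ := mul_le_mul (hG _ e1) (hG _ e2) (by positivity) (hGnn _)
  have hG2 : ∀ c : ℤ, ∑ y ∈ Finset.Icc (-(ρ : ℤ)) ρ, G (m * y - c) ≤ 9 * √(ρ / m : ℝ) :=
    fun c => sum_inv_sqrt_progression_le m ρ hm1 hmρ c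
  have hρ1 : (1 : ℝ) ≤ ρ := by exact_mod_cast hm1.trans hmρ
  calc _ ≤ ∑ v ∈ box ρ, G (m * v (i + 1) - s * u (i + 1) * v i)
          * G (m * v (i + 2) - s * u (i + 2) * v i) := Finset.sum_le_sum hpt
    _ ≤ ∑ x ∈ Finset.Icc (-(ρ : ℤ)) ρ, ∑ y ∈ Finset.Icc (-(ρ : ℤ)) ρ,
          ∑ z ∈ Finset.Icc (-(ρ : ℤ)) ρ, G (m * y - s * u (i + 1) * x) * G (m * z - s * u (i + 2) * x) :=
        sum_box_coord_le i ρ (fun x y z => G (m * y - s * u (i + 1) * x) * G (m * z - s * u (i + 2) * x))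
          fun x y z => mul_nonneg (hGnn _) (hGnn _)
    _ ≤ ∑ x ∈ Finset.Icc (-(ρ : ℤ)) ρ, (9 * √(ρ / m : ℝ)) * (9 * √(ρ / m : ℝ)) := by
        refine Finset.sum_le_sum fun x _ => ?_
        rw [← Finset.sum_mul_sum]
        exact mul_le_mul (hG2 _) (hG2 _) (Finset.sum_nonneg fun _ _ => hGnn _) (by positivity)
    _ = (2 * ρ + 1) * (81 * (ρ / m : ℝ)) := by
        have hcard : (Finset.Icc (-(ρ : ℤ)) ρ).card = 2 * ρ + 1 := by simp; omega
        rw [Finset.sum_const, nsmul_eq_mul, hcard]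
        have := Real.mul_self_sqrt (by positivity : (0 : ℝ) ≤ ρ / m)
        push_cast
        linear_combination (2 * (ρ : ℝ) + 1) * 81 * this
    _ ≤ (3 * ρ) * (81 * (ρ / m : ℝ)) := by gcongr; linarith
    _ = _ := by rw [hmn]; ring

lemma sum_inv_cross_le (ρ : ℕ) :
    ∑ u ∈ box ρ, ∑ v ∈ box ρ, (if u ⨯₃ v = 0 then 0 else 1 / ‖u ⨯₃ v‖) ≤ 6318 * (ρ : ℝ) ^ 4 := by
  classical
  calc _ = ∑ u ∈ (box ρ).filter (fun u => u ≠ 0),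
        ∑ v ∈ box ρ, (if u ⨯₃ v = 0 then 0 else 1 / ‖u ⨯₃ v‖) := by
        rw [Finset.sum_filter_of_ne]
        intro u _ h hu
        apply h
        simp [hu]
    _ ≤ ∑ u ∈ (box ρ).filter (fun u => u ≠ 0), 243 * (ρ : ℝ) ^ 2 * (1 / ‖u‖) := by
        refine Finset.sum_le_sum fun u hu => ?_
        rw [Finset.mem_filter] at hu
        exact sum_inv_cross_fixed_le ρ u hu.1 hu.2
    _ ≤ 243 * (ρ : ℝ) ^ 2 * (26 * (ρ : ℝ) ^ 2) := by
        rw [← Finset.mul_sum]; gcongr; exact sum_inv_norm_le ρ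
    _ = _ := by ring

/-- Pairs with small nonzero cross product: such a pair is encoded by the content `γ` of the
first vector, its primitive part `p`, and `p × h'`, which is orthogonal to `p`. -/
lemma card_near_parallel_le (E H : ℕ) (hE : E ≤ H) (hH : 1 ≤ H) :
    (((box (2 * H) ×ˢ box (2 * H)).filter fun q =>
      (H : ℝ) ≤ ‖q.1‖ ∧ q.1 ⨯₃ q.2 ≠ 0 ∧ ‖q.1 ⨯₃ q.2‖ ≤ E).card : ℝ)
      ≤ 34992 * (E : ℝ) ^ 2 * (H : ℝ) ^ 2 := by
  classical
  choose! γ p c hγ hp hc using exists_primitive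
  set Z := (box (2 * H) ×ˢ box (2 * H)).filter fun q : (Fin 3 → ℤ) × (Fin 3 → ℤ) =>
      (H : ℝ) ≤ ‖q.1‖ ∧ q.1 ⨯₃ q.2 ≠ 0 ∧ ‖q.1 ⨯₃ q.2‖ ≤ E with hZ
  have hHr : (1 : ℝ) ≤ H := by exact_mod_cast hH
  have hZ0 : ∀ q ∈ Z, q.1 ≠ 0 := by
    intro q hq h
    rw [hZ, Finset.mem_filter, h] at hq
    simp at hq
  have hnorm : ∀ h : Fin 3 → ℤ, h ≠ 0 → ‖h‖ = γ h * ‖p h‖ := by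
    intro h hh
    conv_lhs => rw [hp h hh, norm_smul_int]
    simp
  have hdiv : ∀ (g N : ℕ) (w : Fin 3 → ℤ), 0 < g → (g : ℝ) * ‖w‖ ≤ N → w ∈ box (N / g) := by
    intro g N w hg h
    rw [mem_box]
    intro i
    push_cast
    rw [Int.le_ediv_iff_mul_le (by exact_mod_cast hg)]
    have h1 := norm_le_pi_norm w i
    rw [Int.norm_eq_abs] at h1
    have h2 : |(w i : ℝ)| * g ≤ N := by
      refine le_trans ?_ h
      rw [mul_comm]; gcongr
    exact_mod_cast h2
  have hmaps : ∀ q ∈ Z, γ q.1 ∈ Finset.Icc 1 (2 * H) := by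
    intro q hq
    have h0 := hZ0 q hq
    rw [hZ, Finset.mem_filter, Finset.mem_product] at hq
    rw [Finset.mem_Icc]
    refine ⟨hγ _ h0, ?_⟩
    have h1 := mem_box_iff_norm.1 hq.1.1
    rw [hnorm _ h0] at h1
    have hpn : 1 ≤ ‖p q.1‖ := one_le_norm fun h => h0 (by rw [hp _ h0, h, smul_zero])
    have h4 : (γ q.1 : ℝ) ≤ (2 * H : ℕ) := by
      nlinarith [(Nat.cast_nonneg (γ q.1) : (0 : ℝ) ≤ γ q.1)]
    exact_mod_cast h4
  have hfib : ∀ g ∈ Finset.Icc 1 (2 * H), ((Z.filter fun q => γ q.1 = g).card : ℝ)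
      ≤ 17496 * (E : ℝ) ^ 2 * (H : ℝ) ^ 2 * (1 / (g : ℝ) ^ 2) := by
    intro g hg
    have hg1 := (Finset.mem_Icc.1 hg).1
    have hgr : (1 : ℝ) ≤ g := by exact_mod_cast hg1
    have h1 : (Z.filter fun q => γ q.1 = g).card ≤ (9 * g) *
        ((box (E / g) ×ˢ box (2 * H / g)).filter fun p : (Fin 3 → ℤ) × (Fin 3 → ℤ) =>
        p.1 ≠ 0 ∧ ∑ i, p.1 i * p.2 i = 0).card := by
      refine Finset.card_le_mul_card_image_of_maps_to (f := fun q => (p q.1 ⨯₃ q.2, p q.1)) ?_ _ ?_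
      · intro q hq
        rw [Finset.mem_filter] at hq
        have h0 := hZ0 q hq.1
        obtain ⟨hq1, hqg⟩ := hq
        rw [hZ, Finset.mem_filter, Finset.mem_product] at hq1
        obtain ⟨⟨b1, b2⟩, b3, b4, b5⟩ := hq1
        have ecr : q.1 ⨯₃ q.2 = (g : ℤ) • (p q.1 ⨯₃ q.2) := by
          conv_lhs => rw [hp _ h0, hqg, LinearMap.map_smul, LinearMap.smul_apply]
        simp only [Finset.mem_filter, Finset.mem_product]
        refine ⟨⟨?_, ?_⟩, ?_, ?_⟩
        · apply hdiv g E _ hg1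
          rw [ecr, norm_smul_int] at b5
          simpa using b5
        · apply hdiv g (2 * H) _ hg1
          have := mem_box_iff_norm.1 b1
          rwa [hnorm _ h0, hqg] at this
        · intro h; apply b4; rw [ecr, h, smul_zero]
        · have := dot_self_cross (p q.1) q.2
          rw [dotProduct_comm] at this
          exact this
      · rintro ⟨n, w⟩ -
        set F := (Z.filter fun q => γ q.1 = g).filter fun q => (p q.1 ⨯₃ q.2, p q.1) = (n, w) with hF
        rcases F.eq_empty_or_nonempty with he | ⟨q0, hq0⟩
        · rw [he]; simp
        have hmem : ∀ q ∈ F, q.1 = q0.1 ∧ p q0.1 ⨯₃ (q.2 - q0.2) = 0 ∧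
            ‖q.2 - q0.2‖ ≤ (4 * g : ℕ) * ‖p q0.1‖ := by
          intro q hq
          rw [hF, Finset.mem_filter, Finset.mem_filter, Prod.mk.injEq] at hq hq0
          obtain ⟨⟨a1, a2⟩, a3, a4⟩ := hq
          obtain ⟨⟨c1, c2⟩, c3, c4⟩ := hq0
          have e : q.1 = q0.1 := by
            rw [hp _ (hZ0 q a1), hp _ (hZ0 q0 c1), a2, c2, a4, c4]
          refine ⟨e, ?_, ?_⟩
          · rw [map_sub, c3]
            rw [e] at a3
            rw [a3, sub_self]
          · have := hnorm _ (hZ0 q0 c1)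
            rw [c2] at this
            rw [hZ, Finset.mem_filter, Finset.mem_product] at a1 c1
            have d1 := mem_box_iff_norm.1 a1.1.2
            have d2 := mem_box_iff_norm.1 c1.1.2
            have d3 := c1.2.1
            have d4 := norm_sub_le q.2 q0.2
            push_cast at *
            nlinarith
        have q00 : q0.1 ≠ 0 := hZ0 q0 (by rw [hF, Finset.mem_filter, Finset.mem_filter] at hq0; exact hq0.1.1)
        have h2 := card_line_le (hc _ q00) (F.image fun q => q.2 - q0.2) (4 * g) (by
          intro v hv
          obtain ⟨q, hq, rfl⟩ := Finset.mem_image.1 hv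
          exact (hmem q hq).2)
        rw [Finset.card_image_of_injOn] at h2
        · omega
        · intro q hq q' hq' h
          have e1 := (hmem q hq).1.trans (hmem q' hq').1.symm
          exact Prod.ext e1 (sub_left_injective h)
    have h2 := card_orthogonal_le (E / g) (2 * H / g) (by
      exact Nat.div_le_div_right (by omega))
    have h3 : ((E / g : ℕ) : ℝ) ≤ E / g := Nat.cast_div_le
    have h4 : ((2 * H / g : ℕ) : ℝ) ≤ 2 * H / g := by exact_mod_cast (Nat.cast_div_le (α := ℝ) (m := 2 * H) (n := g))
    calc _ ≤ (9 * g : ℝ) * (486 * ((E / g : ℕ) : ℝ) ^ 2 * ((2 * H / g : ℕ) : ℝ) ^ 2) := by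
          refine le_trans (by exact_mod_cast h1) (mul_le_mul_of_nonneg_left h2 (by positivity))
      _ ≤ (9 * g : ℝ) * (486 * ((E : ℝ) / g) ^ 2 * (2 * H / g) ^ 2) := by gcongr
      _ = 17496 * (E : ℝ) ^ 2 * (H : ℝ) ^ 2 * (1 / (g : ℝ) ^ 3) := by field_simp; ring
      _ ≤ _ := by
          gcongr 17496 * (E : ℝ) ^ 2 * (H : ℝ) ^ 2 * (1 / ?_)
          exact pow_le_pow_right₀ hgr (by norm_num)
  have hsum : (Z.card : ℝ) = ∑ g ∈ Finset.Icc 1 (2 * H), ((Z.filter fun q => γ q.1 = g).card : ℝ) := by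
    rw [Finset.card_eq_sum_card_fiberwise hmaps]; push_cast; rfl
  rw [hsum]
  refine (Finset.sum_le_sum hfib).trans ?_
  rw [← Finset.mul_sum]
  calc _ ≤ 17496 * (E : ℝ) ^ 2 * (H : ℝ) ^ 2 * 2 := by gcongr; exact sum_inv_sq_le _
    _ = _ := by ring

/-- Number of pairs of vectors of size about `H` whose cross product is `O(√H)`. -/
lemma card_close_pairs_le (H : ℕ) (hH : 1 ≤ H) (E K : ℝ) (hE : 0 ≤ E) (hK : 1 ≤ K)
    (hEK : E ^ 2 ≤ K * H) :
    (((box (2 * H) ×ˢ box (2 * H)).filter fun q =>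
      (H : ℝ) ≤ ‖q.1‖ ∧ (H : ℝ) ≤ ‖q.2‖ ∧ ‖q.1 ⨯₃ q.2‖ ≤ E).card : ℝ)
      ≤ 60000 * K ^ 3 * (H : ℝ) ^ 3 := by
  classical
  have hHr : (1 : ℝ) ≤ H := by exact_mod_cast hH
  have hK3 : 1 ≤ K ^ 3 := one_le_pow₀ hK
  rcases le_or_gt (⌊E⌋₊) H with h | h
  · have hsub : ((box (2 * H) ×ˢ box (2 * H)).filter fun q : (Fin 3 → ℤ) × (Fin 3 → ℤ) =>
        (H : ℝ) ≤ ‖q.1‖ ∧ (H : ℝ) ≤ ‖q.2‖ ∧ ‖q.1 ⨯₃ q.2‖ ≤ E) ⊆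
        ((box (2 * H) ×ˢ box (2 * H)).filter fun q => q.1 ≠ 0 ∧ q.2 ≠ 0 ∧ q.1 ⨯₃ q.2 = 0) ∪
        ((box (2 * H) ×ˢ box (2 * H)).filter fun q =>
        (H : ℝ) ≤ ‖q.1‖ ∧ q.1 ⨯₃ q.2 ≠ 0 ∧ ‖q.1 ⨯₃ q.2‖ ≤ ⌊E⌋₊) := by
      intro q hq
      simp only [Finset.mem_union, Finset.mem_filter] at hq ⊢
      obtain ⟨h1, h2, h3, h4⟩ := hq
      by_cases h5 : q.1 ⨯₃ q.2 = 0
      · left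
        refine ⟨h1, ?_, ?_, h5⟩ <;> rw [← norm_pos_iff] <;> linarith
      · right
        refine ⟨h1, h2, h5, ?_⟩
        obtain ⟨i, hi⟩ := exists_norm_eq_abs (q.1 ⨯₃ q.2)
        rw [hi] at h4 ⊢
        have h6 : (((q.1 ⨯₃ q.2) i).natAbs : ℝ) = |(((q.1 ⨯₃ q.2) i : ℤ) : ℝ)| := by
          rw [Nat.cast_natAbs]; push_cast; rfl
        rw [← h6] at h4 ⊢
        exact_mod_cast Nat.le_floor h4
    have h1 := card_parallel_le (2 * H)
    have h2 := card_near_parallel_le ⌊E⌋₊ H h hH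
    have h3 : (⌊E⌋₊ : ℝ) ^ 2 ≤ K * H := by
      refine le_trans ?_ hEK
      gcongr; exact Nat.floor_le hE
    have h4 : 34992 * (⌊E⌋₊ : ℝ) ^ 2 * (H : ℝ) ^ 2 ≤ 34992 * (K * H) * (H : ℝ) ^ 2 := by gcongr
    have h5 : K ≤ K ^ 3 := le_self_pow₀ hK (by norm_num)
    have h6 : K * (H : ℝ) ^ 3 ≤ K ^ 3 * (H : ℝ) ^ 3 := by gcongr
    have h7 : 1 * (H : ℝ) ^ 3 ≤ K ^ 3 * (H : ℝ) ^ 3 := by gcongr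
    have h8 := (Finset.card_le_card hsub).trans (Finset.card_union_le _ _)
    have h9 := (Nat.cast_le (α := ℝ)).2 h8
    push_cast at h9 h1
    have : (0 : ℝ) ≤ (H : ℝ) ^ 3 := by positivity
    nlinarith
  · have h1 : (H : ℝ) < E := by
      have := (Nat.lt_of_lt_of_le h le_rfl)
      calc (H : ℝ) < (⌊E⌋₊ : ℕ) := by exact_mod_cast h
        _ ≤ E := Nat.floor_le hE
    have h2 : (H : ℝ) ≤ K := by nlinarith
    have h3 : (((box (2 * H) ×ˢ box (2 * H)).filter fun q : (Fin 3 → ℤ) × (Fin 3 → ℤ) =>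
        (H : ℝ) ≤ ‖q.1‖ ∧ (H : ℝ) ≤ ‖q.2‖ ∧ ‖q.1 ⨯₃ q.2‖ ≤ E).card : ℝ)
        ≤ ((2 * (2 * H) + 1) ^ 3 * (2 * (2 * H) + 1) ^ 3 : ℕ) := by
      rw [← card_box, ← Finset.card_product]
      exact_mod_cast Finset.card_filter_le _ _
    refine h3.trans ?_
    push_cast
    calc (2 * (2 * (H : ℝ)) + 1) ^ 3 * (2 * (2 * (H : ℝ)) + 1) ^ 3
        ≤ (5 * (H : ℝ)) ^ 3 * (5 * (H : ℝ)) ^ 3 := by gcongr <;> linarith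
      _ = 15625 * ((H : ℝ) ^ 3 * (H : ℝ) ^ 3) := by ring
      _ ≤ 60000 * (K ^ 3 * (H : ℝ) ^ 3) := by gcongr; norm_num
      _ = _ := by ring

/-! ### Volumes of slabs and tubes -/

lemma volume_slabs (A : Matrix (Fin 3) (Fin 3) ℝ) (hA : A.det ≠ 0) (b : Fin 3 → ℝ)
    (hb : ∀ i, 0 ≤ b i) :
    volume {w : Fin 3 → ℝ | ∀ i, |(A *ᵥ w) i| ≤ b i}
      = ENNReal.ofReal (8 * (b 0 * b 1 * b 2) / |A.det|) := by
  have h1 : {w : Fin 3 → ℝ | ∀ i, |(A *ᵥ w) i| ≤ b i}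
      = (Matrix.toLin' A) ⁻¹' (Set.Icc (-b) b) := by
    ext w
    simp only [Set.mem_ofPred_eq, Set.mem_preimage, Matrix.toLin'_apply, Set.mem_Icc, Pi.le_def,
      Pi.neg_apply, abs_le, forall_and]
  have hd : LinearMap.det (Matrix.toLin' A) ≠ 0 := by rwa [LinearMap.det_toLin']
  rw [h1, Measure.addHaar_preimage_linearMap _ hd, Real.volume_Icc_pi, LinearMap.det_toLin',
    Fin.prod_univ_three, ← ENNReal.ofReal_mul (by simp; linarith [hb 0]),
    ← ENNReal.ofReal_mul (by
      have := hb 0; have := hb 1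
      simp only [Pi.neg_apply, sub_neg_eq_add]; positivity), ← ENNReal.ofReal_mul (abs_nonneg _)]
  congr 1
  rw [abs_inv]
  simp only [Pi.neg_apply]
  field_simp
  ring

lemma exists_norm_eq_abs_real (a : Fin 3 → ℝ) : ∃ i, ‖a‖ = |a i| := by
  obtain ⟨i, -, hi⟩ := Finset.exists_max_image Finset.univ (fun j => |a j|)
    Finset.univ_nonempty
  refine ⟨i, le_antisymm ?_ ?_⟩
  · rw [pi_norm_le_iff_of_nonneg (abs_nonneg _)]
    intro j
    exact hi j (Finset.mem_univ j)
  · exact norm_le_pi_norm a i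

lemma abs_apply_le_norm (a : Fin 3 → ℝ) (i : Fin 3) : |a i| ≤ ‖a‖ := norm_le_pi_norm a i

lemma abs_dot_le (a b : Fin 3 → ℝ) : |a ⬝ᵥ b| ≤ 3 * ‖a‖ * ‖b‖ := by
  rw [Matrix.vec3_dotProduct]
  have h : ∀ i, |a i * b i| ≤ ‖a‖ * ‖b‖ := fun i => by
    rw [abs_mul]; exact mul_le_mul (abs_apply_le_norm a i) (abs_apply_le_norm b i) (abs_nonneg _) (norm_nonneg _)
  calc _ ≤ |a 0 * b 0| + |a 1 * b 1| + |a 2 * b 2| := abs_add_three _ _ _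
    _ ≤ _ := by linarith [h 0, h 1, h 2]

/-- Volume of a slab of a cube. -/
lemma volume_slab_le (h : Fin 3 → ℝ) (hh : h ≠ 0) (P t : ℝ) (hP : 0 ≤ P) (ht : 0 ≤ t) :
    volume {w : Fin 3 → ℝ | ‖w‖ ≤ P ∧ |w ⬝ᵥ h| ≤ t} ≤ ENNReal.ofReal (8 * P ^ 2 * t / ‖h‖) := by
  obtain ⟨i, hi⟩ := exists_norm_eq_abs_real h
  have hpos : 0 < ‖h‖ := norm_pos_iff.2 hh
  set A : Matrix (Fin 3) (Fin 3) ℝ := (1 : Matrix (Fin 3) (Fin 3) ℝ).updateRow i h with hA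
  have hdet : A.det = h i := by
    rw [hA, Matrix.det_fin_three]
    fin_cases i <;> simp [Matrix.updateRow_apply]
  have hd : A.det ≠ 0 := by
    rw [hdet]; intro h0; rw [h0] at hi; simp at hi; exact hh hi
  have hsub : {w : Fin 3 → ℝ | ‖w‖ ≤ P ∧ |w ⬝ᵥ h| ≤ t} ⊆
      {w : Fin 3 → ℝ | ∀ j, |(A *ᵥ w) j| ≤ (fun j => if j = i then t else P) j} := by
    rintro w ⟨h1, h2⟩ j
    by_cases hj : j = i
    · subst hj
      simp only [if_true, hA, Matrix.mulVec, Matrix.updateRow_self]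
      rwa [dotProduct_comm]
    · simp only [hj, if_false, hA, Matrix.mulVec]
      rw [Matrix.updateRow_ne hj]
      have : (1 : Matrix (Fin 3) (Fin 3) ℝ) j ⬝ᵥ w = w j := by
        have := congrFun (Matrix.one_mulVec w) j
        exact this
      rw [this]
      exact (abs_apply_le_norm w j).trans h1
  refine (measure_mono hsub).trans ?_
  rw [volume_slabs A hd _ (fun j => by split_ifs <;> assumption), hdet, ← hi]
  apply ENNReal.ofReal_le_ofReal
  apply le_of_eq
  congr 1
  fin_cases i <;> simp <;> ring

/-- Volume of the intersection of a cube with two transversal slabs. -/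
lemma volume_two_slabs_le (u v : Fin 3 → ℝ) (hn : u ⨯₃ v ≠ 0) (P t : ℝ) (hP : 0 ≤ P) (ht : 0 ≤ t) :
    volume {w : Fin 3 → ℝ | ‖w‖ ≤ P ∧ |w ⬝ᵥ u| ≤ t ∧ |w ⬝ᵥ v| ≤ t}
      ≤ ENNReal.ofReal (24 * t ^ 2 * P / ‖u ⨯₃ v‖) := by
  set n := u ⨯₃ v with hnd
  have hpos : 0 < ‖n‖ := norm_pos_iff.2 hn
  have hnn : ‖n‖ ^ 2 ≤ n ⬝ᵥ n := by
    obtain ⟨i, hi⟩ := exists_norm_eq_abs_real n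
    rw [hi, sq_abs, Matrix.vec3_dotProduct]
    fin_cases i <;> simp <;> nlinarith [sq_nonneg (n 0), sq_nonneg (n 1), sq_nonneg (n 2)]
  set A : Matrix (Fin 3) (Fin 3) ℝ := Matrix.of ![u, v, n] with hA
  have hdet : A.det = n ⬝ᵥ n := by
    rw [hA, Matrix.det_fin_three, Matrix.vec3_dotProduct]
    simp only [hnd, cross_apply]
    simp
    ring
  have hd : 0 < A.det := by rw [hdet]; nlinarith
  have hsub : {w : Fin 3 → ℝ | ‖w‖ ≤ P ∧ |w ⬝ᵥ u| ≤ t ∧ |w ⬝ᵥ v| ≤ t} ⊆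
      {w : Fin 3 → ℝ | ∀ j, |(A *ᵥ w) j| ≤ (![t, t, 3 * ‖n‖ * P] : Fin 3 → ℝ) j} := by
    rintro w ⟨h1, h2, h3⟩ j
    fin_cases j
    · simp only [Matrix.mulVec]; rw [dotProduct_comm]; exact h2
    · simp only [Matrix.mulVec]; rw [dotProduct_comm]; exact h3
    · simp only [Matrix.mulVec]
      refine (abs_dot_le n w).trans ?_
      change _ ≤ 3 * ‖n‖ * P
      gcongr
  refine (measure_mono hsub).trans ?_
  rw [volume_slabs A hd.ne' _ (fun j => by fin_cases j <;> simp <;> positivity), abs_of_pos hd, hdet]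
  apply ENNReal.ofReal_le_ofReal
  simp only [Matrix.cons_val_zero, Matrix.cons_val_one, Matrix.cons_val]
  rw [div_le_div_iff₀ (hdet ▸ hd) hpos]
  have : 0 ≤ 24 * t ^ 2 * P := by positivity
  nlinarith

/-- The thin tube around the segment from `a` to `2 • a`. -/
def tube (a : Fin 3 → ℝ) (η : ℝ) : Set (Fin 3 → ℝ) := {w | ∃ s ∈ Set.Icc (1 : ℝ) 2, ‖w - s • a‖ ≤ η}

lemma tube_volume (a : Fin 3 → ℝ) (ha : a ≠ 0) (η : ℝ) (hη : 0 < η) (hηa : η ≤ ‖a‖) :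
    ENNReal.ofReal (‖a‖ * η ^ 2) ≤ volume (tube a η) ∧
      volume (tube a η) ≤ ENNReal.ofReal (96 * ‖a‖ * η ^ 2) := by
  obtain ⟨i, hi⟩ := exists_norm_eq_abs_real a
  have hpos : 0 < ‖a‖ := norm_pos_iff.2 ha
  have hai : a i ≠ 0 := by intro h; rw [h] at hi; simp at hi; exact ha hi
  set B : Matrix (Fin 3) (Fin 3) ℝ := (1 : Matrix (Fin 3) (Fin 3) ℝ).updateCol i a with hB
  have hdet : B.det = a i := by
    rw [hB, Matrix.det_fin_three]
    fin_cases i <;> simp [Matrix.updateCol_apply, Matrix.one_apply]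
  have hBi : ∀ x, (B *ᵥ x) i = x i * a i := by
    intro x
    simp only [Matrix.mulVec, dotProduct, hB, Fin.sum_univ_three, Matrix.updateCol_apply,
      Matrix.one_apply]
    fin_cases i <;> simp [mul_comm]
  have hBj : ∀ x j, j ≠ i → (B *ᵥ x) j = x j + x i * a j := by
    intro x j hj
    simp only [Matrix.mulVec, dotProduct, hB, Fin.sum_univ_three, Matrix.updateCol_apply,
      Matrix.one_apply]
    fin_cases i <;> fin_cases j <;> simp at hj ⊢ <;> ring
  have hvol : ∀ lo hi' : Fin 3 → ℝ, volume ((fun x => B *ᵥ x) '' Set.Icc lo hi') =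
      ENNReal.ofReal ‖a‖ * ∏ j, ENNReal.ofReal (hi' j - lo j) := by
    intro lo hi'
    have : (fun x => B *ᵥ x) = (Matrix.toLin' B : (Fin 3 → ℝ) → (Fin 3 → ℝ)) := by
      ext x; simp
    rw [this, Measure.addHaar_image_linearMap, LinearMap.det_toLin', Real.volume_Icc_pi, hdet, hi]
  constructor
  · have hsub : (fun x => B *ᵥ x) '' Set.Icc (fun j => if j = i then 1 else -η)
        (fun j => if j = i then 2 else η) ⊆ tube a η := by
      rintro w ⟨x, ⟨h1, h2⟩, rfl⟩
      have e1 := h1 i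
      have e2 := h2 i
      simp only [if_true] at e1 e2
      refine ⟨x i, ⟨e1, e2⟩, ?_⟩
      rw [pi_norm_le_iff_of_nonneg hη.le]
      intro j
      simp only [Pi.sub_apply, Pi.smul_apply, smul_eq_mul]
      by_cases hj : j = i
      · subst hj; rw [hBi]; simp [hη.le]
      · rw [hBj x j hj]
        have e3 := h1 j
        have e4 := h2 j
        simp only [hj, if_false] at e3 e4
        rw [Real.norm_eq_abs, abs_le]
        constructor <;> linarith
    refine le_trans ?_ (measure_mono hsub)
    rw [hvol, ENNReal.ofReal_mul (by positivity)]
    gcongr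
    rw [Fin.prod_univ_three]
    have hx : ENNReal.ofReal (η ^ 2) ≤ ENNReal.ofReal (2 - 1) * (ENNReal.ofReal (η - -η) * ENNReal.ofReal (η - -η)) := by
      rw [← ENNReal.ofReal_mul (by linarith), ← ENNReal.ofReal_mul (by norm_num)]
      apply ENNReal.ofReal_le_ofReal; nlinarith [sq_nonneg η]
    refine hx.trans (le_of_eq ?_)
    fin_cases i <;> simp <;> ring
  · have hsub : tube a η ⊆ (fun x => B *ᵥ x) '' Set.Icc (fun j => if j = i then -3 else -(2 * η))
        (fun j => if j = i then 3 else 2 * η) := by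
      rintro w ⟨s, ⟨hs1, hs2⟩, hw⟩
      have hv : ∀ j, |w j - s * a j| ≤ η := fun j => (abs_apply_le_norm _ j).trans hw
      have hq : ∀ j, |a j / a i| ≤ 1 := fun j => by
        rw [abs_div, div_le_one (abs_pos.2 hai), ← hi]; exact abs_apply_le_norm a j
      have hwi : |w i / a i - s| ≤ 1 := by
        have : w i / a i - s = (w i - s * a i) / a i := by field_simp
        rw [this, abs_div, div_le_one (abs_pos.2 hai), ← hi]
        exact (hv i).trans hηa
      have hcomp : ∀ j, |w j - w i / a i * a j| ≤ 2 * η := by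
        intro j
        have : w j - w i / a i * a j = (w j - s * a j) - (w i - s * a i) * (a j / a i) := by
          field_simp; ring
        rw [this]
        calc _ ≤ |w j - s * a j| + |(w i - s * a i) * (a j / a i)| := abs_sub _ _
          _ ≤ η + η * 1 := by
              rw [abs_mul]
              exact add_le_add (hv j) (mul_le_mul (hv i) (hq j) (abs_nonneg _) hη.le)
          _ = _ := by ring
      refine ⟨fun j => if j = i then w i / a i else w j - w i / a i * a j, ⟨?_, ?_⟩, ?_⟩
      · intro j
        by_cases hj : j = i
        · simp only [hj, if_true]; rw [abs_le] at hwi; linarith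
        · simp only [hj, if_false]; exact (abs_le.1 (hcomp j)).1
      · intro j
        by_cases hj : j = i
        · simp only [hj, if_true]; rw [abs_le] at hwi; linarith
        · simp only [hj, if_false]; exact (abs_le.1 (hcomp j)).2
      · ext j
        by_cases hj : j = i
        · subst hj
          simp only [hBi, if_true]; field_simp
        · simp only [hBj _ j hj, if_true, hj, if_false]; ring
    refine (measure_mono hsub).trans ?_
    rw [hvol, mul_comm 96 ‖a‖, mul_assoc, ENNReal.ofReal_mul (by positivity)]
    gcongr
    rw [Fin.prod_univ_three]
    have hx : ENNReal.ofReal (3 - -3) * (ENNReal.ofReal (2 * η - -(2 * η)) * ENNReal.ofReal (2 * η - -(2 * η)))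
        ≤ ENNReal.ofReal (96 * η ^ 2) := by
      rw [← ENNReal.ofReal_mul (by linarith), ← ENNReal.ofReal_mul (by norm_num)]
      apply ENNReal.ofReal_le_ofReal; nlinarith [sq_nonneg η]
    refine le_trans (le_of_eq ?_) hx
    fin_cases i <;> simp <;> ring

/-! ### Second moments -/

/-- An integer vector seen in `ℝ³`. -/
def toR (u : Fin 3 → ℤ) : Fin 3 → ℝ := fun i => (u i : ℝ)

lemma norm_toR (u : Fin 3 → ℤ) : ‖toR u‖ = ‖u‖ := by
  simp [toR, Pi.norm_def, nnnorm, Int.norm_eq_abs]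

lemma toR_cross (u v : Fin 3 → ℤ) : toR (u ⨯₃ v) = toR u ⨯₃ toR v := by
  ext i
  fin_cases i <;> simp [toR, cross_apply]

lemma toR_ne_zero {u : Fin 3 → ℤ} (hu : u ≠ 0) : toR u ≠ 0 := by
  rw [← norm_pos_iff, norm_toR, norm_pos_iff]; exact hu

lemma toR_sub (u v : Fin 3 → ℤ) : toR (u - v) = toR u - toR v := by
  ext i; simp [toR]

lemma toR_add (u v : Fin 3 → ℤ) : toR (u + v) = toR u + toR v := by
  ext i; simp [toR]

/-- The second moment of the number of integer points `u` in a slab `|w · u| ≤ t`, as `w` ranges over a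
cube. Pairs `u`, `v` are split according to whether they vanish, are parallel, or are transversal. -/
lemma sum_volume_slabs_le (ρ : ℕ) (P t K : ℝ) (hP : 0 ≤ P) (ht : 0 ≤ t) (hK : 0 ≤ K)
    (hPK : P ≤ K * ρ ^ 2) :
    ∑ u ∈ box ρ, ∑ v ∈ box ρ,
      volume {w : Fin 3 → ℝ | ‖w‖ ≤ P ∧ |w ⬝ᵥ toR u| ≤ t ∧ |w ⬝ᵥ toR v| ≤ t}
      ≤ ENNReal.ofReal ((8 * K ^ 2 + 2912 * t * K + 151632 * t ^ 2) * P * (ρ : ℝ) ^ 4) := by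
  classical
  have hP2 : P ^ 2 ≤ P * K * ρ ^ 2 := by nlinarith
  have hP3 : P ^ 3 ≤ P * K ^ 2 * ρ ^ 4 := by
    have : P ^ 2 ≤ (K * ρ ^ 2) ^ 2 := by gcongr
    nlinarith
  set b : (Fin 3 → ℤ) → (Fin 3 → ℤ) → ℝ := fun u v =>
    8 * P ^ 3 * (if u = 0 ∧ v = 0 then 1 else 0)
    + 8 * P ^ 2 * t * (if v = 0 then (if u ≠ 0 then 1 / ‖u‖ else 0) else 0)
    + 8 * P ^ 2 * t * (if u = 0 then (if v ≠ 0 then 1 / ‖v‖ else 0) else 0)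
    + 8 * P ^ 2 * t * (if u ≠ 0 ∧ v ≠ 0 ∧ u ⨯₃ v = 0 then 1 / max ‖u‖ ‖v‖ else 0)
    + 24 * t ^ 2 * P * (if u ⨯₃ v = 0 then 0 else 1 / ‖u ⨯₃ v‖) with hb
  have hbnn : ∀ u v, 0 ≤ b u v := by
    intro u v
    simp only [hb]
    have : ∀ (p : Prop) [Decidable p] (x : ℝ), 0 ≤ x → 0 ≤ (if p then x else 0) := by
      intro p _ x hx; split_ifs <;> simp [hx]
    have h5 : (0 : ℝ) ≤ (if u ⨯₃ v = 0 then 0 else 1 / ‖u ⨯₃ v‖) := by split_ifs <;> positivity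
    have := this (u = 0 ∧ v = 0) 1 (by norm_num)
    have := ‹∀ (p : Prop) [Decidable p] (x : ℝ), 0 ≤ x → 0 ≤ (if p then x else 0)› (v = 0)
      (if u ≠ 0 then 1 / ‖u‖ else 0) (by split_ifs <;> positivity)
    have := ‹∀ (p : Prop) [Decidable p] (x : ℝ), 0 ≤ x → 0 ≤ (if p then x else 0)› (u = 0)
      (if v ≠ 0 then 1 / ‖v‖ else 0) (by split_ifs <;> positivity)
    have := ‹∀ (p : Prop) [Decidable p] (x : ℝ), 0 ≤ x → 0 ≤ (if p then x else 0)›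
      (u ≠ 0 ∧ v ≠ 0 ∧ u ⨯₃ v = 0) (1 / max ‖u‖ ‖v‖) (by positivity)
    positivity
  have hone : ∀ u : Fin 3 → ℤ, u ≠ 0 → ∀ s : Set (Fin 3 → ℝ),
      s ⊆ {w : Fin 3 → ℝ | ‖w‖ ≤ P ∧ |w ⬝ᵥ toR u| ≤ t} →
      volume s ≤ ENNReal.ofReal (8 * P ^ 2 * t * (1 / ‖u‖)) := by
    intro u hu s hs
    refine (measure_mono hs).trans ((volume_slab_le _ (toR_ne_zero hu) P t hP ht).trans ?_)
    rw [norm_toR]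
    exact ENNReal.ofReal_le_ofReal (by rw [mul_one_div])
  have hpt : ∀ u v : Fin 3 → ℤ,
      volume {w : Fin 3 → ℝ | ‖w‖ ≤ P ∧ |w ⬝ᵥ toR u| ≤ t ∧ |w ⬝ᵥ toR v| ≤ t} ≤ ENNReal.ofReal (b u v) := by
    intro u v
    by_cases hu : u = 0
    · by_cases hv : v = 0
      · have : {w : Fin 3 → ℝ | ‖w‖ ≤ P ∧ |w ⬝ᵥ toR u| ≤ t ∧ |w ⬝ᵥ toR v| ≤ t} ⊆
            {w : Fin 3 → ℝ | ∀ i, |((1 : Matrix (Fin 3) (Fin 3) ℝ) *ᵥ w) i| ≤ (fun _ => P) i} := by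
          rintro w ⟨h1, -⟩ i
          rw [Matrix.one_mulVec]
          exact (abs_apply_le_norm w i).trans h1
        refine (measure_mono this).trans ?_
        rw [volume_slabs 1 (by simp) _ (fun _ => hP)]
        apply ENNReal.ofReal_le_ofReal
        simp [hb, hu, hv]
        apply le_of_eq; ring
      · refine (hone v hv _ (fun w hw => ⟨hw.1, hw.2.2⟩)).trans (ENNReal.ofReal_le_ofReal ?_)
        simp [hb, hu, hv]
    · by_cases hv : v = 0
      · refine (hone u hu _ (fun w hw => ⟨hw.1, hw.2.1⟩)).trans (ENNReal.ofReal_le_ofReal ?_)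
        simp [hb, hu, hv]
      · by_cases hx : u ⨯₃ v = 0
        · rcases le_total ‖u‖ ‖v‖ with hl | hl
          · refine (hone v hv _ (fun w hw => ⟨hw.1, hw.2.2⟩)).trans (ENNReal.ofReal_le_ofReal ?_)
            simp [hb, hu, hv, hx, max_eq_right hl]
          · refine (hone u hu _ (fun w hw => ⟨hw.1, hw.2.1⟩)).trans (ENNReal.ofReal_le_ofReal ?_)
            simp [hb, hu, hv, hx, max_eq_left hl]
        · have hx' : toR u ⨯₃ toR v ≠ 0 := by rw [← toR_cross]; exact toR_ne_zero hx
          refine (volume_two_slabs_le _ _ hx' P t hP ht).trans (ENNReal.ofReal_le_ofReal ?_)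
          rw [← toR_cross, norm_toR]
          simp [hb, hu, hv, hx]
          rw [div_eq_mul_inv]
  calc _ ≤ ∑ u ∈ box ρ, ∑ v ∈ box ρ, ENNReal.ofReal (b u v) :=
        Finset.sum_le_sum fun u _ => Finset.sum_le_sum fun v _ => hpt u v
    _ = ENNReal.ofReal (∑ u ∈ box ρ, ∑ v ∈ box ρ, b u v) := by
        rw [ENNReal.ofReal_sum_of_nonneg fun u _ => Finset.sum_nonneg fun v _ => hbnn u v]
        refine Finset.sum_congr rfl fun u _ => ?_
        rw [ENNReal.ofReal_sum_of_nonneg fun v _ => hbnn u v]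
    _ ≤ _ := by
        apply ENNReal.ofReal_le_ofReal
        have z0 : (0 : Fin 3 → ℤ) ∈ box ρ := by rw [mem_box]; intro i; simp
        have s1 : ∑ u ∈ box ρ, ∑ v ∈ box ρ, (if u = 0 ∧ v = 0 then (1 : ℝ) else 0) = 1 := by
          simp only [ite_and]
          simp [z0]
        have s2 : ∑ u ∈ box ρ, ∑ v ∈ box ρ, (if v = 0 then (if u ≠ 0 then 1 / ‖u‖ else 0) else 0)
            ≤ 26 * (ρ : ℝ) ^ 2 := by
          have := sum_inv_norm_le ρ
          rw [Finset.sum_filter] at this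
          refine le_trans (le_of_eq ?_) this
          refine Finset.sum_congr rfl fun u _ => ?_
          rw [Finset.sum_ite_eq' , if_pos z0]
        have s3 : ∑ u ∈ box ρ, ∑ v ∈ box ρ, (if u = 0 then (if v ≠ 0 then 1 / ‖v‖ else 0) else 0)
            ≤ 26 * (ρ : ℝ) ^ 2 := by
          rw [Finset.sum_comm]; exact s2
        have s4 := sum_parallel_le ρ
        have s5 := sum_inv_cross_le ρ
        simp only [hb, Finset.sum_add_distrib, ← Finset.mul_sum]
        rw [s1]
        have e2 := mul_le_mul_of_nonneg_left s2 (by positivity : 0 ≤ 8 * P ^ 2 * t)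
        have e3 := mul_le_mul_of_nonneg_left s3 (by positivity : 0 ≤ 8 * P ^ 2 * t)
        have e4 := mul_le_mul_of_nonneg_left s4 (by positivity : 0 ≤ 8 * P ^ 2 * t)
        have e5 := mul_le_mul_of_nonneg_left s5 (by positivity : 0 ≤ 24 * t ^ 2 * P)
        have e6 : P ^ 2 * (t * ρ ^ 2) ≤ (P * K * ρ ^ 2) * (t * ρ ^ 2) := by gcongr
        nlinarith

/-- The weighted Cauchy-Schwarz inequality for incidences, in terms of measures. -/
lemma measure_incidence_le {α ι κ ζ : Type*} [MeasurableSpace α] (μ : Measure α)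
    (Z : Finset ζ) (I : Finset ι) (J : Finset κ) (W : ζ → Set α) (T : ι → Set α) (U : κ → Set α)
    (G : Set α) (hW : ∀ z ∈ Z, MeasurableSet (W z)) (hT : ∀ i ∈ I, MeasurableSet (T i))
    (hU : ∀ j ∈ J, MeasurableSet (U j)) (hG : MeasurableSet G) (hTG : ∀ i ∈ I, T i ⊆ G)
    (hcount : ∀ x, ∑ z ∈ Z, (W z).indicator (1 : α → ℝ) x ≤
      (∑ i ∈ I, (T i).indicator (1 : α → ℝ) x) * ∑ j ∈ J, (U j).indicator (1 : α → ℝ) x)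
    (a : ℝ) (ha : 0 < a) :
    ∑ z ∈ Z, μ (W z) ≤ ENNReal.ofReal a * ∑ i ∈ I, ∑ i' ∈ I, μ (T i ∩ T i')
      + ENNReal.ofReal a⁻¹ * ∑ j ∈ J, ∑ j' ∈ J, μ (G ∩ (U j ∩ U j')) := by
  classical
  have hind : ∀ (s : Set α) x, s.indicator (1 : α → ℝ≥0∞) x = ENNReal.ofReal (s.indicator (1 : α → ℝ) x) := by
    intro s x
    by_cases h : x ∈ s <;> simp [h]
  have hnn : ∀ (s : Set α) x, 0 ≤ s.indicator (1 : α → ℝ) x := by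
    intro s x; by_cases h : x ∈ s <;> simp [h]
  have hL : ∑ z ∈ Z, μ (W z) = ∫⁻ x, ∑ z ∈ Z, (W z).indicator (1 : α → ℝ≥0∞) x ∂μ := by
    rw [lintegral_finsetSum' _ fun z hz => (measurable_one.indicator (hW z hz)).aemeasurable]
    exact Finset.sum_congr rfl fun z hz => (lintegral_indicator_one (hW z hz)).symm
  have hR1 : ∑ i ∈ I, ∑ i' ∈ I, μ (T i ∩ T i')
      = ∫⁻ x, ∑ i ∈ I, ∑ i' ∈ I, (T i ∩ T i').indicator (1 : α → ℝ≥0∞) x ∂μ := by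
    rw [lintegral_finsetSum' _ fun i hi => Finset.aemeasurable_fun_sum _ fun j hj =>
      (measurable_one.indicator ((hT i hi).inter (hT j hj))).aemeasurable]
    refine Finset.sum_congr rfl fun i hi => ?_
    rw [lintegral_finsetSum' _ fun j hj =>
      (measurable_one.indicator ((hT i hi).inter (hT j hj))).aemeasurable]
    exact Finset.sum_congr rfl fun j hj => (lintegral_indicator_one ((hT i hi).inter (hT j hj))).symm
  have hR2 : ∑ i ∈ J, ∑ i' ∈ J, μ (G ∩ (U i ∩ U i'))
      = ∫⁻ x, ∑ i ∈ J, ∑ i' ∈ J, (G ∩ (U i ∩ U i')).indicator (1 : α → ℝ≥0∞) x ∂μ := by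
    have hm : ∀ i ∈ J, ∀ j ∈ J, MeasurableSet (G ∩ (U i ∩ U j)) := fun i hi j hj =>
      hG.inter ((hU i hi).inter (hU j hj))
    rw [lintegral_finsetSum' _ fun i hi => Finset.aemeasurable_fun_sum _ fun j hj =>
      (measurable_one.indicator (hm i hi j hj)).aemeasurable]
    refine Finset.sum_congr rfl fun i hi => ?_
    rw [lintegral_finsetSum' _ fun j hj => (measurable_one.indicator (hm i hi j hj)).aemeasurable]
    exact Finset.sum_congr rfl fun j hj => (lintegral_indicator_one (hm i hi j hj)).symm
  rw [hL, hR1, hR2, ← lintegral_const_mul' _ _ ENNReal.ofReal_ne_top,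
    ← lintegral_const_mul' _ _ ENNReal.ofReal_ne_top, ← lintegral_add_left']
  · refine lintegral_mono fun x => ?_
    simp only [hind]
    simp only [← ENNReal.ofReal_sum_of_nonneg (fun i (_ : i ∈ Z) => hnn (W i) x)]
    have c1 : ∑ i ∈ I, ∑ i' ∈ I, ENNReal.ofReal ((T i ∩ T i').indicator (1 : α → ℝ) x)
        = ENNReal.ofReal (∑ i ∈ I, ∑ i' ∈ I, (T i ∩ T i').indicator (1 : α → ℝ) x) := by
      rw [ENNReal.ofReal_sum_of_nonneg fun i _ => Finset.sum_nonneg fun j _ => hnn _ x]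
      refine Finset.sum_congr rfl fun i _ => ?_
      rw [ENNReal.ofReal_sum_of_nonneg fun j _ => hnn _ x]
    have c2 : ∑ i ∈ J, ∑ i' ∈ J, ENNReal.ofReal ((G ∩ (U i ∩ U i')).indicator (1 : α → ℝ) x)
        = ENNReal.ofReal (∑ i ∈ J, ∑ i' ∈ J, (G ∩ (U i ∩ U i')).indicator (1 : α → ℝ) x) := by
      rw [ENNReal.ofReal_sum_of_nonneg fun i _ => Finset.sum_nonneg fun j _ => hnn _ x]
      refine Finset.sum_congr rfl fun i _ => ?_
      rw [ENNReal.ofReal_sum_of_nonneg fun j _ => hnn _ x]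
    have n1 : 0 ≤ ∑ i ∈ I, ∑ i' ∈ I, (T i ∩ T i').indicator (1 : α → ℝ) x :=
      Finset.sum_nonneg fun i _ => Finset.sum_nonneg fun j _ => hnn _ x
    have n2 : 0 ≤ ∑ i ∈ J, ∑ i' ∈ J, (G ∩ (U i ∩ U i')).indicator (1 : α → ℝ) x :=
      Finset.sum_nonneg fun i _ => Finset.sum_nonneg fun j _ => hnn _ x
    rw [c1, c2, ← ENNReal.ofReal_mul ha.le, ← ENNReal.ofReal_mul (by positivity),
      ← ENNReal.ofReal_add (by positivity) (by positivity)]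
    apply ENNReal.ofReal_le_ofReal
    refine (hcount x).trans ?_
    have e1 : ∑ i ∈ I, ∑ i' ∈ I, (T i ∩ T i').indicator (1 : α → ℝ) x
        = (∑ i ∈ I, (T i).indicator (1 : α → ℝ) x) * (∑ i ∈ I, (T i).indicator (1 : α → ℝ) x) := by
      rw [Finset.sum_mul_sum]
      refine Finset.sum_congr rfl fun i _ => Finset.sum_congr rfl fun j _ => ?_
      rw [Set.inter_indicator_one]; rfl
    by_cases hx : x ∈ G
    · have e2 : ∑ i ∈ J, ∑ i' ∈ J, (G ∩ (U i ∩ U i')).indicator (1 : α → ℝ) x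
          = (∑ i ∈ J, (U i).indicator (1 : α → ℝ) x) * (∑ i ∈ J, (U i).indicator (1 : α → ℝ) x) := by
        rw [Finset.sum_mul_sum]
        refine Finset.sum_congr rfl fun i _ => Finset.sum_congr rfl fun j _ => ?_
        rw [Set.inter_indicator_one, Set.inter_indicator_one]; simp [hx]
      rw [e1, e2]
      generalize (∑ i ∈ I, (T i).indicator (1 : α → ℝ) x) = s
      generalize (∑ i ∈ J, (U i).indicator (1 : α → ℝ) x) = v
      have : a * (s * s) + a⁻¹ * (v * v) - s * v = a * (s - a⁻¹ * v / 2) ^ 2 + a⁻¹ * v ^ 2 * (3 / 4) := by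
        field_simp; ring
      have : 0 ≤ a * (s - a⁻¹ * v / 2) ^ 2 + a⁻¹ * v ^ 2 * (3 / 4) := by positivity
      linarith
    · have : ∑ i ∈ I, (T i).indicator (1 : α → ℝ) x = 0 :=
        Finset.sum_eq_zero fun i hi => Set.indicator_of_notMem (fun h => hx (hTG i hi h)) _
      rw [this, zero_mul]
      positivity
  · refine AEMeasurable.const_mul ?_ _
    exact Finset.aemeasurable_fun_sum _ fun i hi => Finset.aemeasurable_fun_sum _ fun j hj =>
      (measurable_one.indicator ((hT i hi).inter (hT j hj))).aemeasurable

/-! ### The differential data and bundles of tubes -/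

/-- The region of `ℝ³` in which the differential estimates hold. -/
def K1 : Set (Fin 3 → ℝ) := Set.Icc ![-1, -1, 1 / 4] ![1, 1, 1]

/-- The smaller region containing the rescaled lattice points that are counted. -/
def K0 : Set (Fin 3 → ℝ) := Set.Icc ![-(2 / 5), -(2 / 5), 1 / 2] ![2 / 5, 2 / 5, 3 / 5]

lemma mem_K1 {y : Fin 3 → ℝ} : y ∈ K1 ↔ (-1 ≤ y 0 ∧ y 0 ≤ 1) ∧ (-1 ≤ y 1 ∧ y 1 ≤ 1) ∧
    (1 / 4 ≤ y 2 ∧ y 2 ≤ 1) := by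
  simp only [K1, Set.mem_Icc, Pi.le_def, Fin.forall_fin_succ]
  simp
  tauto

lemma mem_K0 {y : Fin 3 → ℝ} : y ∈ K0 ↔ (-(2 / 5) ≤ y 0 ∧ y 0 ≤ 2 / 5) ∧
    (-(2 / 5) ≤ y 1 ∧ y 1 ≤ 2 / 5) ∧ (1 / 2 ≤ y 2 ∧ y 2 ≤ 3 / 5) := by
  simp only [K0, Set.mem_Icc, Pi.le_def, Fin.forall_fin_succ]
  simp
  tauto

lemma isCompact_K1 : IsCompact K1 := isCompact_Icc

lemma norm_le_one_of_mem_K1 {y : Fin 3 → ℝ} (hy : y ∈ K1) : ‖y‖ ≤ 1 := by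
  rw [mem_K1] at hy
  rw [pi_norm_le_iff_of_nonneg (by norm_num)]
  intro i
  rw [Real.norm_eq_abs, abs_le]
  fin_cases i <;> simp <;> constructor <;> linarith

lemma mem_K1_of_near {p y : Fin 3 → ℝ} (hp : p ∈ K0) (h : ‖y - p‖ ≤ 1 / 4) : y ∈ K1 := by
  have h' : ∀ i, |y i - p i| ≤ 1 / 4 := fun i => (abs_apply_le_norm (y - p) i).trans h
  have h0 := abs_le.1 (h' 0)
  have h1 := abs_le.1 (h' 1)
  have h2 := abs_le.1 (h' 2)
  rw [mem_K0] at hp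
  rw [mem_K1]
  refine ⟨⟨?_, ?_⟩, ⟨?_, ?_⟩, ?_, ?_⟩ <;> linarith

/-- The properties of a function `q`, homogeneous of degree two with nondegenerate Hessian, that
enter the count: `g` is its gradient and `A` the derivative of `g`. The last two fields say that if
`q (p + η) = q p` then the gradient near the midpoint is almost orthogonal to `η`, and that
two such points `p`, `p'` for the same `η`, with both midpoints near `y`, differ by a vector almost
orthogonal to `A y η`. -/
structure Data (q : (Fin 3 → ℝ) → ℝ) (g : (Fin 3 → ℝ) → (Fin 3 → ℝ))
    (A : (Fin 3 → ℝ) → (Fin 3 → ℝ) →L[ℝ] (Fin 3 → ℝ)) (lam M : ℝ) : Prop where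
  lam_pos : 0 < lam
  lam_le : lam ≤ 1
  one_le : 1 ≤ M
  contA : ContinuousOn A K1
  contg : ContinuousOn g K1
  norm_g : ∀ y ∈ K1, ‖g y‖ ≤ M
  norm_A : ∀ y ∈ K1, ∀ h, ‖A y h‖ ≤ M * ‖h‖
  low : ∀ y ∈ K1, ∀ h, lam * ‖h‖ ≤ ‖A y h‖
  euler : ∀ y ∈ K1, ∀ h, A y h ⬝ᵥ y = g y ⬝ᵥ h
  vol : ∀ s ⊆ K1, MeasurableSet s → ENNReal.ofReal lam * volume s ≤ volume (g '' s)
  loc_b : ∀ p ∈ K0, ∀ y η : Fin 3 → ℝ, ∀ δ : ℝ, δ ≤ 1 / 16 → ‖η‖ ≤ 1 / 16 → ‖η‖ ^ 2 ≤ δ →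
    ‖y - (p + (1 / 2 : ℝ) • η)‖ ≤ δ → q (p + η) = q p → |g y ⬝ᵥ η| ≤ M * δ * ‖η‖
  loc_c : ∀ p ∈ K0, ∀ p' ∈ K0, ∀ y η : Fin 3 → ℝ, ∀ δ : ℝ, δ ≤ 1 / 16 → ‖η‖ ≤ 1 / 16 →
    ‖η‖ ^ 2 ≤ δ → ‖y - (p + (1 / 2 : ℝ) • η)‖ ≤ δ → ‖y - (p' + (1 / 2 : ℝ) • η)‖ ≤ δ →
    q (p + η) = q p → q (p' + η) = q p' → |A y η ⬝ᵥ (p' - p)| ≤ M * δ ^ 2 * ‖η‖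

/-- The tubes around `A y h` fibred over `y ∈ L`. -/
def tubeBundle (A : (Fin 3 → ℝ) → (Fin 3 → ℝ) →L[ℝ] (Fin 3 → ℝ)) (L : Set (Fin 3 → ℝ))
    (h : Fin 3 → ℝ) (η : ℝ) : Set ((Fin 3 → ℝ) × (Fin 3 → ℝ)) :=
  {p | p.1 ∈ L ∧ p.2 ∈ tube (A p.1 h) η}

lemma isCompact_tubeBundle {A : (Fin 3 → ℝ) → (Fin 3 → ℝ) →L[ℝ] (Fin 3 → ℝ)}
    {L : Set (Fin 3 → ℝ)} (hL : IsCompact L) (hA : ContinuousOn A L) (h : Fin 3 → ℝ) (η : ℝ) :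
    IsCompact (tubeBundle A L h η) := by
  have : tubeBundle A L h η = (fun p : (Fin 3 → ℝ) × ℝ × (Fin 3 → ℝ) => (p.1, p.2.1 • A p.1 h + p.2.2))
      '' (L ×ˢ (Set.Icc (1 : ℝ) 2 ×ˢ Metric.closedBall (0 : Fin 3 → ℝ) η)) := by
    ext ⟨y, w⟩
    simp only [tubeBundle, tube, Set.mem_ofPred_eq, Set.mem_image, Set.mem_prod, Prod.exists,
      mem_closedBall_zero_iff, Prod.mk.injEq]
    constructor
    · rintro ⟨hy, s, hs, hw⟩
      exact ⟨y, s, w - s • A y h, ⟨hy, hs, hw⟩, rfl, by abel⟩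
    · rintro ⟨y', s, e, ⟨hy, hs, he⟩, rfl, rfl⟩
      exact ⟨hy, s, hs, by simpa using he⟩
  rw [this]
  apply (hL.prod (isCompact_Icc.prod (isCompact_closedBall 0 η))).image_of_continuousOn
  refine ContinuousOn.prodMk continuousOn_fst ?_
  have h1 : ContinuousOn (fun p : (Fin 3 → ℝ) × ℝ × (Fin 3 → ℝ) => A p.1 h)
      (L ×ˢ (Set.Icc (1 : ℝ) 2 ×ˢ Metric.closedBall (0 : Fin 3 → ℝ) η)) :=
    (hA.comp continuousOn_fst fun p hp => hp.1).clm_apply continuousOn_const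
  have h2 : ContinuousOn (fun p : (Fin 3 → ℝ) × ℝ × (Fin 3 → ℝ) => p.2.1)
      (L ×ˢ (Set.Icc (1 : ℝ) 2 ×ˢ Metric.closedBall (0 : Fin 3 → ℝ) η)) := by fun_prop
  have h3 : ContinuousOn (fun p : (Fin 3 → ℝ) × ℝ × (Fin 3 → ℝ) => p.2.2)
      (L ×ˢ (Set.Icc (1 : ℝ) 2 ×ˢ Metric.closedBall (0 : Fin 3 → ℝ) η)) := by fun_prop
  exact (h2.smul h1).add h3

lemma volume_tubeBundle_bounds {A : (Fin 3 → ℝ) → (Fin 3 → ℝ) →L[ℝ] (Fin 3 → ℝ)}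
    {L : Set (Fin 3 → ℝ)} (hL : IsCompact L) (hA : ContinuousOn A L) (h : Fin 3 → ℝ) (η lo hi : ℝ)
    (hη : 0 < η) (hηlo : η ≤ lo) (hlo : ∀ y ∈ L, lo ≤ ‖A y h‖) (hhi : ∀ y ∈ L, ‖A y h‖ ≤ hi) :
    ENNReal.ofReal (lo * η ^ 2) * volume L ≤ volume (tubeBundle A L h η) ∧
    volume (tubeBundle A L h η) ≤ ENNReal.ofReal (96 * hi * η ^ 2) * volume L := by
  have hm := (isCompact_tubeBundle hL hA h η).measurableSet
  have hsl : ∀ y ∈ L, Prod.mk y ⁻¹' (tubeBundle A L h η) = tube (A y h) η := by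
    intro y hy; ext w; simp [tubeBundle, hy]
  have hsl0 : ∀ y ∉ L, Prod.mk y ⁻¹' (tubeBundle A L h η) = ∅ := by
    intro y hy; ext w; simp [tubeBundle, hy]
  have ht : ∀ y ∈ L, ENNReal.ofReal (lo * η ^ 2) ≤ volume (tube (A y h) η) ∧
      volume (tube (A y h) η) ≤ ENNReal.ofReal (96 * hi * η ^ 2) := by
    intro y hy
    have h1 := hlo y hy
    have h2 := hhi y hy
    have h3 : A y h ≠ 0 := by rw [← norm_pos_iff]; linarith
    obtain ⟨a, b⟩ := tube_volume (A y h) h3 η hη (hηlo.trans h1)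
    exact ⟨le_trans (ENNReal.ofReal_le_ofReal (by gcongr)) a,
      b.trans (ENNReal.ofReal_le_ofReal (by gcongr))⟩
  rw [Measure.volume_eq_prod, Measure.prod_apply hm]
  have hLm := hL.measurableSet
  constructor
  · rw [← lintegral_indicator_const hLm]
    refine lintegral_mono fun y => ?_
    by_cases hy : y ∈ L
    · simp only [Set.indicator_of_mem hy]; rw [hsl y hy]; exact (ht y hy).1
    · simp only [Set.indicator_of_notMem hy]; exact zero_le
  · rw [← lintegral_indicator_const hLm]
    refine lintegral_mono fun y => ?_
    by_cases hy : y ∈ L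
    · simp only [Set.indicator_of_mem hy]; rw [hsl y hy]; exact (ht y hy).2
    · simp only [Set.indicator_of_notMem hy]; rw [hsl0 y hy]; simp

/-- The points at which the gradient is almost orthogonal to `h` are the preimage under `g` of a slab,
and `g` does not contract volumes by more than the factor `lam`. -/
lemma volume_tangent_le {q g A lam M} (D : Data q g A lam M) (h : Fin 3 → ℝ) (hh : h ≠ 0) (t : ℝ)
    (ht : 0 ≤ t) : IsCompact {y | y ∈ K1 ∧ |g y ⬝ᵥ h| ≤ t} ∧
    volume {y | y ∈ K1 ∧ |g y ⬝ᵥ h| ≤ t} ≤ ENNReal.ofReal (8 * M ^ 2 * t / (lam * ‖h‖)) := by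
  have hM := D.one_le
  have hlam := D.lam_pos
  have hpos : 0 < ‖h‖ := norm_pos_iff.2 hh
  have hc : IsCompact {y | y ∈ K1 ∧ |g y ⬝ᵥ h| ≤ t} := by
    have h1 : ContinuousOn (fun y => |g y ⬝ᵥ h|) K1 := by
      refine ContinuousOn.abs ?_
      have h0 : Continuous fun w : Fin 3 → ℝ => w ⬝ᵥ h := by simp only [dotProduct]; fun_prop
      exact h0.comp_continuousOn D.contg
    have := h1.preimage_isClosed_of_isClosed isCompact_K1.isClosed (isClosed_Iic (a := t))
    exact isCompact_K1.of_isClosed_subset this (fun y hy => hy.1)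
  refine ⟨hc, ?_⟩
  have h1 := D.vol _ (fun y hy => hy.1) hc.measurableSet
  have h2 : volume (g '' {y | y ∈ K1 ∧ |g y ⬝ᵥ h| ≤ t}) ≤ ENNReal.ofReal (8 * M ^ 2 * t / ‖h‖) := by
    refine le_trans (measure_mono ?_) (volume_slab_le h hh M t (by linarith) ht)
    rintro w ⟨y, ⟨hy, hyt⟩, rfl⟩
    exact ⟨D.norm_g y hy, hyt⟩
  have h3 := h1.trans h2
  have h4 : ENNReal.ofReal (8 * M ^ 2 * t / (lam * ‖h‖)) = (ENNReal.ofReal lam)⁻¹ * ENNReal.ofReal (8 * M ^ 2 * t / ‖h‖) := by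
    rw [← ENNReal.ofReal_inv_of_pos hlam, ← ENNReal.ofReal_mul (by positivity)]
    congr 1
    field_simp
  rw [h4]
  rw [mul_comm] at h3
  have := ENNReal.le_div_iff_mul_le (a := volume {y | y ∈ K1 ∧ |g y ⬝ᵥ h| ≤ t}) (b := ENNReal.ofReal lam)
    (c := ENNReal.ofReal (8 * M ^ 2 * t / ‖h‖)) (Or.inl (by simpa using hlam)) (Or.inl ENNReal.ofReal_ne_top)
  have := this.2 h3
  rwa [ENNReal.div_eq_inv_mul] at this

/-- The set of pairs `(y, w)` containing all tubes: `w` has size about `H` and is almost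
orthogonal to `y`. -/
def almostOrth (lo hi t : ℝ) : Set ((Fin 3 → ℝ) × (Fin 3 → ℝ)) :=
  {p | p.1 ∈ K1 ∧ lo ≤ ‖p.2‖ ∧ ‖p.2‖ ≤ hi ∧ |p.2 ⬝ᵥ p.1| ≤ t}

lemma isClosed_almostOrth (lo hi t : ℝ) : IsClosed (almostOrth lo hi t) := by
  have h : Continuous fun p : (Fin 3 → ℝ) × (Fin 3 → ℝ) => |p.2 ⬝ᵥ p.1| := by
    simp only [dotProduct]; fun_prop
  have hn : Continuous fun p : (Fin 3 → ℝ) × (Fin 3 → ℝ) => ‖p.2‖ := by fun_prop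
  have h1 : IsClosed {p : (Fin 3 → ℝ) × (Fin 3 → ℝ) | p.1 ∈ K1} :=
    isCompact_K1.isClosed.preimage continuous_fst
  have h2 := isClosed_le (continuous_const (y := lo)) hn
  have h3 := isClosed_le hn (continuous_const (y := hi))
  have h4 := isClosed_le h (continuous_const (y := t))
  exact h1.inter (h2.inter (h3.inter h4))

lemma isClosed_slab (u : Fin 3 → ℝ) (C : ℝ) :
    IsClosed {p : (Fin 3 → ℝ) × (Fin 3 → ℝ) | |p.2 ⬝ᵥ u| ≤ C} := by
  have h : Continuous fun p : (Fin 3 → ℝ) × (Fin 3 → ℝ) => |p.2 ⬝ᵥ u| := by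
    simp only [dotProduct]; fun_prop
  exact isClosed_le h continuous_const

lemma volume_almostOrth_le (lo hi t C : ℝ) (hlo : 0 < lo) (ht : 0 ≤ t) (u v : Fin 3 → ℝ) :
    volume (almostOrth lo hi t ∩ ({p | |p.2 ⬝ᵥ u| ≤ C} ∩ {p | |p.2 ⬝ᵥ v| ≤ C})) ≤
      ENNReal.ofReal (8 * t / lo) *
        volume {w : Fin 3 → ℝ | ‖w‖ ≤ hi ∧ |w ⬝ᵥ u| ≤ C ∧ |w ⬝ᵥ v| ≤ C} := by
  have hm : MeasurableSet (almostOrth lo hi t ∩ ({p | |p.2 ⬝ᵥ u| ≤ C} ∩ {p | |p.2 ⬝ᵥ v| ≤ C})) :=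
    ((isClosed_almostOrth lo hi t).inter ((isClosed_slab u C).inter (isClosed_slab v C))).measurableSet
  have hs : MeasurableSet {w : Fin 3 → ℝ | ‖w‖ ≤ hi ∧ |w ⬝ᵥ u| ≤ C ∧ |w ⬝ᵥ v| ≤ C} := by
    have h : ∀ u : Fin 3 → ℝ, Continuous fun w : Fin 3 → ℝ => |w ⬝ᵥ u| := by
      intro u; simp only [dotProduct]; fun_prop
    exact ((isClosed_le continuous_norm continuous_const).inter
      ((isClosed_le (h u) continuous_const).inter (isClosed_le (h v) continuous_const))).measurableSet
  rw [Measure.volume_eq_prod, Measure.prod_apply_symm hm, ← lintegral_indicator_const hs]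
  refine lintegral_mono fun w => ?_
  by_cases hw : w ∈ {w : Fin 3 → ℝ | ‖w‖ ≤ hi ∧ |w ⬝ᵥ u| ≤ C ∧ |w ⬝ᵥ v| ≤ C}
  · simp only [Set.indicator_of_mem hw]
    by_cases hl : lo ≤ ‖w‖
    · have h0 : w ≠ 0 := by rw [← norm_pos_iff]; linarith
      refine le_trans (measure_mono ?_) ((volume_slab_le w h0 1 t (by norm_num) ht).trans
        (ENNReal.ofReal_le_ofReal (by
          rw [one_pow, mul_one]; gcongr)))
      intro y hy
      simp only [Set.mem_preimage, Set.mem_inter_iff, almostOrth, Set.mem_ofPred_eq] at hy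
      refine ⟨norm_le_one_of_mem_K1 hy.1.1, ?_⟩
      rw [dotProduct_comm]; exact hy.1.2.2.2
    · have : (fun x : Fin 3 → ℝ => (x, w)) ⁻¹' (almostOrth lo hi t ∩ ({p | |p.2 ⬝ᵥ u| ≤ C} ∩ {p | |p.2 ⬝ᵥ v| ≤ C})) = ∅ := by
        ext y; simp [almostOrth, hl]
      rw [this]; simp
  · simp only [Set.indicator_of_notMem hw]
    have : (fun x : Fin 3 → ℝ => (x, w)) ⁻¹' (almostOrth lo hi t ∩ ({p | |p.2 ⬝ᵥ u| ≤ C} ∩ {p | |p.2 ⬝ᵥ v| ≤ C})) = ∅ := by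
      rw [Set.eq_empty_iff_forall_notMem]
      intro y hy
      simp only [Set.mem_preimage, Set.mem_inter_iff, almostOrth, Set.mem_ofPred_eq] at hy
      exact hw ⟨hy.1.2.2.1, hy.2.1, hy.2.2⟩
    rw [this]; simp

lemma norm_cross_le (a b : Fin 3 → ℝ) : ‖a ⨯₃ b‖ ≤ 2 * ‖a‖ * ‖b‖ := by
  rw [pi_norm_le_iff_of_nonneg (by positivity)]
  have h : ∀ i j, |a i * b j| ≤ ‖a‖ * ‖b‖ := fun i j => by
    rw [abs_mul]; exact mul_le_mul (abs_apply_le_norm a i) (abs_apply_le_norm b j) (abs_nonneg _) (norm_nonneg _)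
  have h2 : ∀ i j k l, |a i * b j - a k * b l| ≤ 2 * ‖a‖ * ‖b‖ := fun i j k l =>
    (abs_sub _ _).trans (by linarith [h i j, h k l])
  intro i
  rw [cross_apply, Real.norm_eq_abs]
  fin_cases i <;> simp <;> exact h2 _ _ _ _

/-! ### Pairs on a common level set at one scale -/

/-- The relations between the scales in the count of pairs `(k, h)` with `‖k‖` about `R` and
`‖h‖` about `H = x ^ 2`: the dual scale is `r`, and `R = r ^ 2 * H`. -/
structure Scales (lam r x R : ℝ) (H : ℕ) : Prop where
  hx : x ^ 2 = H
  hR : R = r ^ 2 * x ^ 2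
  hr : 16 ≤ r
  hlam : 2 ≤ lam * r
  one_le : 1 ≤ x
  hxr : x ≤ r

lemma toR_norm_div {R : ℝ} (hR : 0 < R) (h : Fin 3 → ℤ) : ‖R⁻¹ • toR h‖ = ‖h‖ / R := by
  rw [norm_smul, norm_toR, norm_inv, Real.norm_of_nonneg hR.le]; ring

lemma Scales.bounds {lam r x R : ℝ} {H : ℕ} (S : Scales lam r x R H) (h : Fin 3 → ℤ)
    (hh : ‖h‖ ≤ 2 * H) : 0 < R ∧ (r * x ^ 2)⁻¹ ≤ 1 / 16 ∧ ‖R⁻¹ • toR h‖ ≤ 2 / r ^ 2 ∧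
      2 / r ^ 2 ≤ 1 / 16 ∧ ‖R⁻¹ • toR h‖ ^ 2 ≤ (r * x ^ 2)⁻¹ := by
  obtain ⟨hx, hR, hr, hl, h1, hxr⟩ := S
  have hr0 : 0 < r := by linarith
  have hx0 : 0 < x := by linarith
  have hR0 : 0 < R := by rw [hR]; positivity
  have hx2 : 1 ≤ x ^ 2 := one_le_pow₀ h1
  have hr2 : 36 ≤ r ^ 2 := by nlinarith
  have e3 : ‖R⁻¹ • toR h‖ ≤ 2 / r ^ 2 := by
    rw [toR_norm_div hR0, hR, div_le_div_iff₀ (by positivity) (by positivity)]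
    rw [← hx] at hh
    nlinarith
  have hxr2 : x ^ 2 ≤ r ^ 2 := by gcongr
  refine ⟨hR0, ?_, e3, ?_, ?_⟩
  · have : (16 : ℝ) ≤ r * x ^ 2 := by
      have : r ≤ r * x ^ 2 := by nlinarith
      linarith
    rw [one_div]; exact inv_anti₀ (by norm_num) this
  · rw [div_le_div_iff₀ (by positivity) (by norm_num)]; linarith
  · calc ‖R⁻¹ • toR h‖ ^ 2 ≤ (2 / r ^ 2) ^ 2 := by gcongr
      _ ≤ (r * x ^ 2)⁻¹ := by
        rw [div_pow, inv_eq_one_div, div_le_div_iff₀ (by positivity) (by positivity)]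
        have : r * x ^ 2 ≤ r * r ^ 2 := by gcongr
        have h3 : 0 < r ^ 3 := by positivity
        nlinarith

/-- If `k` and `k + h` lie on the same level set of `q`, then near their rescaled midpoint the
gradient is almost orthogonal to `h`. -/
lemma near_facts {q g A lam M} (D : Data q g A lam M) {r x R : ℝ} {H : ℕ} (S : Scales lam r x R H)
    (k h : Fin 3 → ℤ) (hh : ‖h‖ ≤ 2 * H) (hk : R⁻¹ • toR k ∈ K0)
    (hq : q (R⁻¹ • toR (k + h)) = q (R⁻¹ • toR k)) (y : Fin 3 → ℝ)
    (hy : ‖y - (R⁻¹ • toR k + (1 / 2 : ℝ) • R⁻¹ • toR h)‖ ≤ (r * x ^ 2)⁻¹) :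
    y ∈ K1 ∧ |g y ⬝ᵥ toR h| ≤ 2 * M / r := by
  obtain ⟨hR0, hδ, hη, hη2, hηδ⟩ := S.bounds h hh
  have hr0 : 0 < r := by linarith [S.hr]
  have hx0 : 0 < x := by linarith [S.one_le]
  have hM := D.one_le
  refine ⟨mem_K1_of_near hk ?_, ?_⟩
  · have e : y - R⁻¹ • toR k = (y - (R⁻¹ • toR k + (1 / 2 : ℝ) • R⁻¹ • toR h)) + (1 / 2 : ℝ) • R⁻¹ • toR h := by
      abel
    rw [e]
    refine (norm_add_le _ _).trans ?_
    rw [norm_smul (1 / 2 : ℝ), Real.norm_of_nonneg (by norm_num : (0 : ℝ) ≤ 1 / 2)]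
    linarith
  · have := D.loc_b _ hk y (R⁻¹ • toR h) _ hδ (hη.trans hη2) hηδ hy (by
      rw [← hq, toR_add, smul_add])
    rw [dotProduct_smul, smul_eq_mul, abs_mul, abs_of_pos (inv_pos.2 hR0)] at this
    have h2 : |g y ⬝ᵥ toR h| ≤ R * (M * (r * x ^ 2)⁻¹ * (2 / r ^ 2)) := by
      have h3 : R⁻¹ * |g y ⬝ᵥ toR h| ≤ M * (r * x ^ 2)⁻¹ * (2 / r ^ 2) :=
        this.trans (by gcongr)
      rwa [inv_mul_le_iff₀ hR0] at h3
    refine h2.trans (le_of_eq ?_)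
    rw [S.hR]; field_simp

/-- If translation by `h` keeps both `k` and `k'` on their level sets, and their midpoints rescale to
points near the same `y`, then `k' - k` lies in a slab orthogonal to `w`, for all `w` in the
tube around `A y h`. -/
lemma pair_facts {q g A lam M} (D : Data q g A lam M) {r x R : ℝ} {H : ℕ} (S : Scales lam r x R H)
    (k k' h : Fin 3 → ℤ) (hh : ‖h‖ ≤ 2 * H) (hk : R⁻¹ • toR k ∈ K0) (hk' : R⁻¹ • toR k' ∈ K0)
    (hq : q (R⁻¹ • toR (k + h)) = q (R⁻¹ • toR k))
    (hq' : q (R⁻¹ • toR (k' + h)) = q (R⁻¹ • toR k')) (y w : Fin 3 → ℝ)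
    (hy : ‖y - (R⁻¹ • toR k + (1 / 2 : ℝ) • R⁻¹ • toR h)‖ ≤ (r * x ^ 2)⁻¹)
    (hy' : ‖y - (R⁻¹ • toR k' + (1 / 2 : ℝ) • R⁻¹ • toR h)‖ ≤ (r * x ^ 2)⁻¹)
    (hw : w ∈ tube (A y (toR h)) r⁻¹) :
    k' - k ∈ box ⌊2 * r⌋₊ ∧ |w ⬝ᵥ toR (k' - k)| ≤ 4 * M + 6 := by
  obtain ⟨hR0, hδ, hη, hη2, hηδ⟩ := S.bounds h hh
  have hr0 : 0 < r := by linarith [S.hr]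
  have hx0 : 0 < x := by linarith [S.one_le]
  have hM := D.one_le
  have hd : R⁻¹ • toR (k' - k) = R⁻¹ • toR k' - R⁻¹ • toR k := by rw [toR_sub, smul_sub]
  have hn : ‖k' - k‖ ≤ 2 * r := by
    have e : R⁻¹ • toR (k' - k) = (y - (R⁻¹ • toR k + (1 / 2 : ℝ) • R⁻¹ • toR h)) -
        (y - (R⁻¹ • toR k' + (1 / 2 : ℝ) • R⁻¹ • toR h)) := by rw [hd]; abel
    have h1 : ‖R⁻¹ • toR (k' - k)‖ ≤ 2 * (r * x ^ 2)⁻¹ := by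
      rw [e]; refine (norm_sub_le _ _).trans ?_; linarith
    rw [toR_norm_div hR0, div_le_iff₀ hR0] at h1
    refine h1.trans (le_of_eq ?_)
    rw [S.hR]; field_simp
  refine ⟨?_, ?_⟩
  · rw [mem_box_iff_norm]
    obtain ⟨i, hi⟩ := exists_norm_eq_abs (k' - k)
    rw [hi] at hn ⊢
    have h1 : (((k' - k) i).natAbs : ℝ) ≤ 2 * r := by rw [Nat.cast_natAbs]; exact_mod_cast hn
    have h2 := Nat.le_floor h1
    have h3 : (((k' - k) i).natAbs : ℝ) ≤ (⌊2 * r⌋₊ : ℝ) := by exact_mod_cast h2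
    rw [Nat.cast_natAbs] at h3
    exact_mod_cast h3
  · have h1 := D.loc_c _ hk _ hk' y (R⁻¹ • toR h) _ hδ (hη.trans hη2) hηδ hy hy' (by
      rw [← hq, toR_add, smul_add]) (by rw [← hq', toR_add, smul_add])
    rw [← hd, map_smul, smul_dotProduct, dotProduct_smul, smul_eq_mul, smul_eq_mul, abs_mul, abs_mul,
      abs_of_pos (inv_pos.2 hR0)] at h1
    have h2 : |A y (toR h) ⬝ᵥ toR (k' - k)| ≤ 2 * M := by
      have h3 : R⁻¹ * (R⁻¹ * |A y (toR h) ⬝ᵥ toR (k' - k)|) ≤ M * (r * x ^ 2)⁻¹ ^ 2 * (2 / r ^ 2) :=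
        h1.trans (by gcongr)
      rw [inv_mul_le_iff₀ hR0, inv_mul_le_iff₀ hR0] at h3
      refine h3.trans (le_of_eq ?_)
      rw [S.hR]; field_simp
    obtain ⟨s, ⟨hs1, hs2⟩, hs⟩ := hw
    have e : w ⬝ᵥ toR (k' - k) = s * (A y (toR h) ⬝ᵥ toR (k' - k)) +
        (w - s • A y (toR h)) ⬝ᵥ toR (k' - k) := by
      rw [sub_dotProduct, smul_dotProduct, smul_eq_mul]; ring
    rw [e]
    refine (abs_add_le _ _).trans ?_
    have h4 := abs_dot_le (w - s • A y (toR h)) (toR (k' - k))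
    rw [norm_toR] at h4
    have h5 : 3 * ‖w - s • A y (toR h)‖ * ‖k' - k‖ ≤ 3 * r⁻¹ * (2 * r) := by gcongr
    have h6 : 3 * r⁻¹ * (2 * r) = 6 := by field_simp; norm_num
    have h7 : |s * (A y (toR h) ⬝ᵥ toR (k' - k))| ≤ 2 * (2 * M) := by
      rw [abs_mul, abs_of_nonneg (by linarith)]; gcongr
    linarith

/-- The tube bundle over the part of `K1` where the gradient is almost orthogonal to `h`. -/
def tangentTube (g : (Fin 3 → ℝ) → (Fin 3 → ℝ)) (A : (Fin 3 → ℝ) → (Fin 3 → ℝ) →L[ℝ] (Fin 3 → ℝ))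
    (M r : ℝ) (h : Fin 3 → ℤ) : Set ((Fin 3 → ℝ) × (Fin 3 → ℝ)) :=
  tubeBundle A {y | y ∈ K1 ∧ |g y ⬝ᵥ toR h| ≤ 2 * M / r} (toR h) r⁻¹

lemma tangentTube_subset {q g A lam M} (D : Data q g A lam M) {r x R : ℝ} {H : ℕ}
    (S : Scales lam r x R H) (h : Fin 3 → ℤ) (hh1 : (H : ℝ) ≤ ‖h‖) (hh : ‖h‖ ≤ 2 * H) :
    tangentTube g A M r h ⊆ almostOrth (lam * H / 2) (5 * M * H) (7 * M / r) := by
  rintro ⟨y, w⟩ ⟨⟨hy, hg⟩, s, ⟨hs1, hs2⟩, hs⟩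
  have hr0 : 0 < r := by linarith [S.hr]
  have hM := D.one_le
  have hl := D.lam_pos
  have hH : (1 : ℝ) ≤ H := by rw [← S.hx]; exact one_le_pow₀ S.one_le
  have hri : r⁻¹ ≤ lam / 2 := by
    rw [inv_le_iff_one_le_mul₀ hr0]; linarith [S.hlam]
  have hri1 : r⁻¹ ≤ 1 := inv_le_one_of_one_le₀ (by linarith [S.hr])
  simp only at hy hg hs
  have hlow := D.low y hy (toR h)
  have hup := D.norm_A y hy (toR h)
  rw [norm_toR] at hlow hup
  have hsA : ‖s • A y (toR h)‖ = s * ‖A y (toR h)‖ := by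
    rw [norm_smul, Real.norm_of_nonneg (by linarith)]
  have htri1 := norm_sub_norm_le (s • A y (toR h)) w
  have htri2 := norm_sub_norm_le w (s • A y (toR h))
  rw [norm_sub_rev] at htri1
  have h1 : lam * H ≤ lam * ‖h‖ := by gcongr
  have h2 : M * ‖h‖ ≤ M * (2 * H) := by gcongr
  have h3 : ‖A y (toR h)‖ ≤ s * ‖A y (toR h)‖ := le_mul_of_one_le_left (norm_nonneg _) hs1
  have h4 : s * ‖A y (toR h)‖ ≤ 2 * (M * (2 * H)) := by gcongr; linarith
  refine ⟨hy, ?_, ?_, ?_⟩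
  · have : lam / 2 ≤ lam / 2 * H := by nlinarith
    simp only; linarith
  · have : 1 ≤ M * H := by nlinarith
    simp only; linarith
  · simp only
    have e : w ⬝ᵥ y = s * (A y (toR h) ⬝ᵥ y) + (w - s • A y (toR h)) ⬝ᵥ y := by
      rw [sub_dotProduct, smul_dotProduct, smul_eq_mul]; ring
    rw [e, D.euler y hy]
    refine (abs_add_le _ _).trans ?_
    have h5 := abs_dot_le (w - s • A y (toR h)) y
    have h6 : 3 * ‖w - s • A y (toR h)‖ * ‖y‖ ≤ 3 * r⁻¹ * 1 := by
      gcongr; exact norm_le_one_of_mem_K1 hy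
    have h7 : |s * (g y ⬝ᵥ toR h)| ≤ 2 * (2 * M / r) := by
      rw [abs_mul, abs_of_nonneg (by linarith)]; gcongr
    have h8 : 2 * (2 * M / r) + 3 * r⁻¹ * 1 ≤ 7 * M / r := by
      have : 2 * (2 * M / r) + 3 * r⁻¹ * 1 = (4 * M + 3) / r := by field_simp; ring
      rw [this]; gcongr; linarith
    linarith

/-- Intersecting tubes have almost parallel core vectors `A y h`, `A y h'`, hence almost parallel
`h`, `h'`. -/
lemma tangentTube_inter {q g A lam M} (D : Data q g A lam M) {r x R : ℝ} {H : ℕ}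
    (S : Scales lam r x R H) (h h' : Fin 3 → ℤ) (hh : ‖h'‖ ≤ 2 * H)
    (hne : (tangentTube g A M r h ∩ tangentTube g A M r h').Nonempty) :
    ‖h ⨯₃ h'‖ ≤ 8 * H / (lam * r) := by
  obtain ⟨⟨y, w⟩, ⟨⟨hy, hg⟩, s, ⟨hs1, hs2⟩, hs⟩, ⟨-, s', ⟨hs1', hs2'⟩, hs'⟩⟩ := hne
  simp only at hy hg hs hs'
  have hr0 : 0 < r := by linarith [S.hr]
  have hl := D.lam_pos
  have h1 : ‖A y (s • toR h - s' • toR h')‖ ≤ 2 * r⁻¹ := by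
    have : A y (s • toR h - s' • toR h') = (w - s' • A y (toR h')) - (w - s • A y (toR h)) := by
      rw [map_sub, map_smul, map_smul]; abel
    rw [this]; refine (norm_sub_le _ _).trans ?_; linarith
  have h2 : ‖s • toR h - s' • toR h'‖ ≤ 2 / (lam * r) := by
    have := (D.low y hy _).trans h1
    rw [le_div_iff₀ (by positivity)]
    calc _ = (lam * ‖s • toR h - s' • toR h'‖) * r := by ring
      _ ≤ (2 * r⁻¹) * r := by gcongr
      _ = 2 := by field_simp
  have h3 : (s • toR h - s' • toR h') ⨯₃ toR h' = s • (toR h ⨯₃ toR h') := by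
    rw [map_sub, map_smul, map_smul, LinearMap.sub_apply, LinearMap.smul_apply, LinearMap.smul_apply,
      cross_self]; simp
  have h4 := norm_cross_le (s • toR h - s' • toR h') (toR h')
  rw [h3, norm_smul, Real.norm_of_nonneg (by linarith), ← toR_cross, norm_toR, norm_toR] at h4
  have h5 : ‖h ⨯₃ h'‖ ≤ s * ‖h ⨯₃ h'‖ := le_mul_of_one_le_left (norm_nonneg _) hs1
  refine (h5.trans h4).trans ?_
  calc 2 * ‖s • toR h - s' • toR h'‖ * ‖h'‖ ≤ 2 * (2 / (lam * r)) * (2 * H) := by gcongr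
    _ = _ := by ring

lemma volume_tangentTube_le {q g A lam M} (D : Data q g A lam M) {r x R : ℝ} {H : ℕ}
    (S : Scales lam r x R H) (h : Fin 3 → ℤ) (hh1 : (H : ℝ) ≤ ‖h‖) (hh : ‖h‖ ≤ 2 * H) :
    MeasurableSet (tangentTube g A M r h) ∧
    volume (tangentTube g A M r h) ≤ ENNReal.ofReal (3072 * M ^ 4 / (lam * r ^ 3)) := by
  have hr0 : 0 < r := by linarith [S.hr]
  have hM := D.one_le
  have hl := D.lam_pos
  have hH : (1 : ℝ) ≤ H := by rw [← S.hx]; exact one_le_pow₀ S.one_le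
  have hne : toR h ≠ 0 := by rw [← norm_pos_iff, norm_toR]; linarith
  obtain ⟨hc, hv⟩ := volume_tangent_le D (toR h) hne (2 * M / r) (by positivity)
  have hA := D.contA.mono (fun y (hy : y ∈ {y | y ∈ K1 ∧ |g y ⬝ᵥ toR h| ≤ 2 * M / r}) => hy.1)
  refine ⟨(isCompact_tubeBundle hc hA _ _).measurableSet, ?_⟩
  have hrl : r⁻¹ ≤ lam * H := by
    rw [inv_le_iff_one_le_mul₀ hr0]; nlinarith [S.hlam]
  refine (volume_tubeBundle_bounds hc hA (toR h) r⁻¹ (lam * H) (M * (2 * H)) (by positivity) hrl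
    (fun y hy => ?_) (fun y hy => ?_)).2.trans ?_
  · refine le_trans ?_ (D.low y hy.1 _)
    rw [norm_toR]; gcongr
  · refine (D.norm_A y hy.1 _).trans ?_
    rw [norm_toR]; gcongr
  · refine (mul_le_mul_right hv _).trans ?_
    rw [← ENNReal.ofReal_mul (by positivity)]
    apply ENNReal.ofReal_le_ofReal
    rw [norm_toR]
    calc 96 * (M * (2 * H)) * r⁻¹ ^ 2 * (8 * M ^ 2 * (2 * M / r) / (lam * ‖h‖))
        ≤ 96 * (M * (2 * H)) * r⁻¹ ^ 2 * (8 * M ^ 2 * (2 * M / r) / (lam * H)) := by gcongr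
      _ = _ := by field_simp; norm_num

lemma sum_tangentTube_le {q g A lam M} (D : Data q g A lam M) {r x R : ℝ} {H : ℕ}
    (S : Scales lam r x R H) :
    ∑ h ∈ (box (2 * H)).filter (fun h => (H : ℝ) ≤ ‖h‖),
      ∑ h' ∈ (box (2 * H)).filter (fun h => (H : ℝ) ≤ ‖h‖),
        volume (tangentTube g A M r h ∩ tangentTube g A M r h') ≤
    ENNReal.ofReal (60000 * (64 / lam ^ 2) ^ 3 * (H : ℝ) ^ 3 * (3072 * M ^ 4 / (lam * r ^ 3))) := by
  classical
  have hr0 : 0 < r := by linarith [S.hr]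
  have hM := D.one_le
  have hl := D.lam_pos
  have hl1 := D.lam_le
  have hx0 : 0 < x := by linarith [S.one_le]
  have hH : (1 : ℝ) ≤ H := by rw [← S.hx]; exact one_le_pow₀ S.one_le
  have hHn : 1 ≤ H := by exact_mod_cast hH
  have hcard := card_close_pairs_le H hHn (8 * H / (lam * r)) (64 / lam ^ 2) (by positivity) (by
    rw [le_div_iff₀ (by positivity)]; nlinarith) (by
    rw [← S.hx, div_pow, div_mul_eq_mul_div, div_le_div_iff₀ (by positivity) (by positivity)]
    have : x ^ 2 ≤ r ^ 2 := by gcongr; exact S.hxr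
    have h2 : 0 ≤ x ^ 2 * lam ^ 2 := by positivity
    nlinarith)
  rw [← Finset.sum_product']
  set B := ENNReal.ofReal (3072 * M ^ 4 / (lam * r ^ 3)) with hB
  have hI : ∀ h, h ∈ (box (2 * H)).filter (fun h => (H : ℝ) ≤ ‖h‖) ↔ ‖h‖ ≤ 2 * H ∧ (H : ℝ) ≤ ‖h‖ := by
    intro h; rw [Finset.mem_filter, mem_box_iff_norm]; push_cast; rfl
  calc _ ≤ ∑ p ∈ (box (2 * H)).filter (fun h => (H : ℝ) ≤ ‖h‖) ×ˢ (box (2 * H)).filter (fun h => (H : ℝ) ≤ ‖h‖),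
        (if ‖p.1 ⨯₃ p.2‖ ≤ 8 * H / (lam * r) then B else 0) := by
        refine Finset.sum_le_sum fun p hp => ?_
        rw [Finset.mem_product, hI, hI] at hp
        by_cases hne : (tangentTube g A M r p.1 ∩ tangentTube g A M r p.2).Nonempty
        · rw [if_pos (tangentTube_inter D S p.1 p.2 hp.2.1 hne)]
          exact (measure_mono Set.inter_subset_left).trans
            (volume_tangentTube_le D S p.1 hp.1.2 hp.1.1).2
        · rw [Set.not_nonempty_iff_eq_empty] at hne
          rw [hne]; simp
    _ = (((box (2 * H) ×ˢ box (2 * H)).filter fun q =>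
      (H : ℝ) ≤ ‖q.1‖ ∧ (H : ℝ) ≤ ‖q.2‖ ∧ ‖q.1 ⨯₃ q.2‖ ≤ 8 * H / (lam * r)).card : ℝ≥0∞) * B := by
        rw [← Finset.sum_filter, Finset.sum_const, nsmul_eq_mul]
        congr 3
        ext p
        simp only [Finset.mem_filter, Finset.mem_product]
        tauto
    _ ≤ _ := by
        rw [← ENNReal.ofReal_natCast, hB, ← ENNReal.ofReal_mul (by positivity)]
        apply ENNReal.ofReal_le_ofReal
        gcongr

lemma sum_slab_le {q g A lam M} (D : Data q g A lam M) {r x R : ℝ} {H : ℕ}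
    (S : Scales lam r x R H) :
    ∑ u ∈ box ⌊2 * r⌋₊, ∑ v ∈ box ⌊2 * r⌋₊,
      volume (almostOrth (lam * H / 2) (5 * M * H) (7 * M / r) ∩
        ({p | |p.2 ⬝ᵥ toR u| ≤ 4 * M + 6} ∩ {p | |p.2 ⬝ᵥ toR v| ≤ 4 * M + 6})) ≤
    ENNReal.ofReal (8 * (7 * M / r) / (lam * H / 2) *
      ((8 * (5 * M) ^ 2 + 2912 * (4 * M + 6) * (5 * M) + 151632 * (4 * M + 6) ^ 2) * (5 * M * H) *
        (2 * r) ^ 4)) := by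
  have hr0 : 0 < r := by linarith [S.hr]
  have hM := D.one_le
  have hl := D.lam_pos
  have hH : (1 : ℝ) ≤ H := by rw [← S.hx]; exact one_le_pow₀ S.one_le
  have hfl : (⌊2 * r⌋₊ : ℝ) ≤ 2 * r := Nat.floor_le (by positivity)
  have hfl2 : r ≤ (⌊2 * r⌋₊ : ℝ) := by
    have := Nat.lt_floor_add_one (2 * r)
    linarith [S.hr]
  calc _ ≤ ∑ u ∈ box ⌊2 * r⌋₊, ∑ v ∈ box ⌊2 * r⌋₊, ENNReal.ofReal (8 * (7 * M / r) / (lam * H / 2)) *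
        volume {w : Fin 3 → ℝ | ‖w‖ ≤ 5 * M * H ∧ |w ⬝ᵥ toR u| ≤ 4 * M + 6 ∧ |w ⬝ᵥ toR v| ≤ 4 * M + 6} :=
        Finset.sum_le_sum fun u _ => Finset.sum_le_sum fun v _ =>
          volume_almostOrth_le _ _ _ _ (by positivity) (by positivity) _ _
    _ = ENNReal.ofReal (8 * (7 * M / r) / (lam * H / 2)) * ∑ u ∈ box ⌊2 * r⌋₊, ∑ v ∈ box ⌊2 * r⌋₊,
        volume {w : Fin 3 → ℝ | ‖w‖ ≤ 5 * M * H ∧ |w ⬝ᵥ toR u| ≤ 4 * M + 6 ∧ |w ⬝ᵥ toR v| ≤ 4 * M + 6} := by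
        simp only [Finset.mul_sum]
    _ ≤ _ := by
        refine (mul_le_mul_right (sum_volume_slabs_le ⌊2 * r⌋₊ (5 * M * H) (4 * M + 6) (5 * M)
          (by positivity) (by positivity) (by positivity) ?_) _).trans ?_
        · rw [← S.hx]
          have : x ^ 2 ≤ (⌊2 * r⌋₊ : ℝ) ^ 2 := by
            have := S.hxr
            have := S.one_le
            gcongr
            linarith
          gcongr
        · rw [← ENNReal.ofReal_mul (by positivity)]
          apply ENNReal.ofReal_le_ofReal
          gcongr

/-- The count of pairs `(k, h)` on one dyadic scale of `h`. Each pair carries a ball around its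
midpoint times a tube around `A y h`. A point `(y, w)` is covered at most
`#{h : (y, w) in the tube bundle of h} * #{u : |w · u| ≤ C}` times, and Cauchy-Schwarz reduces
this to the two second moments `sum_tangentTube_le` and `sum_slab_le`, balanced with the weight
`(r / x) ^ 3`. -/
theorem card_pairs_scales_le {q g A lam M} (D : Data q g A lam M) :
    ∃ C : ℝ, 0 ≤ C ∧ ∀ (r x R : ℝ) (H : ℕ), Scales lam r x R H →
      ∀ Z : Finset ((Fin 3 → ℤ) × (Fin 3 → ℤ)),
        (∀ z ∈ Z, (H : ℝ) ≤ ‖z.2‖ ∧ ‖z.2‖ ≤ 2 * H ∧ R⁻¹ • toR z.1 ∈ K0 ∧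
          q (R⁻¹ • toR (z.1 + z.2)) = q (R⁻¹ • toR z.1)) →
        (Z.card : ℝ) ≤ C * (r ^ 5 * x ^ 7) := by
  classical
  refine ⟨(60000 * (64 / lam ^ 2) ^ 3 * (3072 * M ^ 4 / lam) + 8 * (7 * M) / (lam / 2) *
      ((8 * (5 * M) ^ 2 + 2912 * (4 * M + 6) * (5 * M) + 151632 * (4 * M + 6) ^ 2) * (5 * M) *
        2 ^ 4)) / (8 * lam), ?_, ?_⟩
  · have := D.lam_pos
    have := D.one_le
    positivity
  intro r x R H S Z hZ
  have hlam := D.lam_pos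
  have hM := D.one_le
  have hr := S.hr
  have hx1 := S.one_le
  have hx2 := S.hx
  have hlr := S.hlam
  have hr0 : 0 < r := by linarith
  have hx0 : 0 < x := by linarith
  have hH : (1 : ℝ) ≤ H := by rw [← hx2]; exact one_le_pow₀ hx1
  set W : (Fin 3 → ℤ) × (Fin 3 → ℤ) → Set ((Fin 3 → ℝ) × (Fin 3 → ℝ)) := fun z =>
    tubeBundle A (Metric.closedBall (R⁻¹ • toR z.1 + (1 / 2 : ℝ) • R⁻¹ • toR z.2) (r * x ^ 2)⁻¹)
      (toR z.2) r⁻¹ with hWdef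
  have hball : ∀ z ∈ Z, Metric.closedBall (R⁻¹ • toR z.1 + (1 / 2 : ℝ) • R⁻¹ • toR z.2) (r * x ^ 2)⁻¹ ⊆ K1 := by
    intro z hz y hy
    obtain ⟨h1, h2, h3, h4⟩ := hZ z hz
    exact (near_facts D S z.1 z.2 h2 h3 h4 y (by simpa [dist_eq_norm] using hy)).1
  have hWm : ∀ z ∈ Z, MeasurableSet (W z) := fun z hz =>
    (isCompact_tubeBundle (isCompact_closedBall _ _) (D.contA.mono (hball z hz)) _ _).measurableSet
  have hWvol : ∀ z ∈ Z, ENNReal.ofReal (8 * lam / (r ^ 5 * x ^ 4)) ≤ volume (W z) := by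
    intro z hz
    obtain ⟨h1, h2, h3, h4⟩ := hZ z hz
    have hlo : ∀ y ∈ K1, lam * H ≤ ‖A y (toR z.2)‖ := fun y hy => by
      refine le_trans ?_ (D.low y hy _)
      rw [norm_toR]; gcongr
    have hhi : ∀ y ∈ K1, ‖A y (toR z.2)‖ ≤ M * ‖toR z.2‖ := fun y hy => D.norm_A y hy _
    have hrl : r⁻¹ ≤ lam * H := by
      rw [inv_le_iff_one_le_mul₀ hr0]; nlinarith
    refine le_trans ?_ (volume_tubeBundle_bounds (isCompact_closedBall _ _) (D.contA.mono (hball z hz))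
      (toR z.2) r⁻¹ (lam * H) (M * ‖toR z.2‖) (by positivity) hrl (fun y hy => hlo y (hball z hz hy))
      (fun y hy => hhi y (hball z hz hy))).1
    rw [Real.volume_pi_closedBall _ (by positivity), ← ENNReal.ofReal_mul (by positivity)]
    apply ENNReal.ofReal_le_ofReal
    apply le_of_eq
    rw [← hx2]
    simp only [Fintype.card_fin]
    field_simp
    norm_num
  set I := (box (2 * H)).filter (fun h => (H : ℝ) ≤ ‖h‖) with hI
  have hIm : ∀ h, h ∈ I ↔ ‖h‖ ≤ 2 * H ∧ (H : ℝ) ≤ ‖h‖ := by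
    intro h; rw [hI, Finset.mem_filter, mem_box_iff_norm]; push_cast; rfl
  have key := measure_incidence_le volume Z I (box ⌊2 * r⌋₊) W (tangentTube g A M r)
    (fun u => {p | |p.2 ⬝ᵥ toR u| ≤ 4 * M + 6}) (almostOrth (lam * H / 2) (5 * M * H) (7 * M / r))
    hWm (fun h hh => (volume_tangentTube_le D S h ((hIm h).1 hh).2 ((hIm h).1 hh).1).1)
    (fun u _ => (isClosed_slab _ _).measurableSet) (isClosed_almostOrth _ _ _).measurableSet
    (fun h hh => tangentTube_subset D S h ((hIm h).1 hh).2 ((hIm h).1 hh).1) (by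
      rintro ⟨y, w⟩
      have hsum : ∀ {ι : Type} (s : Finset ι) (F : ι → Set ((Fin 3 → ℝ) × (Fin 3 → ℝ))),
          ∑ i ∈ s, (F i).indicator (1 : (Fin 3 → ℝ) × (Fin 3 → ℝ) → ℝ) (y, w) =
            ((s.filter fun i => (y, w) ∈ F i).card : ℝ) := by
        intro ι s F
        rw [Finset.card_filter]; push_cast
        refine Finset.sum_congr rfl fun i _ => ?_
        by_cases h : (y, w) ∈ F i <;> simp [h]
      rw [hsum, hsum, hsum, mul_comm]
      have hb : ∀ z ∈ Z, (y, w) ∈ W z → ‖y - (R⁻¹ • toR z.1 + (1 / 2 : ℝ) • R⁻¹ • toR z.2)‖ ≤ (r * x ^ 2)⁻¹ ∧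
          w ∈ tube (A y (toR z.2)) r⁻¹ := fun z _ hz => ⟨by simpa [dist_eq_norm] using hz.1, hz.2⟩
      have := Finset.card_le_mul_card_image_of_maps_to (s := Z.filter fun z => (y, w) ∈ W z)
        (t := I.filter fun h => (y, w) ∈ tangentTube g A M r h) (f := Prod.snd) (by
          intro z hz
          obtain ⟨hz1, hz2⟩ := Finset.mem_filter.1 hz
          obtain ⟨h1, h2, h3, h4⟩ := hZ z hz1
          obtain ⟨b1, b2⟩ := hb z hz1 hz2
          exact Finset.mem_filter.2 ⟨(hIm _).2 ⟨h2, h1⟩,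
            near_facts D S z.1 z.2 h2 h3 h4 y b1, b2⟩)
        ((box ⌊2 * r⌋₊).filter fun u => (y, w) ∈ {p : (Fin 3 → ℝ) × (Fin 3 → ℝ) | |p.2 ⬝ᵥ toR u| ≤ 4 * M + 6}).card (by
          intro h hh
          rcases Finset.eq_empty_or_nonempty ((Z.filter fun z => (y, w) ∈ W z).filter fun z => z.2 = h) with he | ⟨z0, hz0⟩
          · rw [he]; simp
          · refine Finset.card_le_card_of_injOn (fun z => z.1 - z0.1) ?_ ?_
            · intro z hz
              simp only [Finset.mem_coe, Finset.mem_filter] at hz hz0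
              obtain ⟨⟨hz1, hz2⟩, rfl⟩ := hz
              obtain ⟨⟨hz01, hz02⟩, hz03⟩ := hz0
              obtain ⟨h1, h2, h3, h4⟩ := hZ z hz1
              obtain ⟨h1', h2', h3', h4'⟩ := hZ z0 hz01
              obtain ⟨b1, b2⟩ := hb z hz1 hz2
              obtain ⟨b1', b2'⟩ := hb z0 hz01 hz02
              rw [hz03] at h4' b1'
              have := pair_facts D S z0.1 z.1 z.2 h2 h3' h3 h4' h4 y w b1' b1 b2
              simp only [Finset.coe_filter, Set.mem_ofPred_eq]
              exact this
            · intro z hz z' hz' heq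
              simp only [Finset.mem_coe, Finset.mem_filter] at hz hz'
              have : z.1 = z'.1 := by simpa using heq
              exact Prod.ext this (hz.2.trans hz'.2.symm))
      exact_mod_cast this) ((r / x) ^ 3) (by positivity)
  have k1 := Finset.sum_le_sum hWvol
  rw [Finset.sum_const, nsmul_eq_mul] at k1
  have k2 := (k1.trans key).trans (add_le_add (mul_le_mul_right (sum_tangentTube_le D S) _)
    (mul_le_mul_right (sum_slab_le D S) _))
  rw [← ENNReal.ofReal_mul (by positivity), ← ENNReal.ofReal_mul (by positivity),
    ← ENNReal.ofReal_add (by positivity) (by positivity), ← ENNReal.ofReal_natCast,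
    ← ENNReal.ofReal_mul (by positivity), ENNReal.ofReal_le_ofReal_iff (by positivity)] at k2
  rw [← hx2] at k2
  rw [div_mul_eq_mul_div, le_div_iff₀ (by positivity)]
  have e : (Z.card : ℝ) * (8 * lam) = (Z.card : ℝ) * (8 * lam / (r ^ 5 * x ^ 4)) * (r ^ 5 * x ^ 4) := by
    field_simp
  rw [e]
  refine (mul_le_mul_of_nonneg_right k2 (by positivity)).trans (le_of_eq ?_)
  field_simp

/-! ### Counting values -/

/-- `card_pairs_scales_le` with `R = X ^ 2`, `x = √H` and `r = X / √H`. -/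
lemma card_pairs_dyadic_le {q g A lam M} (D : Data q g A lam M) :
    ∃ C X₀ : ℝ, 0 ≤ C ∧ ∀ X : ℝ, X₀ ≤ X → ∀ H : ℕ, 1 ≤ H → (H : ℝ) ≤ X →
      ∀ Z : Finset ((Fin 3 → ℤ) × (Fin 3 → ℤ)),
        (∀ z ∈ Z, (H : ℝ) ≤ ‖z.2‖ ∧ ‖z.2‖ ≤ 2 * H ∧ (X ^ 2)⁻¹ • toR z.1 ∈ K0 ∧
          q ((X ^ 2)⁻¹ • toR (z.1 + z.2)) = q ((X ^ 2)⁻¹ • toR z.1)) →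
        (Z.card : ℝ) ≤ C * (X ^ 5 * H) := by
  obtain ⟨C, hC, h⟩ := card_pairs_scales_le D
  have hl := D.lam_pos
  refine ⟨C, max 256 (4 / lam ^ 2), hC, fun X hX H hH hHX Z hZ => ?_⟩
  have hX1 : 256 ≤ X := (le_max_left _ _).trans hX
  have hX2 : 4 / lam ^ 2 ≤ X := (le_max_right _ _).trans hX
  have hHr : (1 : ℝ) ≤ H := by exact_mod_cast hH
  set x := √(H : ℝ) with hx
  have hx2 : x ^ 2 = H := Real.sq_sqrt (by positivity)
  have hx1 : 1 ≤ x := Real.one_le_sqrt.2 hHr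
  have hx0 : 0 < x := by linarith
  have hX0 : 0 < X := by linarith
  have hr2 : X ≤ (X / x) ^ 2 := by
    rw [div_pow, le_div_iff₀ (by positivity), hx2]; nlinarith
  have hr0 : 0 < X / x := by positivity
  have S : Scales lam (X / x) x (X ^ 2) H := by
    refine ⟨hx2, by field_simp, ?_, ?_, hx1, ?_⟩
    · nlinarith
    · rw [div_le_iff₀ (by positivity)] at hX2
      have : 4 ≤ (lam * (X / x)) ^ 2 := by rw [mul_pow]; nlinarith
      have h3 : 0 < lam * (X / x) := by positivity
      nlinarith
    · rw [le_div_iff₀ hx0]; nlinarith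
  refine (h _ _ _ _ S Z hZ).trans (le_of_eq ?_)
  rw [← hx2]; field_simp

/-- Summing the dyadic bound: with `R = X ^ 2`, there are `O(R ^ 3)` pairs of lattice points of size
about `R` on a common level set at distance at most `√R`. -/
lemma card_level_pairs_le {q g A lam M} (D : Data q g A lam M) :
    ∃ C X₀ : ℝ, 0 ≤ C ∧ ∀ X : ℝ, X₀ ≤ X →
      ∀ Z : Finset ((Fin 3 → ℤ) × (Fin 3 → ℤ)),
        (∀ z ∈ Z, z.2 ≠ 0 ∧ ‖z.2‖ ≤ X ∧ (X ^ 2)⁻¹ • toR z.1 ∈ K0 ∧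
          q ((X ^ 2)⁻¹ • toR (z.1 + z.2)) = q ((X ^ 2)⁻¹ • toR z.1)) →
        (Z.card : ℝ) ≤ C * X ^ 6 := by
  classical
  obtain ⟨C, X₀, hC, h⟩ := card_pairs_dyadic_le D
  refine ⟨2 * C, max 1 X₀, by positivity, fun X hX Z hZ => ?_⟩
  have hX1 : 1 ≤ X := (le_max_left _ _).trans hX
  have hX2 : X₀ ≤ X := (le_max_right _ _).trans hX
  have key : ∀ n : ℕ, (2 : ℝ) ^ n ≤ 2 * X →
      ((Z.filter fun z => ‖z.2‖ < 2 ^ n).card : ℝ) ≤ C * (X ^ 5 * 2 ^ n) := by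
    intro n
    induction n with
    | zero =>
      intro _
      have : Z.filter (fun z => ‖z.2‖ < 2 ^ 0) = ∅ := by
        refine Finset.filter_eq_empty_iff.2 fun z hz => ?_
        have := one_le_norm (hZ z hz).1
        simpa using this
      rw [this]; simp; positivity
    | succ n ih =>
      intro hn
      rw [pow_succ] at hn
      have hn' : (2 : ℝ) ^ n ≤ X := by linarith
      have h1 := ih (by linarith)
      have h2 := h X hX2 (2 ^ n) Nat.one_le_two_pow (by exact_mod_cast hn')
        (Z.filter fun z => (2 : ℝ) ^ n ≤ ‖z.2‖ ∧ ‖z.2‖ ≤ 2 * 2 ^ n) (by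
          intro z hz
          obtain ⟨hz, h1, h2⟩ := Finset.mem_filter.1 hz
          exact ⟨by exact_mod_cast h1, by exact_mod_cast h2, (hZ z hz).2.2⟩)
      have hsub : Z.filter (fun z => ‖z.2‖ < 2 ^ (n + 1)) ⊆ (Z.filter fun z => ‖z.2‖ < 2 ^ n) ∪
          (Z.filter fun z => (2 : ℝ) ^ n ≤ ‖z.2‖ ∧ ‖z.2‖ ≤ 2 * 2 ^ n) := by
        intro z hz
        simp only [Finset.mem_union, Finset.mem_filter] at hz ⊢
        rw [pow_succ] at hz
        rcases lt_or_ge ‖z.2‖ (2 ^ n) with h | h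
        · exact Or.inl ⟨hz.1, h⟩
        · exact Or.inr ⟨hz.1, h, by linarith⟩
      have h3 : ((Z.filter (fun z => ‖z.2‖ < 2 ^ (n + 1))).card : ℝ) ≤
          (Z.filter fun z => ‖z.2‖ < 2 ^ n).card +
          (Z.filter fun z => (2 : ℝ) ^ n ≤ ‖z.2‖ ∧ ‖z.2‖ ≤ 2 * 2 ^ n).card := by
        exact_mod_cast (Finset.card_le_card hsub).trans (Finset.card_union_le _ _)
      push_cast at h2
      have h4 : C * (X ^ 5 * 2 ^ (n + 1)) = C * (X ^ 5 * 2 ^ n) + C * (X ^ 5 * 2 ^ n) := by ring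
      linarith
  obtain ⟨n, hn1, hn2⟩ := exists_nat_pow_near hX1 (one_lt_two (α := ℝ))
  have h1 := key (n + 1) (by rw [pow_succ]; linarith)
  have h2 : Z.filter (fun z => ‖z.2‖ < 2 ^ (n + 1)) = Z :=
    Finset.filter_true_of_mem fun z hz => lt_of_le_of_lt (hZ z hz).2.1 hn2
  rw [h2] at h1
  refine h1.trans ?_
  have : C * (X ^ 5 * 2 ^ (n + 1)) ≤ C * (X ^ 5 * (2 * X)) := by
    gcongr; rw [pow_succ]; linarith
  refine this.trans (le_of_eq ?_)
  ring

/-- The integer points of `R • K0`. -/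
def lattice (R : ℝ) : Finset (Fin 3 → ℤ) :=
  Fintype.piFinset fun i => Finset.Icc ⌈R * (![-(2 / 5), -(2 / 5), 1 / 2] : Fin 3 → ℝ) i⌉
    ⌊R * (![2 / 5, 2 / 5, 3 / 5] : Fin 3 → ℝ) i⌋

lemma mem_lattice {R : ℝ} (hR : 0 < R) {k : Fin 3 → ℤ} : k ∈ lattice R ↔ R⁻¹ • toR k ∈ K0 := by
  simp only [lattice, Fintype.mem_piFinset, Finset.mem_Icc, Int.ceil_le, Int.le_floor, K0, Set.mem_Icc,
    Pi.le_def, Pi.smul_apply, smul_eq_mul, toR, ← forall_and]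
  refine forall_congr' fun i => ?_
  rw [le_inv_mul_iff₀ hR, inv_mul_le_iff₀ hR]

lemma card_Icc_bounds (a b : ℝ) (hab : a ≤ b) : b - a - 1 ≤ ((Finset.Icc ⌈a⌉ ⌊b⌋).card : ℝ) ∧
    ((Finset.Icc ⌈a⌉ ⌊b⌋).card : ℝ) ≤ b - a + 1 := by
  rw [Int.card_Icc]
  have h1 := Int.lt_floor_add_one b
  have h2 := Int.ceil_lt_add_one a
  have h3 := Int.floor_le b
  have h4 := Int.le_ceil a
  have h5 : (((⌊b⌋ + 1 - ⌈a⌉).toNat : ℤ) : ℝ) = ((max (⌊b⌋ + 1 - ⌈a⌉) 0 : ℤ) : ℝ) := by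
    rw [Int.toNat_eq_max]
  rw [Int.cast_natCast] at h5
  rw [h5]
  push_cast
  constructor
  · refine le_trans ?_ (le_max_left _ _); linarith
  · refine max_le ?_ ?_ <;> linarith

lemma card_lattice (R : ℝ) (hR : 20 ≤ R) : R ^ 3 / 8000 ≤ ((lattice R).card : ℝ) ∧
    ((lattice R).card : ℝ) ≤ R ^ 3 := by
  rw [lattice, Fintype.card_piFinset]
  push_cast
  rw [Fin.prod_univ_three]
  have h : ∀ a b : ℝ, 1 / 10 ≤ b - a → b - a ≤ 4 / 5 → R / 20 ≤ ((Finset.Icc ⌈R * a⌉ ⌊R * b⌋).card : ℝ) ∧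
    ((Finset.Icc ⌈R * a⌉ ⌊R * b⌋).card : ℝ) ≤ R := by
    intro a b h1 h2
    obtain ⟨e1, e2⟩ := card_Icc_bounds (R * a) (R * b) (by gcongr; linarith)
    constructor <;> nlinarith
  obtain ⟨a0, b0⟩ := h (-(2 / 5)) (2 / 5) (by norm_num) (by norm_num)
  obtain ⟨a2, b2⟩ := h (1 / 2) (3 / 5) (by norm_num) (by norm_num)
  simp only [Matrix.cons_val_zero, Matrix.cons_val_one, Matrix.cons_val]
  constructor
  · calc R ^ 3 / 8000 = R / 20 * (R / 20) * (R / 20) := by ring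
      _ ≤ _ := by gcongr
  · calc _ ≤ R * R * R := by gcongr
      _ = R ^ 3 := by ring

lemma card_sq_le_card_image_mul {α β : Type*} [DecidableEq β] (s : Finset α) (φ : α → β) :
    s.card ^ 2 ≤ (s.image φ).card * ((s ×ˢ s).filter fun p => φ p.1 = φ p.2).card := by
  classical
  have h1 : s.card = ∑ b ∈ s.image φ, (s.filter fun a => φ a = b).card :=
    Finset.card_eq_sum_card_image φ s
  have h2 : ((s ×ˢ s).filter fun p => φ p.1 = φ p.2).card =
      ∑ b ∈ s.image φ, (s.filter fun a => φ a = b).card ^ 2 := by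
    rw [Finset.card_eq_sum_card_fiberwise (f := fun p => φ p.1) (t := s.image φ)]
    · refine Finset.sum_congr rfl fun b _ => ?_
      rw [sq, ← Finset.card_product]
      congr 1
      ext p
      simp only [Finset.mem_filter, Finset.mem_product]
      constructor
      · rintro ⟨⟨⟨a, b⟩, c⟩, rfl⟩; exact ⟨⟨a, rfl⟩, b, c.symm⟩
      · rintro ⟨⟨a, rfl⟩, b, c⟩; exact ⟨⟨⟨a, b⟩, c.symm⟩, rfl⟩
    · intro p hp
      simp only [Finset.coe_filter, Finset.mem_product, Set.mem_ofPred_eq] at hp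
      exact Finset.mem_coe.2 (Finset.mem_image_of_mem _ hp.1.1)
  rw [h2]
  conv_lhs => rw [h1]
  exact sq_sum_le_card_mul_sum_sq

/-- The index of the cell, in a partition of directions into squares of side `1 / B`, to which
the direction of `k` belongs. -/
def cell (B : ℝ) (k : Fin 3 → ℤ) : ℤ × ℤ :=
  (⌊B * ((k 0 : ℝ) / k 2)⌋, ⌊B * ((k 1 : ℝ) / k 2)⌋)

lemma lattice_facts {R : ℝ} (hR : 0 < R) {k : Fin 3 → ℤ} (hk : k ∈ lattice R) :
    0 < (k 2 : ℝ) ∧ (k 2 : ℝ) ≤ R ∧ |(k 0 : ℝ) / k 2| ≤ 1 ∧ |(k 1 : ℝ) / k 2| ≤ 1 := by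
  rw [mem_lattice hR, mem_K0] at hk
  simp only [Pi.smul_apply, smul_eq_mul, toR] at hk
  rw [inv_mul_le_iff₀ hR, inv_mul_le_iff₀ hR, inv_mul_le_iff₀ hR, le_inv_mul_iff₀ hR,
    le_inv_mul_iff₀ hR, le_inv_mul_iff₀ hR] at hk
  obtain ⟨⟨a, b⟩, ⟨c, d⟩, e, f⟩ := hk
  have h2 : 0 < (k 2 : ℝ) := by nlinarith
  refine ⟨h2, by linarith, ?_, ?_⟩
  · rw [abs_div, abs_of_pos h2, div_le_one h2, abs_le]; constructor <;> linarith
  · rw [abs_div, abs_of_pos h2, div_le_one h2, abs_le]; constructor <;> linarith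

lemma card_cells_le {R B : ℝ} (hR : 0 < R) (hB : 1 ≤ B) :
    (((lattice R).image (cell B)).card : ℝ) ≤ 25 * B ^ 2 := by
  have hsub : (lattice R).image (cell B) ⊆ Finset.Icc (-⌈B⌉) ⌈B⌉ ×ˢ Finset.Icc (-⌈B⌉) ⌈B⌉ := by
    intro c hc
    obtain ⟨k, hk, rfl⟩ := Finset.mem_image.1 hc
    obtain ⟨-, -, h0, h1⟩ := lattice_facts hR hk
    have aux : ∀ t : ℝ, |t| ≤ 1 → ⌊B * t⌋ ∈ Finset.Icc (-⌈B⌉) ⌈B⌉ := by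
      intro t ht
      have := abs_le.1 ht
      have hc := Int.le_ceil B
      rw [Finset.mem_Icc, Int.le_floor]
      refine ⟨by push_cast; nlinarith, ?_⟩
      have := Int.floor_le (B * t)
      have h2 : ((⌊B * t⌋ : ℤ) : ℝ) ≤ (⌈B⌉ : ℤ) := by nlinarith
      exact_mod_cast h2
    exact Finset.mem_product.2 ⟨aux _ h0, aux _ h1⟩
  have h1 : ((Finset.Icc (-⌈B⌉) ⌈B⌉).card : ℝ) ≤ 5 * B := by
    have hc := Int.ceil_lt_add_one B
    have hc0 : 0 ≤ ⌈B⌉ := Int.ceil_nonneg (by linarith)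
    have : ((Finset.Icc (-⌈B⌉) ⌈B⌉).card : ℤ) = 2 * ⌈B⌉ + 1 := by
      rw [Int.card_Icc, Int.toNat_of_nonneg (by linarith)]; ring
    have : ((Finset.Icc (-⌈B⌉) ⌈B⌉).card : ℝ) = 2 * ⌈B⌉ + 1 := by exact_mod_cast this
    rw [this]; linarith
  have h2 : (((lattice R).image (cell B)).card : ℝ) ≤
      ((Finset.Icc (-⌈B⌉) ⌈B⌉).card : ℝ) * ((Finset.Icc (-⌈B⌉) ⌈B⌉).card : ℝ) := by
    have := Finset.card_le_card hsub
    rw [Finset.card_product] at this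
    exact_mod_cast this
  refine h2.trans ?_
  calc _ ≤ (5 * B) * (5 * B) := by gcongr
    _ = _ := by ring

/-- Two lattice points in the same cell on which `N` takes the same value are close together. -/
lemma close_of_same_cell {N : (Fin 3 → ℝ) → ℝ} {Λ c₀ : ℝ} (hhom : ∀ t : ℝ, 0 ≤ t → ∀ x, N (t • x) = t * N x)
    (hLip : ∀ x y, |N x - N y| ≤ Λ * ‖x - y‖) (hlow : ∀ x, c₀ * ‖x‖ ≤ N x) (hc₀ : 0 < c₀) (hΛ : 0 ≤ Λ)
    {R B : ℝ} (hR : 0 < R) (hB : 0 < B) {k l : Fin 3 → ℤ} (hk : k ∈ lattice R) (hl : l ∈ lattice R)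
    (hcell : cell B k = cell B l) (hN : N (toR k) = N (toR l)) :
    ‖l - k‖ ≤ R * (1 + Λ / c₀) / B := by
  obtain ⟨k2, k2R, hk0, hk1⟩ := lattice_facts hR hk
  obtain ⟨l2, l2R, hl0, hl1⟩ := lattice_facts hR hl
  set a : Fin 3 → ℝ := (k 2 : ℝ)⁻¹ • toR k with ha
  set b : Fin 3 → ℝ := (l 2 : ℝ)⁻¹ • toR l with hb
  have ka : toR k = (k 2 : ℝ) • a := by rw [ha, smul_inv_smul₀ k2.ne']
  have lb : toR l = (l 2 : ℝ) • b := by rw [hb, smul_inv_smul₀ l2.ne']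
  have a2 : a 2 = 1 := by simp [ha, toR, k2.ne']
  have b2 : b 2 = 1 := by simp [hb, toR, l2.ne']
  have a0 : a 0 = (k 0 : ℝ) / k 2 := by simp [ha, toR]; ring
  have a1 : a 1 = (k 1 : ℝ) / k 2 := by simp [ha, toR]; ring
  have b0 : b 0 = (l 0 : ℝ) / l 2 := by simp [hb, toR]; ring
  have b1 : b 1 = (l 1 : ℝ) / l 2 := by simp [hb, toR]; ring
  have hfl : ∀ s t : ℝ, ⌊B * s⌋ = ⌊B * t⌋ → |s - t| ≤ 1 / B := by
    intro s t h
    have := Int.abs_sub_lt_one_of_floor_eq_floor h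
    rw [← mul_sub, abs_mul, abs_of_pos hB] at this
    rw [le_div_iff₀ hB]; linarith
  simp only [cell, Prod.mk.injEq] at hcell
  have hab : ‖a - b‖ ≤ 1 / B := by
    rw [pi_norm_le_iff_of_nonneg (by positivity)]
    intro i
    rw [Real.norm_eq_abs, Pi.sub_apply]
    fin_cases i
    · simp only [Fin.zero_eta]; rw [a0, b0]; exact hfl _ _ hcell.1
    · simp only [Fin.mk_one]; rw [a1, b1]; exact hfl _ _ hcell.2
    · simp only [Fin.reduceFinMk]; rw [a2, b2]; simp; positivity
  have hna : ‖a‖ = 1 := by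
    apply le_antisymm
    · rw [pi_norm_le_iff_of_nonneg (by norm_num)]
      intro i
      rw [Real.norm_eq_abs]
      fin_cases i
      · simp only [Fin.zero_eta]; rw [a0]; exact hk0
      · simp only [Fin.mk_one]; rw [a1]; exact hk1
      · simp only [Fin.reduceFinMk]; rw [a2]; simp
    · have := abs_apply_le_norm a 2
      rw [a2] at this; simpa using this
  rw [ka, lb, hhom _ k2.le, hhom _ l2.le] at hN
  have hdiff : |(k 2 : ℝ) - l 2| ≤ R * (Λ / c₀) / B := by
    have h1 : ((k 2 : ℝ) - l 2) * N a = l 2 * (N b - N a) := by linarith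
    have h2 : |(k 2 : ℝ) - l 2| * N a ≤ R * (Λ * (1 / B)) := by
      have hNa : 0 ≤ N a := le_trans (by positivity) (hlow a)
      calc |(k 2 : ℝ) - l 2| * N a = |((k 2 : ℝ) - l 2) * N a| := by rw [abs_mul, abs_of_nonneg hNa]
        _ = l 2 * |N b - N a| := by rw [h1, abs_mul, abs_of_pos l2]
        _ ≤ R * (Λ * (1 / B)) := by
          gcongr
          refine (hLip b a).trans ?_
          rw [norm_sub_rev]; gcongr
    have h3 := hlow a
    rw [hna, mul_one] at h3
    have h4 : |(k 2 : ℝ) - l 2| * c₀ ≤ R * (Λ * (1 / B)) := le_trans (by gcongr) h2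
    rw [← le_div_iff₀ hc₀] at h4
    refine h4.trans (le_of_eq ?_)
    field_simp
  have e : toR (k - l) = ((k 2 : ℝ) - l 2) • a + (l 2 : ℝ) • (a - b) := by
    rw [toR_sub, ka, lb, smul_sub, sub_smul]; abel
  rw [norm_sub_rev, ← norm_toR, e]
  refine (norm_add_le _ _).trans ?_
  rw [norm_smul _ a, norm_smul _ (a - b), hna, Real.norm_eq_abs, Real.norm_of_nonneg l2.le]
  calc _ ≤ R * (Λ / c₀) / B * 1 + R * (1 / B) := by gcongr
    _ = _ := by ring

/-- Cauchy-Schwarz applied to the map sending `k` to its direction cell together with its value. There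
are `O(R)` cells, and the collisions are the diagonal and the pairs of `card_level_pairs_le`,
`O(R ^ 3)` in total, so `R ^ 6 ≪ R * V * R ^ 3`, where `V` is the number of values. -/
theorem card_values_ge {N : (Fin 3 → ℝ) → ℝ} {g A lam M Λ c₀}
    (hhom : ∀ t : ℝ, 0 ≤ t → ∀ x, N (t • x) = t * N x)
    (hLip : ∀ x y, |N x - N y| ≤ Λ * ‖x - y‖) (hlow : ∀ x, c₀ * ‖x‖ ≤ N x) (hc₀ : 0 < c₀) (hΛ : 0 ≤ Λ)
    (D : Data (fun x => N x ^ 2) g A lam M) :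
    ∃ c R₀ : ℝ, 0 < c ∧ ∀ R : ℝ, R₀ ≤ R →
      c * R ^ 2 ≤ (((lattice R).image fun k => N (toR k)).card : ℝ) := by
  classical
  obtain ⟨C, X₀, hC, h⟩ := card_level_pairs_le D
  set K := 1 + Λ / c₀ with hK
  have hK1 : 1 ≤ K := by rw [hK]; have : 0 ≤ Λ / c₀ := by positivity
                         linarith
  refine ⟨1 / (8000 ^ 2 * (25 * K ^ 2) * (1 + C)), max 20 (max X₀ 0 ^ 2), by positivity, fun R hR => ?_⟩
  have hR20 : 20 ≤ R := (le_max_left _ _).trans hR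
  have hRX : max X₀ 0 ^ 2 ≤ R := (le_max_right _ _).trans hR
  have hR0 : 0 < R := by linarith
  set X := √R with hX
  have hX2 : X ^ 2 = R := Real.sq_sqrt hR0.le
  have hX1 : 1 ≤ X := Real.one_le_sqrt.2 (by linarith)
  have hXX : X₀ ≤ X := (le_max_left _ _).trans (Real.le_sqrt_of_sq_le hRX)
  have hB1 : 1 ≤ K * X := by nlinarith
  set φ : (Fin 3 → ℤ) → (ℤ × ℤ) × ℝ := fun k => (cell (K * X) k, N (toR k)) with hφ
  obtain ⟨hE1, hE2⟩ := card_lattice R hR20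
  set V := (((lattice R).image fun k => N (toR k)).card : ℝ) with hV
  have hV0 : 0 ≤ V := by positivity
  have himg : (((lattice R).image φ).card : ℝ) ≤ 25 * (K * X) ^ 2 * V := by
    have hsub : (lattice R).image φ ⊆ (lattice R).image (cell (K * X)) ×ˢ (lattice R).image fun k => N (toR k) := by
      intro p hp
      obtain ⟨k, hk, rfl⟩ := Finset.mem_image.1 hp
      exact Finset.mem_product.2 ⟨Finset.mem_image_of_mem _ hk, Finset.mem_image_of_mem (fun k => N (toR k)) hk⟩
    have := Finset.card_le_card hsub
    rw [Finset.card_product] at this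
    have h2 : (((lattice R).image φ).card : ℝ) ≤ (((lattice R).image (cell (K * X))).card : ℝ) * V := by
      rw [hV]; exact_mod_cast this
    exact h2.trans (by gcongr; exact card_cells_le hR0 hB1)
  set P := ((lattice R ×ˢ lattice R).filter fun p => φ p.1 = φ p.2) with hP
  have hpairs : (P.card : ℝ) ≤ (1 + C) * R ^ 3 := by
    set Z := (P.filter fun p => p.1 ≠ p.2).image fun p => (p.1, p.2 - p.1) with hZ
    have hZc : Z.card = (P.filter fun p => p.1 ≠ p.2).card := by
      apply Finset.card_image_of_injective
      rintro ⟨a, b⟩ ⟨a', b'⟩ hab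
      simp only [Prod.mk.injEq] at hab ⊢
      obtain ⟨rfl, hab⟩ := hab
      exact ⟨rfl, by simpa using hab⟩
    have h1 := h X hXX Z (by
      intro z hz
      obtain ⟨⟨k, l⟩, hp, rfl⟩ := Finset.mem_image.1 hz
      simp only [hP, hφ, Finset.mem_filter, Finset.mem_product, Prod.mk.injEq] at hp
      obtain ⟨⟨⟨hk, hl⟩, hc, hn⟩, hne⟩ := hp
      refine ⟨by simpa [sub_eq_zero] using Ne.symm hne, ?_, ?_, ?_⟩
      · refine (close_of_same_cell hhom hLip hlow hc₀ hΛ hR0 (by linarith) hk hl hc hn).trans (le_of_eq ?_)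
        rw [← hK, ← hX2]; field_simp
      · rw [hX2]; exact (mem_lattice hR0).1 hk
      · simp only [add_sub_cancel]
        rw [hhom _ (by positivity), hhom _ (by positivity), hn])
    rw [hZc] at h1
    have h2 : (P.filter fun p => ¬ p.1 ≠ p.2).card ≤ (lattice R).card := by
      refine Finset.card_le_card_of_injOn Prod.fst ?_ ?_
      · intro p hp
        simp only [hP, Finset.coe_filter, Finset.mem_filter, Finset.mem_product, Set.mem_ofPred_eq] at hp
        exact hp.1.1.1
      · intro p hp p' hp' he
        simp only [Finset.coe_filter, Set.mem_ofPred_eq, ne_eq, not_not] at hp hp'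
        exact Prod.ext he (by rw [← hp.2, ← hp'.2, he])
    have h3 := Finset.card_filter_add_card_filter_not (s := P) (fun p => p.1 ≠ p.2)
    have h3' : ((P.filter fun p => p.1 ≠ p.2).card : ℝ) + ((P.filter fun p => ¬ p.1 ≠ p.2).card : ℝ) = P.card := by
      exact_mod_cast h3
    have h2' : ((P.filter fun p => ¬ p.1 ≠ p.2).card : ℝ) ≤ ((lattice R).card : ℝ) := by exact_mod_cast h2
    have h4 : X ^ 6 = R ^ 3 := by rw [← hX2]; ring
    rw [h4] at h1
    linarith
  have hcs : (((lattice R).card : ℝ)) ^ 2 ≤ (((lattice R).image φ).card : ℝ) * (P.card : ℝ) := by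
    exact_mod_cast card_sq_le_card_image_mul (lattice R) φ
  have hfin : (R ^ 3 / 8000) ^ 2 ≤ 25 * (K * X) ^ 2 * V * ((1 + C) * R ^ 3) :=
    calc (R ^ 3 / 8000) ^ 2 ≤ (((lattice R).card : ℝ)) ^ 2 := by gcongr
      _ ≤ _ := hcs
      _ ≤ _ := by gcongr
  rw [mul_pow, hX2] at hfin
  rw [div_mul_eq_mul_div, one_mul, div_le_iff₀ (by positivity)]
  have hR4 : 0 < R ^ 4 := by positivity
  have e1 : (R ^ 3 / 8000) ^ 2 = R ^ 4 * (R ^ 2 / 8000 ^ 2) := by ring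
  have e2 : 25 * (K ^ 2 * R) * V * ((1 + C) * R ^ 3) = R ^ 4 * (25 * K ^ 2 * V * (1 + C)) := by ring
  rw [e1, e2] at hfin
  have h5 := le_of_mul_le_mul_left hfin hR4
  rw [div_le_iff₀ (by positivity)] at h5
  linarith

/-! ### Estimates for smooth homogeneous functions -/

section SymmetricDifferences
variable {V W : Type*} [NormedAddCommGroup V] [NormedSpace ℝ V] [NormedAddCommGroup W] [NormedSpace ℝ W]

/-- A symmetric difference equals twice the derivative at the centre up to a cubic error. -/
lemma norm_symm_diff_le {F : V → W} {F' : V → V →L[ℝ] W} {F'' : V → V →L[ℝ] V →L[ℝ] W} {m v : V} {L : ℝ}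
    (hL0 : 0 ≤ L)
    (hF : ∀ x ∈ Metric.closedBall m ‖v‖, HasFDerivAt F (F' x) x)
    (hF' : ∀ x ∈ Metric.closedBall m ‖v‖, HasFDerivAt F' (F'' x) x)
    (hL : ∀ x ∈ Metric.closedBall m ‖v‖, ∀ y ∈ Metric.closedBall m ‖v‖, ‖F'' x - F'' y‖ ≤ L * ‖x - y‖) :
    ‖F (m + v) - F (m - v) - (2 : ℝ) • F' m v‖ ≤ 2 * L * ‖v‖ ^ 3 := by
  have hp : ∀ w ∈ Metric.closedBall (0 : V) ‖v‖, m + w ∈ Metric.closedBall m ‖v‖ := by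
    intro w hw; simpa using hw
  have hm : ∀ w ∈ Metric.closedBall (0 : V) ‖v‖, m - w ∈ Metric.closedBall m ‖v‖ := by
    intro w hw; simpa [dist_eq_norm] using hw
  have hap : ∀ w : V, HasFDerivAt (fun w => m + w) (ContinuousLinearMap.id ℝ V) w := fun w =>
    (hasFDerivAt_id w).const_add m
  have ham : ∀ w : V, HasFDerivAt (fun w => m - w) (-ContinuousLinearMap.id ℝ V) w := fun w =>
    (hasFDerivAt_id w).const_sub m
  have hχ : ∀ w ∈ Metric.closedBall (0 : V) ‖v‖, HasFDerivAt
      (fun w => F' (m + w) + F' (m - w) - (2 : ℝ) • F' m) (F'' (m + w) - F'' (m - w)) w := by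
    intro w hw
    have h1 := (hF' _ (hp w hw)).comp w (hap w)
    have h2 := (hF' _ (hm w hw)).comp w (ham w)
    have := (h1.add h2).sub_const ((2 : ℝ) • F' m)
    refine this.congr_fderiv ?_
    ext u; simp [sub_eq_add_neg]
  have hψ : ∀ w ∈ Metric.closedBall (0 : V) ‖v‖, HasFDerivAt
      (fun w => F (m + w) - F (m - w) - (2 : ℝ) • F' m w) (F' (m + w) + F' (m - w) - (2 : ℝ) • F' m) w := by
    intro w hw
    have h1 := (hF _ (hp w hw)).comp w (hap w)
    have h2 := (hF _ (hm w hw)).comp w (ham w)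
    have := (h1.sub h2).sub ((F' m).hasFDerivAt.const_smul (2 : ℝ))
    refine this.congr_fderiv ?_
    ext u; simp [sub_eq_add_neg]
  have hconv := convex_closedBall (0 : V) ‖v‖
  have h0 : (0 : V) ∈ Metric.closedBall (0 : V) ‖v‖ := by simp
  have hv : v ∈ Metric.closedBall (0 : V) ‖v‖ := by simp
  have b1 : ∀ w ∈ Metric.closedBall (0 : V) ‖v‖, ‖F' (m + w) + F' (m - w) - (2 : ℝ) • F' m‖ ≤ 2 * L * ‖v‖ ^ 2 := by
    intro w hw
    have := hconv.norm_image_sub_le_of_norm_hasFDerivWithin_le (C := 2 * L * ‖v‖)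
      (fun x hx => (hχ x hx).hasFDerivWithinAt) (fun x hx => by
        refine (hL _ (hp x hx) _ (hm x hx)).trans ?_
        have : m + x - (m - x) = (2 : ℝ) • x := by rw [two_smul]; abel
        rw [this, norm_smul]
        have hx' : ‖x‖ ≤ ‖v‖ := by simpa using hx
        simp only [Real.norm_ofNat]
        nlinarith) h0 hw
    have e : F' (m + 0) + F' (m - 0) - (2 : ℝ) • F' m = 0 := by
      rw [add_zero, sub_zero, two_smul, sub_self]
    rw [e, sub_zero, sub_zero] at this
    refine this.trans ?_
    have hw' : ‖w‖ ≤ ‖v‖ := by simpa using hw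
    calc 2 * L * ‖v‖ * ‖w‖ ≤ 2 * L * ‖v‖ * ‖v‖ := by gcongr
      _ = _ := by ring
  have := hconv.norm_image_sub_le_of_norm_hasFDerivWithin_le (C := 2 * L * ‖v‖ ^ 2)
      (fun x hx => (hψ x hx).hasFDerivWithinAt) b1 h0 hv
  simp only [add_zero, sub_zero, sub_self, map_zero, smul_zero] at this
  refine this.trans (le_of_eq ?_)
  ring

end SymmetricDifferences

/-- The open half space in which all the analysis takes place. -/
def halfSpace : Set (Fin 3 → ℝ) := {y | 0 < y 2}

lemma isOpen_halfSpace : IsOpen halfSpace := isOpen_lt continuous_const (continuous_apply 2)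

lemma K1_subset : K1 ⊆ halfSpace := fun y hy => by
  have := (mem_K1.1 hy).2.2.1
  show 0 < y 2
  linarith

lemma convex_K1 : Convex ℝ K1 := convex_Icc _ _

/-- A smooth function on the half space is bounded and Lipschitz on the compact convex set `K1`, with
a common constant. -/
lemma bounded_and_lipschitz {W : Type*} [NormedAddCommGroup W] [NormedSpace ℝ W] {Φ : (Fin 3 → ℝ) → W}
    (hΦ : ContDiffOn ℝ ∞ Φ halfSpace) : ∃ M : ℝ, 0 ≤ M ∧ (∀ x ∈ K1, ‖Φ x‖ ≤ M) ∧
      ∀ x ∈ K1, ∀ y ∈ K1, ‖Φ x - Φ y‖ ≤ M * ‖x - y‖ := by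
  obtain ⟨M₁, h₁⟩ := isCompact_K1.exists_bound_of_continuousOn (hΦ.continuousOn.mono K1_subset)
  have hd : ContDiffOn ℝ ∞ (fderiv ℝ Φ) halfSpace :=
    hΦ.fderiv_of_isOpen isOpen_halfSpace (by simp)
  obtain ⟨M₂, h₂⟩ := isCompact_K1.exists_bound_of_continuousOn (hd.continuousOn.mono K1_subset)
  refine ⟨max 0 (max M₁ M₂), le_max_left _ _, fun x hx => (h₁ x hx).trans ?_, fun x hx y hy => ?_⟩
  · exact (le_max_left _ _).trans (le_max_right _ _)
  · have := convex_K1.norm_image_sub_le_of_norm_fderiv_le (f := Φ) (𝕜 := ℝ) (C := max 0 (max M₁ M₂))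
      (fun z hz => ((hΦ.contDiffAt (isOpen_halfSpace.mem_nhds (K1_subset hz))).differentiableAt (by simp)))
      (fun z hz => (h₂ z hz).trans ((le_max_right _ _).trans (le_max_right _ _))) hy hx
    exact this

/-- The vector representing a linear functional through the dot product. -/
def toVec : ((Fin 3 → ℝ) →L[ℝ] ℝ) →L[ℝ] (Fin 3 → ℝ) :=
  ContinuousLinearMap.pi fun i => ContinuousLinearMap.apply ℝ ℝ (Pi.single i 1)

lemma toVec_dot (φ : (Fin 3 → ℝ) →L[ℝ] ℝ) (v : Fin 3 → ℝ) : toVec φ ⬝ᵥ v = φ v := by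
  have hv : v = ∑ i, v i • (Pi.single i 1 : Fin 3 → ℝ) := by
    ext j; simp [Finset.sum_apply, Pi.single_apply]
  conv_rhs => rw [hv]
  simp [toVec, dotProduct, map_sum, mul_comm]

lemma norm_toVec_le (φ : (Fin 3 → ℝ) →L[ℝ] ℝ) : ‖toVec φ‖ ≤ ‖φ‖ := by
  rw [pi_norm_le_iff_of_nonneg (norm_nonneg _)]
  intro i
  have := φ.le_opNorm (Pi.single i 1)
  simpa [toVec, Pi.norm_single] using this

set_option maxSynthPendingDepth 6 in
/-- A smooth function, homogeneous of degree two and with positive definite Hessian, satisfies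
all the estimates needed for the count. -/
theorem exists_data (q : (Fin 3 → ℝ) → ℝ) (hsm : ContDiffOn ℝ ∞ q halfSpace)
    (hhom : ∀ t : ℝ, 0 < t → ∀ x, q (t • x) = t ^ 2 * q x)
    (hpos : ∀ x ∈ halfSpace, ∀ v, v ≠ 0 → 0 < fderiv ℝ (fderiv ℝ q) x v v) :
    ∃ g A lam M, Data q g A lam M := by
  have hU := isOpen_halfSpace
  have s1 : ContDiffOn ℝ ∞ (fderiv ℝ q) halfSpace := hsm.fderiv_of_isOpen hU (by simp)
  have s2 : ContDiffOn ℝ ∞ (fderiv ℝ (fderiv ℝ q)) halfSpace := s1.fderiv_of_isOpen hU (by simp)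
  have s3 : ContDiffOn ℝ ∞ (fderiv ℝ (fderiv ℝ (fderiv ℝ q))) halfSpace := s2.fderiv_of_isOpen hU (by simp)
  obtain ⟨M₁, hM₁0, hb₁, hL₁⟩ := bounded_and_lipschitz s1
  obtain ⟨M₂, hM₂0, hb₂, hL₂⟩ := bounded_and_lipschitz s2
  obtain ⟨M₃, hM₃0, hb₃, hL₃⟩ := bounded_and_lipschitz s3
  have d0 : ∀ x ∈ K1, HasFDerivAt q (fderiv ℝ q x) x := fun x hx =>
    ((hsm.contDiffAt (hU.mem_nhds (K1_subset hx))).differentiableAt (by simp)).hasFDerivAt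
  have d1 : ∀ x ∈ K1, HasFDerivAt (fderiv ℝ q) (fderiv ℝ (fderiv ℝ q) x) x := fun x hx =>
    ((s1.contDiffAt (hU.mem_nhds (K1_subset hx))).differentiableAt (by simp)).hasFDerivAt
  have d2 : ∀ x ∈ K1, HasFDerivAt (fderiv ℝ (fderiv ℝ q)) (fderiv ℝ (fderiv ℝ (fderiv ℝ q)) x) x := fun x hx =>
    ((s2.contDiffAt (hU.mem_nhds (K1_subset hx))).differentiableAt (by simp)).hasFDerivAt
  set g : (Fin 3 → ℝ) → (Fin 3 → ℝ) := fun y => toVec (fderiv ℝ q y) with hg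
  set A : (Fin 3 → ℝ) → (Fin 3 → ℝ) →L[ℝ] (Fin 3 → ℝ) := fun y => toVec ∘L fderiv ℝ (fderiv ℝ q) y with hA
  have gdot : ∀ y v, g y ⬝ᵥ v = fderiv ℝ q y v := fun y v => toVec_dot _ v
  have Adot : ∀ y h v, A y h ⬝ᵥ v = fderiv ℝ (fderiv ℝ q) y h v := fun y h v => toVec_dot _ v
  have dg : ∀ x ∈ K1, HasFDerivAt g (A x) x := fun x hx => toVec.hasFDerivAt.comp x (d1 x hx)
  have contA : ContinuousOn A K1 := by
    have : ContinuousOn (fderiv ℝ (fderiv ℝ q)) K1 := s2.continuousOn.mono K1_subset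
    exact continuousOn_const.clm_comp this
  have contg : ContinuousOn g K1 := fun x hx => (dg x hx).continuousAt.continuousWithinAt
  -- a lower bound for the Hessian, by compactness
  obtain ⟨c, hc0, hc⟩ : ∃ c : ℝ, 0 < c ∧ ∀ y ∈ K1, ∀ h, c * ‖h‖ ≤ ‖A y h‖ := by
    have hcomp : IsCompact (K1 ×ˢ Metric.sphere (0 : Fin 3 → ℝ) 1) :=
      isCompact_K1.prod (isCompact_sphere 0 1)
    have hcont : ContinuousOn (fun p : (Fin 3 → ℝ) × (Fin 3 → ℝ) => fderiv ℝ (fderiv ℝ q) p.1 p.2 p.2)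
        (K1 ×ˢ Metric.sphere (0 : Fin 3 → ℝ) 1) := by
      have h1 : ContinuousOn (fun p : (Fin 3 → ℝ) × (Fin 3 → ℝ) => fderiv ℝ (fderiv ℝ q) p.1)
          (K1 ×ˢ Metric.sphere (0 : Fin 3 → ℝ) 1) :=
        (s2.continuousOn.mono K1_subset).comp continuousOn_fst fun p hp => hp.1
      exact (h1.clm_apply continuousOn_snd).clm_apply continuousOn_snd
    have hne : (K1 ×ˢ Metric.sphere (0 : Fin 3 → ℝ) 1).Nonempty := by
      refine ⟨(![0, 0, 1], ![0, 0, 1]), ?_, ?_⟩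
      · rw [mem_K1]; simp; norm_num
      · have : ‖(![0, 0, 1] : Fin 3 → ℝ)‖ = 1 := by
          apply le_antisymm
          · rw [pi_norm_le_iff_of_nonneg (by norm_num)]
            intro i; fin_cases i <;> simp
          · simpa using abs_apply_le_norm (![0, 0, 1] : Fin 3 → ℝ) 2
        simpa using this
    obtain ⟨⟨y₀, h₀⟩, ⟨hy₀, hh₀⟩, hmin⟩ := hcomp.exists_isMinOn hne hcont
    have hh₀1 : ‖h₀‖ = 1 := by simpa using hh₀
    have hpos₀ := hpos y₀ (K1_subset hy₀) h₀ (by rw [← norm_pos_iff, hh₀1]; norm_num)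
    set c := fderiv ℝ (fderiv ℝ q) y₀ h₀ h₀ with hc
    refine ⟨c / 3, by positivity, fun y hy h => ?_⟩
    rcases eq_or_ne h 0 with rfl | hne
    · simp
    have hn : 0 < ‖h‖ := norm_pos_iff.2 hne
    have h1 : c ≤ fderiv ℝ (fderiv ℝ q) y (‖h‖⁻¹ • h) (‖h‖⁻¹ • h) :=
      hmin (show (y, ‖h‖⁻¹ • h) ∈ _ from ⟨hy, by simp [norm_smul, hn.ne']⟩)
    simp only [map_smul, smul_apply, smul_eq_mul] at h1
    rw [← Adot] at h1
    have h2 := (le_abs_self _).trans (abs_dot_le (A y h) h)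
    have h3 : c ≤ ‖h‖⁻¹ * (‖h‖⁻¹ * (3 * ‖A y h‖ * ‖h‖)) := h1.trans (by gcongr)
    have h4 : ‖h‖⁻¹ * (‖h‖⁻¹ * (3 * ‖A y h‖ * ‖h‖)) = 3 * ‖A y h‖ / ‖h‖ := by field_simp
    rw [h4, le_div_iff₀ hn] at h3
    linarith
  have inj : Set.InjOn g K1 := by
    intro x hx y hy hxy
    by_contra hne
    have hv : y - x ≠ 0 := sub_ne_zero.2 (Ne.symm hne)
    have hseg : ∀ t ∈ Set.Icc (0 : ℝ) 1, x + t • (y - x) ∈ K1 := fun t ht => by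
      have := convex_K1.lineMap_mem hx hy ht
      rwa [AffineMap.lineMap_apply_module', add_comm] at this
    have hd : ∀ t ∈ Set.Icc (0 : ℝ) 1, HasDerivAt (fun t : ℝ => fderiv ℝ q (x + t • (y - x)) (y - x))
        (fderiv ℝ (fderiv ℝ q) (x + t • (y - x)) (y - x) (y - x)) t := by
      intro t ht
      have h1 : HasDerivAt (fun t : ℝ => x + t • (y - x)) (y - x) t := by
        simpa using ((hasDerivAt_id t).smul_const (y - x)).const_add x
      have h2 := (d1 _ (hseg t ht)).comp_hasDerivAt t h1
      simpa using h2.clm_apply (hasDerivAt_const t (y - x))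
    obtain ⟨t, ht, ht0⟩ := exists_hasDerivAt_eq_zero (zero_lt_one (α := ℝ))
      (fun t ht => (hd t ht).continuousAt.continuousWithinAt) (by
        simp only [zero_smul, add_zero, one_smul, add_sub_cancel]
        rw [← gdot, ← gdot, hxy]) (fun t ht => hd t ⟨ht.1.le, ht.2.le⟩)
    exact (hpos _ (K1_subset (hseg t ⟨ht.1.le, ht.2.le⟩)) _ hv).ne' ht0
  obtain ⟨e, he0, he⟩ : ∃ e : ℝ, 0 < e ∧ ∀ y ∈ K1, e ≤ |(A y).det| := by
    have hcont : ContinuousOn (fun y => |(A y).det|) K1 :=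
      (ContinuousLinearMap.continuous_det.comp_continuousOn contA).abs
    have hne : K1.Nonempty := ⟨![0, 0, 1], by rw [mem_K1]; simp; norm_num⟩
    obtain ⟨y₀, hy₀, hmin⟩ := isCompact_K1.exists_isMinOn hne hcont
    refine ⟨|(A y₀).det|, ?_, fun y hy => hmin hy⟩
    rw [abs_pos]
    intro hdet
    obtain ⟨v, hv, hv0⟩ := Submodule.exists_mem_ne_zero_of_ne_bot
      (LinearMap.bot_lt_ker_of_det_eq_zero (f := (A y₀ : (Fin 3 → ℝ) →ₗ[ℝ] (Fin 3 → ℝ))) hdet).ne'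
    have h1 := hc y₀ hy₀ v
    have h2 : A y₀ v = 0 := by simpa using hv
    rw [h2, norm_zero] at h1
    have := norm_pos_iff.2 hv0
    nlinarith
  have euler : ∀ y ∈ K1, ∀ h, A y h ⬝ᵥ y = g y ⬝ᵥ h := by
    intro y hy h
    rw [Adot, gdot]
    have hsymm : IsSymmSndFDerivAt ℝ q y :=
      (hsm.contDiffAt (hU.mem_nhds (K1_subset hy))).isSymmSndFDerivAt (by
        rw [minSmoothness_of_isRCLikeNormedField]; exact WithTop.coe_le_coe.2 le_top)
    rw [hsymm.eq h y]
    have hhalf : ∀ t : ℝ, 0 < t → t • y ∈ halfSpace := fun t ht => by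
      have : 0 < y 2 := K1_subset hy
      show 0 < (t • y) 2
      simp only [Pi.smul_apply, smul_eq_mul]; positivity
    have hdq : ∀ t : ℝ, 0 < t → fderiv ℝ q (t • y) = t • fderiv ℝ q y := by
      intro t ht
      have h1 : HasFDerivAt q (fderiv ℝ q (t • y)) (t • y) :=
        ((hsm.contDiffAt (hU.mem_nhds (hhalf t ht))).differentiableAt (by simp)).hasFDerivAt
      have h2 : HasFDerivAt (fun x : Fin 3 → ℝ => t • x) (t • ContinuousLinearMap.id ℝ (Fin 3 → ℝ)) y :=
        (hasFDerivAt_id y).const_smul t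
      have h3 := h1.comp y h2
      have h4 : (q ∘ fun x : Fin 3 → ℝ => t • x) = fun x => t ^ 2 * q x := by
        funext x; exact hhom t ht x
      rw [h4] at h3
      have h5 := h3.unique ((d0 y hy).const_mul (t ^ 2))
      ext v
      have h6 := DFunLike.congr_fun h5 v
      simp only [ContinuousLinearMap.comp_apply, smul_apply, map_smul, smul_eq_mul,
        ContinuousLinearMap.id_apply] at h6 ⊢
      have : t * (fderiv ℝ q (t • y) v) = t * (t * fderiv ℝ q y v) := by rw [h6]; ring
      exact mul_left_cancel₀ ht.ne' this
    have k1 : HasDerivAt (fun t : ℝ => fderiv ℝ q (t • y)) (fderiv ℝ (fderiv ℝ q) y y) 1 := by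
      have h1 : HasDerivAt (fun t : ℝ => t • y) y 1 := by
        simpa using (hasDerivAt_id (1 : ℝ)).smul_const y
      have h2 : HasFDerivAt (fderiv ℝ q) (fderiv ℝ (fderiv ℝ q) y) ((1 : ℝ) • y) := by
        rw [one_smul]; exact d1 y hy
      exact h2.comp_hasDerivAt 1 h1
    have k2 : HasDerivAt (fun t : ℝ => t • fderiv ℝ q y) (fderiv ℝ q y) 1 := by
      simpa using (hasDerivAt_id (1 : ℝ)).smul_const (fderiv ℝ q y)
    have k3 := k1.unique (k2.congr_of_eventuallyEq (by
      filter_upwards [lt_mem_nhds (zero_lt_one (α := ℝ))] with t ht using hdq t ht))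
    rw [k3]
  have ballK1 : ∀ p ∈ K0, ∀ m v : Fin 3 → ℝ, ‖m - p‖ ≤ 1 / 8 → ‖v‖ ≤ 1 / 8 → Metric.closedBall m ‖v‖ ⊆ K1 := by
    intro p hp m v hm hv x hx
    refine mem_K1_of_near hp ?_
    have : ‖x - m‖ ≤ ‖v‖ := by simpa [dist_eq_norm] using hx
    calc ‖x - p‖ = ‖(x - m) + (m - p)‖ := by abel_nf
      _ ≤ _ := norm_add_le _ _
      _ ≤ 1 / 4 := by linarith
  refine ⟨g, A, min 1 (min c e), 1 + M₁ + M₂ + 2 * M₂ + 4 * M₂ + 4 * M₃, ?_⟩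
  have lp : 0 < min 1 (min c e) := by positivity
  refine ⟨lp, min_le_left _ _, by linarith, contA, contg, ?_, ?_, ?_, euler, ?_, ?_, ?_⟩
  · intro y hy
    exact (norm_toVec_le _).trans ((hb₁ y hy).trans (by linarith))
  · intro y hy h
    refine (norm_toVec_le _).trans (((fderiv ℝ (fderiv ℝ q) y).le_opNorm h).trans ?_)
    gcongr
    exact (hb₂ y hy).trans (by linarith)
  · intro y hy h
    refine le_trans ?_ (hc y hy h)
    gcongr
    exact (min_le_right _ _).trans (min_le_left _ _)
  · intro s hs hsm
    rw [← lintegral_abs_det_fderiv_eq_addHaar_image volume hsm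
      (fun x hx => (dg x (hs hx)).hasFDerivWithinAt) (inj.mono hs), ← setLIntegral_const]
    refine setLIntegral_mono' hsm fun x hx => ENNReal.ofReal_le_ofReal ?_
    exact ((min_le_right _ _).trans (min_le_right _ _)).trans (he x (hs hx))
  · intro p hp y η δ hδ hη hηδ hy hq
    set m := p + (1 / 2 : ℝ) • η with hm
    set v := (1 / 2 : ℝ) • η with hv
    have hvn : ‖v‖ = ‖η‖ / 2 := by rw [hv, norm_smul]; norm_num; ring
    have hmp : ‖m - p‖ = ‖η‖ / 2 := by rw [hm, add_sub_cancel_left, hvn]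
    have hball := ballK1 p hp m v (by linarith) (by linarith)
    have h1 := norm_symm_diff_le (L := M₂) hM₂0 (fun x hx => d0 x (hball hx)) (fun x hx => d1 x (hball hx))
      (fun x hx z hz => hL₂ x (hball hx) z (hball hz))
    have e1 : m + v = p + η := by
      rw [hm, hv, add_assoc, ← add_smul]; norm_num
    have e2 : m - v = p := by rw [hm, add_sub_cancel_right]
    rw [e1, e2, hq, sub_self, zero_sub, norm_neg, hvn, ← map_smul, hv, smul_smul] at h1
    norm_num at h1
    have hyK : y ∈ K1 := by
      refine mem_K1_of_near hp ?_
      calc ‖y - p‖ = ‖(y - m) + (m - p)‖ := by abel_nf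
        _ ≤ _ := norm_add_le _ _
        _ ≤ 1 / 4 := by linarith
    have hmK : m ∈ K1 := hball (by simp)
    have h2 : ‖(fderiv ℝ q y - fderiv ℝ q m) η‖ ≤ M₁ * δ * ‖η‖ :=
      ((fderiv ℝ q y - fderiv ℝ q m).le_opNorm η).trans (by
        gcongr; exact (hL₁ y hyK m hmK).trans (by gcongr))
    rw [gdot]
    have e3 : fderiv ℝ q y η = (fderiv ℝ q y - fderiv ℝ q m) η + fderiv ℝ q m η := by
      simp
    rw [e3]
    refine (abs_add_le _ _).trans ?_
    rw [Real.norm_eq_abs] at h2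
    have h3 : M₂ * ‖η‖ ^ 3 ≤ M₂ * δ * ‖η‖ := by
      calc M₂ * ‖η‖ ^ 3 = M₂ * ‖η‖ ^ 2 * ‖η‖ := by ring
        _ ≤ _ := by gcongr
    have h4 : |fderiv ℝ q m η| ≤ M₂ * δ * ‖η‖ := by
      refine le_trans h1 (le_trans ?_ h3)
      have : 0 ≤ M₂ * ‖η‖ ^ 3 := by positivity
      nlinarith
    have hδ0 : 0 ≤ δ := (sq_nonneg _).trans hηδ
    have h5 : 0 ≤ δ * ‖η‖ := by positivity
    nlinarith [mul_nonneg hM₂0 h5, mul_nonneg hM₃0 h5]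
  · intro p hp p' hp' y η δ hδ hη hηδ hy hy' hq hq'
    have hδ0 : 0 ≤ δ := (sq_nonneg _).trans hηδ
    set v := (1 / 2 : ℝ) • η with hv
    have hvn : ‖v‖ = ‖η‖ / 2 := by rw [hv, norm_smul]; norm_num; ring
    have hvv : v + v = η := by rw [hv, ← add_smul]; norm_num
    have hyp : ‖y - p‖ ≤ 1 / 8 := by
      calc ‖y - p‖ = ‖(y - (p + v)) + v‖ := by abel_nf
        _ ≤ _ := norm_add_le _ _
        _ ≤ 1 / 8 := by linarith
    -- the differential of `x ↦ q (x + v) - q (x - v)` stays close to its value at `y`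
    have hB : ∀ x ∈ Metric.closedBall y δ, x + v ∈ K1 ∧ x - v ∈ K1 := by
      intro x hx
      have hx' : ‖x - y‖ ≤ δ := by simpa [dist_eq_norm] using hx
      constructor
      · refine mem_K1_of_near hp ?_
        calc ‖x + v - p‖ = ‖(x - y) + v + (y - p)‖ := by abel_nf
          _ ≤ _ := norm_add₃_le
          _ ≤ 1 / 4 := by linarith
      · refine mem_K1_of_near hp ?_
        calc ‖x - v - p‖ = ‖(x - y) + -v + (y - p)‖ := by abel_nf
          _ ≤ _ := norm_add₃_le
          _ ≤ 1 / 4 := by rw [norm_neg]; linarith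
    have hap : ∀ x, HasFDerivAt (fun x => x + v) (ContinuousLinearMap.id ℝ (Fin 3 → ℝ)) x := fun x =>
      (hasFDerivAt_id x).add_const v
    have ham : ∀ x, HasFDerivAt (fun x => x - v) (ContinuousLinearMap.id ℝ (Fin 3 → ℝ)) x := fun x =>
      (hasFDerivAt_id x).sub_const v
    have hyB : y ∈ Metric.closedBall y δ := Metric.mem_closedBall_self hδ0
    have hF' : ∀ x ∈ Metric.closedBall y δ, HasFDerivAt (fun x => fderiv ℝ q (x + v) - fderiv ℝ q (x - v))
        (fderiv ℝ (fderiv ℝ q) (x + v) - fderiv ℝ (fderiv ℝ q) (x - v)) x := by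
      intro x hx
      exact ((d1 _ (hB x hx).1).comp x (hap x)).sub ((d1 _ (hB x hx).2).comp x (ham x))
    have hF : ∀ x ∈ Metric.closedBall y δ, HasFDerivAt
        (fun x => q (x + v) - q (x - v) - (fderiv ℝ q (y + v) - fderiv ℝ q (y - v)) x)
        (fderiv ℝ q (x + v) - fderiv ℝ q (x - v) - (fderiv ℝ q (y + v) - fderiv ℝ q (y - v))) x := by
      intro x hx
      exact (((d0 _ (hB x hx).1).comp x (hap x)).sub ((d0 _ (hB x hx).2).comp x (ham x))).sub
        (ContinuousLinearMap.hasFDerivAt _)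
    have hconv := convex_closedBall y δ
    have b1 : ∀ x ∈ Metric.closedBall y δ,
        ‖fderiv ℝ q (x + v) - fderiv ℝ q (x - v) - (fderiv ℝ q (y + v) - fderiv ℝ q (y - v))‖ ≤
          M₂ * ‖η‖ * δ := by
      intro x hx
      have := hconv.norm_image_sub_le_of_norm_hasFDerivWithin_le (C := M₂ * ‖η‖)
        (fun z hz => (hF' z hz).hasFDerivWithinAt) (fun z hz => by
          refine (hL₂ _ (hB z hz).1 _ (hB z hz).2).trans (le_of_eq ?_)
          have : z + v - (z - v) = η := by rw [← hvv]; abel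
          rw [this]) hyB hx
      refine this.trans ?_
      have hx' : ‖x - y‖ ≤ δ := by simpa [dist_eq_norm] using hx
      gcongr
    have hcB : p + v ∈ Metric.closedBall y δ := by rw [mem_closedBall_iff_norm']; exact hy
    have hcB' : p' + v ∈ Metric.closedBall y δ := by rw [mem_closedBall_iff_norm']; exact hy'
    have b2 := hconv.norm_image_sub_le_of_norm_hasFDerivWithin_le
        (fun z hz => (hF z hz).hasFDerivWithinAt) b1 hcB hcB'
    have e1 : p + v + v = p + η := by rw [add_assoc, hvv]
    have e2 : p' + v + v = p' + η := by rw [add_assoc, hvv]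
    have e3 : p' + v - (p + v) = p' - p := by abel
    simp only [e1, e2, e3, add_sub_cancel_right, hq, hq', sub_self, zero_sub] at b2
    have hpp : ‖p' - p‖ ≤ 2 * δ := by
      calc ‖p' - p‖ = ‖(y - (p + v)) - (y - (p' + v))‖ := by abel_nf
        _ ≤ _ := norm_sub_le _ _
        _ ≤ 2 * δ := by linarith
    have b3 : |(fderiv ℝ q (y + v) - fderiv ℝ q (y - v)) (p' - p)| ≤ M₂ * ‖η‖ * δ * (2 * δ) := by
      have h1 : (fderiv ℝ q (y + v) - fderiv ℝ q (y - v)) (p' - p) =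
          -(-(fderiv ℝ q (y + v) - fderiv ℝ q (y - v)) (p' + v) -
            -(fderiv ℝ q (y + v) - fderiv ℝ q (y - v)) (p + v)) := by
        rw [← e3, map_sub]; ring
      rw [h1, abs_neg]
      refine le_trans (le_of_eq ?_) (b2.trans (by gcongr))
      rw [Real.norm_eq_abs]
    have hball := ballK1 p hp y v hyp (by linarith)
    have b4 := norm_symm_diff_le (L := M₃) hM₃0 (fun x hx => d1 x (hball hx)) (fun x hx => d2 x (hball hx))
      (fun x hx z hz => hL₃ x (hball hx) z (hball hz))
    rw [← map_smul, two_smul, hvv, hvn] at b4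
    have b5 : |(fderiv ℝ q (y + v) - fderiv ℝ q (y - v) - fderiv ℝ (fderiv ℝ q) y η) (p' - p)| ≤
        M₃ * δ * ‖η‖ * (2 * δ) := by
      rw [← Real.norm_eq_abs]
      refine (ContinuousLinearMap.le_opNorm _ _).trans ?_
      have : 2 * M₃ * (‖η‖ / 2) ^ 3 ≤ M₃ * δ * ‖η‖ := by
        have h1 : M₃ * ‖η‖ ^ 2 * ‖η‖ ≤ M₃ * δ * ‖η‖ := by gcongr
        have h2 : 0 ≤ M₃ * ‖η‖ ^ 3 := by positivity
        nlinarith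
      gcongr
      exact b4.trans this
    rw [Adot]
    have e4 : fderiv ℝ (fderiv ℝ q) y η (p' - p) = (fderiv ℝ q (y + v) - fderiv ℝ q (y - v)) (p' - p) -
        (fderiv ℝ q (y + v) - fderiv ℝ q (y - v) - fderiv ℝ (fderiv ℝ q) y η) (p' - p) := by
      simp only [sub_apply]; ring
    rw [e4]
    refine (abs_sub _ _).trans ?_
    have h5 : 0 ≤ δ ^ 2 * ‖η‖ := by positivity
    nlinarith [mul_nonneg hM₂0 h5, mul_nonneg hM₃0 h5, mul_nonneg hM₁0 h5]

/-! ### Smoothness and strong convexity of the squared gauge -/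

/-- A bounded open convex neighbourhood `Ω` of the origin with a smooth defining function `f`,
regular on the boundary, whose second fundamental form is positive definite. -/
structure SmoothBody {E : Type*} [NormedAddCommGroup E] [NormedSpace ℝ E] (Ω : Set E)
    (f : E → ℝ) : Prop where
  conv : Convex ℝ Ω
  isOpen : IsOpen Ω
  bdd : Bornology.IsBounded Ω
  zero_mem : (0 : E) ∈ Ω
  smooth : ContDiff ℝ ∞ f
  level : Ω = {x | f x < 0}
  grad : ∀ x ∈ frontier Ω, fderiv ℝ f x ≠ 0
  curv : ∀ x ∈ frontier Ω, ∀ v : E, v ≠ 0 →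
      fderiv ℝ f x v = 0 → 0 < fderiv ℝ (fun y => fderiv ℝ f y v) x v

namespace SmoothBody

variable {E : Type*} [NormedAddCommGroup E] [NormedSpace ℝ E] {Ω : Set E} {f : E → ℝ}

lemma mem_nhds (h : SmoothBody Ω f) : Ω ∈ 𝓝 (0 : E) := h.isOpen.mem_nhds h.zero_mem

lemma apply_nonpos (h : SmoothBody Ω f) {z : E} (hz : z ∈ closure Ω) : f z ≤ 0 := by
  refine closure_minimal (fun x hx => ?_) (isClosed_le h.smooth.continuous continuous_const) hz
  rw [h.level] at hx
  exact le_of_lt (show f x < 0 from hx)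

lemma apply_eq_zero (h : SmoothBody Ω f) {z : E} (hz : z ∈ frontier Ω) : f z = 0 := by
  refine le_antisymm (h.apply_nonpos hz.1) (not_lt.1 fun hlt => hz.2 ?_)
  rw [h.isOpen.interior_eq, h.level]
  exact hlt

/-- The boundary is transversal to the rays from the origin: by convexity `f` attains its maximum
over `closure Ω` at `z`, so `Df(z)` is at most `Df(z) z` on the neighbourhood `Ω` of `0`. -/
lemma fderiv_self_pos (h : SmoothBody Ω f) {z : E} (hz : z ∈ frontier Ω) :
    0 < fderiv ℝ f z z := by
  have hmax : IsLocalMaxOn f (closure Ω) z := by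
    filter_upwards [self_mem_nhdsWithin] with y hy
    rw [h.apply_eq_zero hz]
    exact h.apply_nonpos hy
  have hd : HasFDerivWithinAt f (fderiv ℝ f z) (closure Ω) z :=
    (h.smooth.differentiable (by simp) z).hasFDerivAt.hasFDerivWithinAt
  have key : ∀ v ∈ Ω, fderiv ℝ f z v ≤ fderiv ℝ f z z := by
    intro v hv
    have := hmax.hasFDerivWithinAt_nonpos hd (sub_mem_posTangentConeAt_of_segment_subset
      (h.conv.closure.segment_subset hz.1 (subset_closure hv)))
    rw [map_sub] at this
    linarith
  obtain ⟨w, hw⟩ : ∃ w, fderiv ℝ f z w ≠ 0 := by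
    by_contra! hcon
    exact h.grad z hz (ContinuousLinearMap.ext hcon)
  have hw' : ∃ w, 0 < fderiv ℝ f z w := by
    rcases lt_or_gt_of_ne hw with h1 | h1
    · exact ⟨-w, by rw [map_neg]; linarith⟩
    · exact ⟨w, h1⟩
  obtain ⟨w, hw⟩ := hw'
  have hev : ∀ᶠ s : ℝ in 𝓝[>] 0, s • w ∈ Ω := by
    have : Filter.Tendsto (fun s : ℝ => s • w) (𝓝 0) (𝓝 0) := by
      have : Continuous fun s : ℝ => s • w := by fun_prop
      simpa using this.tendsto 0
    exact (this.mono_left nhdsWithin_le_nhds) h.mem_nhds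
  obtain ⟨s, hs, hs0⟩ := (hev.and self_mem_nhdsWithin).exists
  have := key _ hs
  rw [map_smul, smul_eq_mul] at this
  exact lt_of_lt_of_le (mul_pos hs0 hw) this

lemma gauge_pos' (h : SmoothBody Ω f) {x : E} (hx : x ≠ 0) : 0 < gauge Ω x :=
  (gauge_pos (absorbent_nhds_zero h.mem_nhds) (NormedSpace.isVonNBounded_of_isBounded ℝ h.bdd)).2 hx

lemma mem_frontier (h : SmoothBody Ω f) {x : E} (hx : x ≠ 0) :
    (gauge Ω x)⁻¹ • x ∈ frontier Ω := by
  have hp := h.gauge_pos' hx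
  rw [← gauge_eq_one_iff_mem_frontier h.conv h.mem_nhds,
    gauge_smul_of_nonneg (inv_nonneg.2 hp.le), smul_eq_mul, inv_mul_cancel₀ hp.ne']

/-- The implicit function theorem applied to `f (u • x) = 0`, whose solution is `u = 1 / ρ(x)`. -/
lemma contDiffAt_inv_gauge [CompleteSpace E] (h : SmoothBody Ω f) {x : E} (hx : x ≠ 0) :
    ContDiffAt ℝ ∞ (fun y => (gauge Ω y)⁻¹) x := by
  set F : E × ℝ → ℝ := fun p => f (p.2 • p.1) with hF
  have hFs : ContDiff ℝ ∞ F := h.smooth.comp (contDiff_snd.smul contDiff_fst)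
  set a : E × ℝ := (x, (gauge Ω x)⁻¹) with ha
  have hzero : ∀ y : E, y ≠ 0 → F (y, (gauge Ω y)⁻¹) = 0 := fun y hy =>
    h.apply_eq_zero (h.mem_frontier hy)
  have hp := h.gauge_pos' hx
  have hder : (fderiv ℝ F a ∘L .inr ℝ E ℝ) 1 ≠ 0 := by
    have h1 : HasFDerivAt F ((fderiv ℝ f ((gauge Ω x)⁻¹ • x)).comp
        ((gauge Ω x)⁻¹ • ContinuousLinearMap.fst ℝ E ℝ +
          (ContinuousLinearMap.snd ℝ E ℝ).smulRight x)) a := by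
      have h2 := HasFDerivAt.fun_smul (hasFDerivAt_snd (𝕜 := ℝ) (p := a))
        (hasFDerivAt_fst (𝕜 := ℝ) (p := a))
      exact HasFDerivAt.comp a (h.smooth.differentiable (by simp) _).hasFDerivAt h2
    rw [h1.fderiv]
    have h3 := h.fderiv_self_pos (h.mem_frontier hx)
    rw [map_smul, smul_eq_mul] at h3
    have h4 := (pos_iff_pos_of_mul_pos h3).1 (inv_pos.2 hp)
    simpa using h4.ne'
  have hinv : (fderiv ℝ F a ∘L .inr ℝ E ℝ).IsInvertible := by
    refine ⟨ContinuousLinearEquiv.unitsEquivAut ℝ (Units.mk0 _ hder), ?_⟩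
    ext
    simp
  have hcd : ContDiffAt ℝ ∞ F a := hFs.contDiffAt
  have hψ := hcd.contDiffAt_implicitFunction (by simp) hinv
  refine hψ.congr_of_eventuallyEq ?_
  have hcont : ContinuousAt (fun y : E => (y, (gauge Ω y)⁻¹)) x :=
    continuousAt_id.prodMk
      (((continuous_gauge h.conv h.mem_nhds).continuousAt).inv₀ hp.ne')
  have hev := hcont.eventually (hcd.eventually_apply_eq_iff_implicitFunction (by simp) hinv)
  filter_upwards [hev, isOpen_ne.mem_nhds hx] with y hy hy0
  exact (hy.1 (by rw [hzero y hy0, ha, hzero x hx])).symm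

lemma contDiffAt_gauge_sq [CompleteSpace E] (h : SmoothBody Ω f) {x : E} (hx : x ≠ 0) :
    ContDiffAt ℝ ∞ (fun y => gauge Ω y ^ 2) x := by
  have := ((h.contDiffAt_inv_gauge hx).inv (inv_ne_zero (h.gauge_pos' hx).ne')).pow 2
  simpa using this

lemma hasDerivAt_clm_along {L : E → E →L[ℝ] ℝ} {L' : E →L[ℝ] E →L[ℝ] ℝ} {w W : ℝ → E} {p c : E}
    {t : ℝ} (hL : HasFDerivAt L L' (w t)) (hw : HasDerivAt w p t) (hW : HasDerivAt W c t) :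
    HasDerivAt (fun s => L (w s) (W s)) (L' p (W t) + L (w t) c) t := by
  have h1 : HasDerivAt (fun s => L (w s)) (L' p) t := hL.comp_hasDerivAt t hw
  exact h1.clm_apply hW

/-- Strong convexity of `ρ²` along lines. With `u = 1/ρ` along the line, differentiating
`f (u(s) • (x + s • v)) = 0` twice bounds `u''` in terms of `u'`, and `ρ² = u⁻²`. -/
lemma second_deriv_gauge_sq_pos [CompleteSpace E] (h : SmoothBody Ω f) {x v : E}
    (hv : v ≠ 0) (hx : x ≠ 0) :
    ∃ (Q₁ : ℝ → ℝ) (Q₂ : ℝ), 0 < Q₂ ∧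
      (∀ᶠ s in 𝓝 (0 : ℝ), HasDerivAt (fun s : ℝ => gauge Ω (x + s • v) ^ 2) (Q₁ s) s) ∧
      HasDerivAt Q₁ Q₂ 0 := by
  set l : ℝ → E := fun s => x + s • v with hl
  have hl0 : l 0 = x := by simp [hl]
  have hls : ContDiff ℝ ∞ l := by fun_prop
  have hld : ∀ s, HasDerivAt l v s := fun s => by
    have := ((hasDerivAt_id s).smul_const v).const_add x
    rwa [one_smul] at this
  set u : ℝ → ℝ := fun s => (gauge Ω (l s))⁻¹ with hu
  have hne : ∀ᶠ s in 𝓝 (0 : ℝ), l s ≠ 0 :=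
    hls.continuous.continuousAt.eventually_ne (by rwa [hl0])
  have hupos : ∀ s, l s ≠ 0 → 0 < u s := fun s hs => inv_pos.2 (h.gauge_pos' hs)
  have husm : ∀ s, l s ≠ 0 → ContDiffAt ℝ ∞ u s := fun s hs =>
    (h.contDiffAt_inv_gauge hs).comp s hls.contDiffAt
  have hu1 : ∀ s, l s ≠ 0 → HasDerivAt u (deriv u s) s := fun s hs =>
    ((husm s hs).differentiableAt (by simp)).hasDerivAt
  have hx0 : l 0 ≠ 0 := by rwa [hl0]
  have hu2 : HasDerivAt (deriv u) (deriv (deriv u) 0) 0 := by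
    have h1 : ContDiffAt ℝ 1 (fderiv ℝ u) 0 :=
      (husm 0 hx0).fderiv_right (WithTop.coe_le_coe.2 le_top)
    have h2 : DifferentiableAt ℝ (fun s => fderiv ℝ u s 1) 0 :=
      (h1.differentiableAt (by simp)).clm_apply (differentiableAt_const _)
    exact h2.hasDerivAt
  set w : ℝ → E := fun s => u s • l s with hw
  set W₁ : ℝ → E := fun s => u s • v + deriv u s • l s with hW₁
  have hwd : ∀ s, l s ≠ 0 → HasDerivAt w (W₁ s) s := fun s hs => (hu1 s hs).fun_smul (hld s)
  have hfw : ∀ s, l s ≠ 0 → f (w s) = 0 := fun s hs => h.apply_eq_zero (h.mem_frontier hs)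
  have hfd : ∀ y, HasFDerivAt f (fderiv ℝ f y) y := fun y =>
    (h.smooth.differentiable (by simp) y).hasFDerivAt
  have hfirst : ∀ᶠ s in 𝓝 (0 : ℝ), fderiv ℝ f (w s) (W₁ s) = 0 := by
    filter_upwards [hne.eventually_nhds] with s hs
    have h1 : HasDerivAt (f ∘ w) (fderiv ℝ f (w s) (W₁ s)) s :=
      (hfd (w s)).comp_hasDerivAt s (hwd s hs.self_of_nhds)
    have h2 : HasDerivAt (f ∘ w) 0 s := (hasDerivAt_const s (0 : ℝ)).congr_of_eventuallyEq
      (hs.mono fun t ht => hfw t ht)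
    exact h1.unique h2
  set p := W₁ 0 with hp
  set u₀ := u 0 with hu₀
  set u₁ := deriv u 0 with hu₁
  set u₂ := deriv (deriv u) 0 with hu₂
  set z := w 0 with hz
  have hzf : z ∈ frontier Ω := h.mem_frontier hx0
  have hu0 : 0 < u₀ := hupos 0 hx0
  have hpx : p = u₀ • v + u₁ • x := by simp only [hp, hW₁, hl0, hu₀, hu₁]
  have hzx : z = u₀ • x := by simp only [hz, hw, hl0, hu₀]
  have hW₂ : HasDerivAt W₁ (u₁ • v + (u₁ • v + u₂ • x)) 0 := by
    have h1 := ((hu1 0 hx0).smul_const v).add (hu2.fun_smul (hld 0))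
    rw [hl0] at h1
    exact h1
  have hff : HasFDerivAt (fderiv ℝ f) (fderiv ℝ (fderiv ℝ f) z) z :=
    ((h.smooth.fderiv_right (m := 1) (WithTop.coe_le_coe.2 le_top)).differentiable
      (by simp) z).hasFDerivAt
  have hsecond : fderiv ℝ (fderiv ℝ f) z p p + fderiv ℝ f z (u₁ • v + (u₁ • v + u₂ • x)) = 0 := by
    have h1 := hasDerivAt_clm_along hff (hwd 0 hx0) hW₂
    have h2 : HasDerivAt (fun s => fderiv ℝ f (w s) (W₁ s)) 0 0 :=
      (hasDerivAt_const (0 : ℝ) (0 : ℝ)).congr_of_eventuallyEq hfirst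
    exact h1.unique h2
  have hp0 : fderiv ℝ f z p = 0 := hfirst.self_of_nhds
  have hcurv : p ≠ 0 → 0 < fderiv ℝ (fderiv ℝ f) z p p := fun hpne => by
    have h1 := h.curv z hzf p hpne hp0
    have h2 : HasFDerivAt (fun y => fderiv ℝ f y p)
        ((ContinuousLinearMap.apply ℝ ℝ p).comp (fderiv ℝ (fderiv ℝ f) z)) z :=
      (ContinuousLinearMap.apply ℝ ℝ p).hasFDerivAt.comp z hff
    rw [h2.fderiv] at h1
    exact h1
  set a := fderiv ℝ f z x with ha
  set b := fderiv ℝ f z v with hb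
  have ha0 : 0 < a := by
    have h1 := h.fderiv_self_pos hzf
    rw [hzx, map_smul, smul_eq_mul, ← hzx] at h1
    exact (pos_iff_pos_of_mul_pos h1).1 hu0
  have hb' : u₀ * b + u₁ * a = 0 := by
    rw [hpx] at hp0
    simpa using hp0
  set T := fderiv ℝ (fderiv ℝ f) z p p with hT
  have hsec' : T + (u₁ * b + (u₁ * b + u₂ * a)) = 0 := by simpa using hsecond
  -- eliminating `b` between the two relations
  have hTu : u₀ * T = a * (2 * u₁ ^ 2 - u₀ * u₂) := by
    linear_combination u₀ * hsec' - 2 * u₁ * hb'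
  have hpos : 0 < 3 * u₁ ^ 2 - u₀ * u₂ := by
    by_cases hpne : p = 0
    · have hT0 : T = 0 := by rw [hT, hpne]; simp
      have h1 : 2 * u₁ ^ 2 - u₀ * u₂ = 0 := by
        rw [hT0, mul_zero] at hTu
        exact (mul_eq_zero.1 hTu.symm).resolve_left ha0.ne'
      have h2 : u₁ ≠ 0 := by
        intro h3
        rw [hpne, h3, zero_smul, add_zero] at hpx
        exact (smul_ne_zero hu0.ne' hv) hpx.symm
      have := pow_pos (abs_pos.2 h2) 2
      rw [sq_abs] at this
      linarith
    · have h1 : 0 < a * (2 * u₁ ^ 2 - u₀ * u₂) := hTu ▸ mul_pos hu0 (hcurv hpne)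
      have h2 := (pos_iff_pos_of_mul_pos h1).1 ha0
      nlinarith [sq_nonneg u₁]
  refine ⟨fun s => -2 * deriv u s / u s ^ 3,
    (-2 * u₂ * u₀ ^ 3 - -2 * u₁ * (3 * u₀ ^ 2 * u₁)) / (u₀ ^ 3) ^ 2, ?_, ?_, ?_⟩
  · refine div_pos ?_ (by positivity)
    have : -2 * u₂ * u₀ ^ 3 - -2 * u₁ * (3 * u₀ ^ 2 * u₁) =
      2 * u₀ ^ 2 * (3 * u₁ ^ 2 - u₀ * u₂) := by ring
    rw [this]
    positivity
  · filter_upwards [hne] with s hs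
    have h1 := ((hu1 s hs).fun_pow 2).fun_inv (pow_pos (hupos s hs) 2).ne'
    have h2 : (fun s => (u s ^ 2)⁻¹) = fun s : ℝ => gauge Ω (x + s • v) ^ 2 := by
      funext s
      simp [hu, hl]
    rw [h2] at h1
    refine h1.congr_deriv ?_
    have := (hupos s hs).ne'
    push_cast
    field_simp
  · have h1 := (hu2.const_mul (-2)).fun_div ((hu1 0 hx0).fun_pow 3) (pow_pos hu0 3).ne'
    exact h1.congr_deriv (by norm_num [hu₀, hu₁])

end SmoothBody

/-! ### Restriction to a three-dimensional subspace -/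

/-- The inclusion of `ℝ³` into `ℝ^d` as the span of the first three coordinate vectors. -/
def emb (d : ℕ) : (Fin 3 → ℝ) →L[ℝ] EuclideanSpace ℝ (Fin d) :=
  LinearMap.toContinuousLinearMap
    { toFun := fun x => WithLp.toLp 2 fun i => if h : i.1 < 3 then x ⟨i.1, h⟩ else 0
      map_add' := fun x y => by
        ext i
        by_cases h : i.1 < 3 <;> simp [h]
      map_smul' := fun t x => by
        ext i
        by_cases h : i.1 < 3 <;> simp [h] }

lemma emb_apply (d : ℕ) (x : Fin 3 → ℝ) (i : Fin d) :
    emb d x i = if h : i.1 < 3 then x ⟨i.1, h⟩ else 0 := rfl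

lemma norm_emb_sq {d : ℕ} (hd : 3 ≤ d) (x : Fin 3 → ℝ) :
    ‖emb d x‖ ^ 2 = x 0 ^ 2 + x 1 ^ 2 + x 2 ^ 2 := by
  obtain ⟨m, rfl⟩ := Nat.exists_eq_add_of_le hd
  rw [EuclideanSpace.norm_sq_eq, Fin.sum_univ_add, Fin.sum_univ_three]
  simp [emb_apply]

lemma norm_le_norm_emb {d : ℕ} (hd : 3 ≤ d) (x : Fin 3 → ℝ) : ‖x‖ ≤ ‖emb d x‖ := by
  refine (pi_norm_le_iff_of_nonneg (norm_nonneg _)).2 fun i => ?_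
  refine abs_le_of_sq_le_sq' ?_ (norm_nonneg _) |> fun h => abs_le.2 h
  rw [norm_emb_sq hd]
  fin_cases i <;> simp <;> nlinarith [sq_nonneg (x 0), sq_nonneg (x 1), sq_nonneg (x 2)]

lemma emb_ne_zero {d : ℕ} (hd : 3 ≤ d) {x : Fin 3 → ℝ} (hx : x ≠ 0) : emb d x ≠ 0 :=
  norm_pos_iff.1 ((norm_pos_iff.2 hx).trans_le (norm_le_norm_emb hd x))

lemma ne_zero_of_mem_halfSpace {x : Fin 3 → ℝ} (hx : x ∈ halfSpace) : x ≠ 0 := by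
  rintro rfl
  exact lt_irrefl (0 : ℝ) hx

/-- The restriction of `ρ²` to `ℝ³` is smooth on the half space `x₂ > 0`, homogeneous of degree
two, and has positive definite Hessian there. -/
lemma SmoothBody.restriction {d : ℕ} (hd : 3 ≤ d) {Ω : Set (EuclideanSpace ℝ (Fin d))}
    {f : EuclideanSpace ℝ (Fin d) → ℝ} (h : SmoothBody Ω f) :
    ∃ g A lam M, Data (fun x => gauge Ω (emb d x) ^ 2) g A lam M := by
  have hsm : ∀ x ∈ halfSpace, ContDiffAt ℝ ∞ (fun x => gauge Ω (emb d x) ^ 2) x := fun x hx =>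
    (h.contDiffAt_gauge_sq (emb_ne_zero hd (ne_zero_of_mem_halfSpace hx))).comp x
      (emb d).contDiff.contDiffAt
  refine exists_data _ (fun x hx => (hsm x hx).contDiffWithinAt) ?_ ?_
  · intro t ht x
    simp only [map_smul, gauge_smul_of_nonneg ht.le, smul_eq_mul, mul_pow]
  · intro x hx v hv
    obtain ⟨Q₁, Q₂, hQ, h1, h2⟩ := h.second_deriv_gauge_sq_pos (emb_ne_zero hd hv)
      (emb_ne_zero hd (ne_zero_of_mem_halfSpace hx))
    set q : (Fin 3 → ℝ) → ℝ := fun x => gauge Ω (emb d x) ^ 2 with hq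
    set l : ℝ → (Fin 3 → ℝ) := fun s => x + s • v with hl
    have hl0 : l 0 = x := by simp [hl]
    have hld : ∀ s, HasDerivAt l v s := fun s => by
      have := ((hasDerivAt_id s).smul_const v).const_add x
      rwa [one_smul] at this
    have hcl : Continuous l := by fun_prop
    have hmem : ∀ᶠ s in 𝓝 (0 : ℝ), l s ∈ halfSpace :=
      hcl.continuousAt.eventually (isOpen_halfSpace.mem_nhds (by rwa [hl0]))
    have heq : (fun s => fderiv ℝ q (l s) v) =ᶠ[𝓝 0] Q₁ := by
      filter_upwards [hmem, h1] with s hs h3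
      have h4 : HasDerivAt (q ∘ l) (fderiv ℝ q (l s) v) s :=
        ((hsm _ hs).differentiableAt (by simp)).hasFDerivAt.comp_hasDerivAt s (hld s)
      have h5 : (q ∘ l) = fun s : ℝ => gauge Ω (emb d x + s • emb d v) ^ 2 := by
        funext s
        simp [hq, hl]
      rw [h5] at h4
      exact h4.unique h3
    have h6 : HasFDerivAt (fderiv ℝ q) (fderiv ℝ (fderiv ℝ q) x) (l 0) := by
      rw [hl0]
      exact (((hsm x hx).fderiv_right (m := 1) (WithTop.coe_le_coe.2 le_top)).differentiableAt
        (by simp)).hasFDerivAt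
    have h7 := SmoothBody.hasDerivAt_clm_along h6 (hld 0) (hasDerivAt_const (0 : ℝ) v)
    have h8 := (h2.congr_of_eventuallyEq heq).unique h7
    rw [map_zero, add_zero] at h8
    rwa [← h8]

lemma finite_lattice_ball (d : ℕ) (R : ℝ) : {x : EuclideanSpace ℝ (Fin d) |
    (∃ k : Fin d → ℤ, ∀ i, x i = (k i : ℝ)) ∧ R / 2 ≤ ‖x‖ ∧ ‖x‖ ≤ R}.Finite := by
  refine ((Fintype.piFinset fun _ : Fin d => Finset.Icc (-⌈R⌉) ⌈R⌉).finite_toSet.image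
    fun k => WithLp.toLp 2 fun i => (k i : ℝ)).subset ?_
  rintro x ⟨⟨k, hk⟩, -, hx⟩
  refine ⟨k, ?_, ?_⟩
  · rw [Finset.mem_coe, Fintype.mem_piFinset]
    intro i
    have h1 : |(k i : ℝ)| ≤ ⌈R⌉ := by
      rw [← hk i]
      exact (PiLp.norm_apply_le x i).trans (hx.trans (Int.le_ceil R))
    rw [abs_le] at h1
    rw [Finset.mem_Icc]
    exact_mod_cast h1
  · ext i
    exact (hk i).symm

lemma emb_mem_shell {d : ℕ} (hd : 3 ≤ d) {R : ℝ} (hR : 0 < R) {k : Fin 3 → ℤ}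
    (hk : k ∈ lattice R) : (∃ k' : Fin d → ℤ, ∀ i, emb d (toR k) i = (k' i : ℝ)) ∧
      R / 2 ≤ ‖emb d (toR k)‖ ∧ ‖emb d (toR k)‖ ≤ R := by
  refine ⟨⟨fun i => if h : i.1 < 3 then k ⟨i.1, h⟩ else 0, fun i => ?_⟩, ?_⟩
  · rw [emb_apply]
    by_cases h : i.1 < 3 <;> simp [h, toR]
  · obtain ⟨⟨h1, h2⟩, ⟨h3, h4⟩, h5, h6⟩ := mem_K0.1 ((mem_lattice hR).1 hk)
    have hy : emb d (toR k) = R • emb d (R⁻¹ • toR k) := by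
      rw [← map_smul, smul_inv_smul₀ hR.ne']
    rw [hy, norm_smul, Real.norm_of_nonneg hR.le]
    have hn := norm_emb_sq hd (R⁻¹ • toR k)
    have hn0 := norm_nonneg (emb d (R⁻¹ • toR k))
    set y := R⁻¹ • toR k
    have hlo : 1 / 2 ≤ ‖emb d y‖ := by nlinarith
    have hhi : ‖emb d y‖ ≤ 1 := by nlinarith
    constructor <;> nlinarith

/-- The bound `c R²` holds in every dimension `d ≥ 3`: it suffices to count the values of `ρ` at
lattice points of a three-dimensional coordinate subspace. -/
theorem card_gauge_values_ge {d : ℕ} (hd : 3 ≤ d) {Ω : Set (EuclideanSpace ℝ (Fin d))}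
    {f : EuclideanSpace ℝ (Fin d) → ℝ} (hB : SmoothBody Ω f) :
    ∃ c C₀ : ℝ, 0 < c ∧ ∀ R : ℝ, C₀ ≤ R →
      ∀ S : Set ℝ, S = gauge Ω '' {x : EuclideanSpace ℝ (Fin d) |
          (∃ k : Fin d → ℤ, ∀ i, x i = (k i : ℝ)) ∧ R / 2 ≤ ‖x‖ ∧ ‖x‖ ≤ R} →
        c * R ^ 2 ≤ (Nat.card S : ℝ) := by
  obtain ⟨g, A, lam, M, hD⟩ := hB.restriction hd
  obtain ⟨K, hK⟩ := hB.conv.lipschitz_gauge hB.mem_nhds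
  obtain ⟨r, hr, hΩr⟩ := hB.bdd.subset_closedBall_lt 0 0
  obtain ⟨c, R₀, hc, hmain⟩ := card_values_ge (N := fun x => gauge Ω (emb d x))
    (Λ := K * ‖emb d‖) (c₀ := r⁻¹)
    (fun t ht x => by simp only [map_smul, gauge_smul_of_nonneg ht, smul_eq_mul])
    (fun x y => by
      have h1 := hK.dist_le_mul (emb d x) (emb d y)
      rw [Real.dist_eq, dist_eq_norm, ← map_sub] at h1
      refine h1.trans ?_
      rw [mul_assoc]
      exact mul_le_mul_of_nonneg_left ((emb d).le_opNorm _) K.2)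
    (fun x => by
      refine le_trans ?_ (le_gauge_of_subset_closedBall (absorbent_nhds_zero hB.mem_nhds) hr.le hΩr)
      rw [div_eq_inv_mul]
      exact mul_le_mul_of_nonneg_left (norm_le_norm_emb hd x) (inv_nonneg.2 hr.le))
    (inv_pos.2 hr) (by positivity) hD
  refine ⟨c, max R₀ 1, hc, fun R hR S hS => ?_⟩
  have hR0 : 0 < R := one_pos.trans_le ((le_max_right _ _).trans hR)
  refine (hmain R ((le_max_left _ _).trans hR)).trans ?_
  have hfin : S.Finite := hS ▸ (finite_lattice_ball d R).image _
  rw [Nat.card_coe_set_eq, Nat.cast_le, ← Set.ncard_coe_finset]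
  refine Set.ncard_le_ncard ?_ hfin
  intro t ht
  obtain ⟨k, hk, rfl⟩ := Finset.mem_image.1 (Finset.mem_coe.1 ht)
  rw [hS]
  exact ⟨_, emb_mem_shell hd hR0 hk, rfl⟩

end LatticeGauge

/-- Proposition A.1: let `d ≥ 3` and let `Ω ⊂ ℝ^d` be a bounded open
convex set containing the origin whose boundary is `C^∞` with nowhere vanishing Gaussian
curvature (formalized via a smooth defining function `f` with nonvanishing gradient on
`∂Ω` and positive definite second fundamental form, i.e. positive Hessian on tangent
directions).  With `ρ` the Minkowski functional of `Ω` and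
`𝔼_R = {k ∈ ℤ^d : R/2 ≤ |k| ≤ R}`, there are `c > 0` and `C₀` such that for all `R ≥ C₀`
the image `ρ(𝔼_R)` has at least `c R²` elements if `d ≥ 4`, and at least `c R²/log R`
elements if `d = 3`. -/
theorem statement16 (d : ℕ) (hd : 3 ≤ d) (Ω : Set (EuclideanSpace ℝ (Fin d)))
    (hconv : Convex ℝ Ω) (hopen : IsOpen Ω) (hbdd : Bornology.IsBounded Ω)
    (h0 : (0 : EuclideanSpace ℝ (Fin d)) ∈ Ω)
    (f : EuclideanSpace ℝ (Fin d) → ℝ) (hf : ContDiff ℝ (⊤ : ℕ∞) f)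
    (hlevel : Ω = {x | f x < 0})
    (hgrad : ∀ x ∈ frontier Ω, fderiv ℝ f x ≠ 0)
    (hcurv : ∀ x ∈ frontier Ω, ∀ v : EuclideanSpace ℝ (Fin d), v ≠ 0 →
      fderiv ℝ f x v = 0 → 0 < fderiv ℝ (fun y => fderiv ℝ f y v) x v) :
    ∃ c C₀ : ℝ, 0 < c ∧ ∀ R : ℝ, C₀ ≤ R →
      ∀ S : Set ℝ, S = gauge Ω '' {x : EuclideanSpace ℝ (Fin d) |
          (∃ k : Fin d → ℤ, ∀ i, x i = (k i : ℝ)) ∧ R / 2 ≤ ‖x‖ ∧ ‖x‖ ≤ R} →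
        (4 ≤ d → c * R ^ 2 ≤ (Nat.card S : ℝ)) ∧
        (d = 3 → c * R ^ 2 / Real.log R ≤ (Nat.card S : ℝ)) := by
  obtain ⟨c, C₀, hc, h⟩ := LatticeGauge.card_gauge_values_ge hd
    ⟨hconv, hopen, hbdd, h0, hf, hlevel, hgrad, hcurv⟩
  refine ⟨c, max C₀ (Real.exp 1), hc, fun R hR S hS => ?_⟩
  have key := h R ((le_max_left _ _).trans hR) S hS
  have hRe : Real.exp 1 ≤ R := (le_max_right _ _).trans hR
  have hlog : 1 ≤ Real.log R := (Real.le_log_iff_exp_le ((Real.exp_pos 1).trans_le hRe)).2 hRe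
  exact ⟨fun _ => key, fun _ => (div_le_self (by positivity) hlog).trans key⟩

end
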